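/- arXiv:2003.03949 — 2 statements merged into one kernel-verified Lean document; each statement's English description precedes it below -/
import Mathlib

section
/- Let n ≥ 3, N = 2^⌊n/2⌋, and let α₁,…,αₙ be complex N×N matrices satisfying the Clifford relations. Let ψ : B₁ → ℂᴺ be of class C^{1,α} on the open unit ball B₁ ⊂ ℝⁿ for some α ∈ (0,1), not identically zero, and solving the critical Dirac equation Dψ = |ψ|^{2/(n−1)}ψ pointwise on B₁. Then the singular nodal set Z_{≥2} := { x ∈ B₁ : ψ(x) = 0 and dψ(x) = 0 } has Hausdorff dimension at most n − 2. -/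
open MeasureTheory Metric Filter Matrix
open scoped ENNReal NNReal

noncomputable section

/-- The Clifford anticommutation relations `αⱼαₖ + αₖαⱼ = -2 δⱼₖ Id`. -/
def CliffordRel {n N : ℕ} (α : Fin n → Matrix (Fin N) (Fin N) ℂ) : Prop :=
  ∀ j k, α j * α k + α k * α j = (-2 : ℂ) • (if j = k then (1 : Matrix (Fin N) (Fin N) ℂ) else 0)

/-- The Euclidean Dirac operator `Dψ = Σⱼ αⱼ ∂ⱼψ`. -/
def diracOp {n N : ℕ} (α : Fin n → Matrix (Fin N) (Fin N) ℂ)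
    (ψ : EuclideanSpace ℝ (Fin n) → EuclideanSpace ℂ (Fin N))
    (x : EuclideanSpace ℝ (Fin n)) : EuclideanSpace ℂ (Fin N) :=
  ∑ j : Fin n, Matrix.toEuclideanLin (α j) (fderiv ℝ ψ x (EuclideanSpace.single j (1:ℝ)))


open scoped Topology ContDiff

/-- Euclidean space. -/
abbrev Eu (n : ℕ) := EuclideanSpace ℝ (Fin n)

/-- Standard basis vectors. -/
def bv {n : ℕ} (i : Fin n) : Eu n := EuclideanSpace.single i (1:ℝ)

lemma sum_bv {n : ℕ} (x : Eu n) : ∑ i, x i • bv i = x := by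
  ext k
  simp [bv, Pi.single_apply]

lemma contDiff_of_tsupport' {V W : Type*} [NormedAddCommGroup V] [NormedSpace ℝ V]
    [NormedAddCommGroup W] [NormedSpace ℝ W] {f : V → W} {m : WithTop ℕ∞}
    (h : ∀ x ∈ tsupport f, ContDiffAt ℝ m f x) : ContDiff ℝ m f := by
  rw [contDiff_iff_contDiffAt]
  intro x
  by_cases hx : x ∈ tsupport f
  · exact h x hx
  · have e : f =ᶠ[𝓝 x] fun _ => 0 := by
      filter_upwards [(isClosed_tsupport f).isOpen_compl.mem_nhds hx] with y hy
      exact image_eq_zero_of_notMem_tsupport hy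
    exact contDiffAt_const.congr_of_eventuallyEq e

lemma int_coord {n : ℕ} (q : Eu n → ℝ) (hq : ContDiff ℝ 1 q) (hs : HasCompactSupport q)
    (i j : Fin n) :
    ∫ x : Eu n, x i * fderiv ℝ q x (bv j) = - (if i = j then ∫ x, q x else 0) := by
  have hd : Continuous (fun x => fderiv ℝ q x (bv j)) :=
    (hq.continuous_fderiv (by norm_num)).clm_apply continuous_const
  have hds : HasCompactSupport (fun x => fderiv ℝ q x (bv j)) :=
    hs.fderiv_apply (𝕜 := ℝ) (bv j)
  have hf : ∀ x : Eu n, fderiv ℝ (fun y : Eu n => y i) x (bv j) = if i = j then 1 else 0 := by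
    intro x
    have : (fun y : Eu n => y i) = (EuclideanSpace.proj i : Eu n →L[ℝ] ℝ) := rfl
    rw [this, ContinuousLinearMap.fderiv]
    simp [bv]
  have hc : Continuous (fun y : Eu n => y i) := (EuclideanSpace.proj i : Eu n →L[ℝ] ℝ).continuous
  have hdf : Differentiable ℝ (fun y : Eu n => y i) :=
    (EuclideanSpace.proj i : Eu n →L[ℝ] ℝ).differentiable
  rw [integral_mul_fderiv_eq_neg_fderiv_mul_of_integrable]
  · simp_rw [hf]
    split_ifs <;> simp
  · simp_rw [hf]
    split_ifs
    · simpa using hq.continuous.integrable_of_hasCompactSupport hs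
    · simp
  · exact (hc.mul hd).integrable_of_hasCompactSupport hds.mul_left
  · exact (hc.mul hq.continuous).integrable_of_hasCompactSupport hs.mul_left
  · exact fun x _ => hdf x
  · exact fun x _ => hq.differentiable (by norm_num) x

/-- Integration identity for a linear vector field `B` with trace `τ`. -/
def FieldId {n : ℕ} (B : Eu n →L[ℝ] Eu n) (τ : ℝ) : Prop :=
  ∀ q : Eu n → ℝ, ContDiff ℝ 1 q → HasCompactSupport q →
    ∫ x, fderiv ℝ q x (B x) = - τ * ∫ x, q x

/-- Rotation fields. -/
def rotF {n : ℕ} (i j : Fin n) : Eu n →L[ℝ] Eu n :=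
  (EuclideanSpace.proj i : Eu n →L[ℝ] ℝ).smulRight (bv j)
   - (EuclideanSpace.proj j : Eu n →L[ℝ] ℝ).smulRight (bv i)

lemma rotF_apply {n : ℕ} (i j : Fin n) (x : Eu n) : rotF i j x = x i • bv j - x j • bv i := rfl

lemma inner_bv {n : ℕ} (x : Eu n) (i : Fin n) : inner ℝ x (bv i) = x i := by
  simp [bv, EuclideanSpace.inner_single_right]

lemma inner_rotF {n : ℕ} (i j : Fin n) (x : Eu n) : inner ℝ x (rotF i j x) = 0 := by
  rw [rotF_apply, inner_sub_right, inner_smul_right, inner_smul_right, inner_bv, inner_bv]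
  ring

lemma coord_integrable {n : ℕ} (q : Eu n → ℝ) (hq : ContDiff ℝ 1 q) (hs : HasCompactSupport q)
    (i j : Fin n) : Integrable (fun x : Eu n => x i * fderiv ℝ q x (bv j)) := by
  have hd : Continuous (fun x => fderiv ℝ q x (bv j)) :=
    (hq.continuous_fderiv (by norm_num)).clm_apply continuous_const
  have hds : HasCompactSupport (fun x => fderiv ℝ q x (bv j)) :=
    hs.fderiv_apply (𝕜 := ℝ) (bv j)
  have hc : Continuous (fun y : Eu n => y i) := (EuclideanSpace.proj i : Eu n →L[ℝ] ℝ).continuous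
  exact (hc.mul hd).integrable_of_hasCompactSupport hds.mul_left

lemma fieldId_rot {n : ℕ} (i j : Fin n) : FieldId (rotF i j) 0 := by
  intro q hq hs
  simp_rw [rotF_apply, map_sub, map_smul, smul_eq_mul]
  rw [integral_sub (coord_integrable q hq hs i j) (coord_integrable q hq hs j i),
    int_coord q hq hs, int_coord q hq hs]
  by_cases h : i = j
  · simp [h]
  · simp [h, Ne.symm h]

lemma fieldId_euler {n : ℕ} : FieldId (ContinuousLinearMap.id ℝ (Eu n)) n := by
  intro q hq hs
  have : ∀ x : Eu n, fderiv ℝ q x (ContinuousLinearMap.id ℝ (Eu n) x)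
      = ∑ i, x i * fderiv ℝ q x (bv i) := by
    intro x
    conv_lhs => rw [ContinuousLinearMap.id_apply, ← sum_bv x, map_sum]
    refine Finset.sum_congr rfl fun i _ => ?_
    rw [map_smul, smul_eq_mul, sum_bv]
  simp_rw [this]
  rw [integral_finsetSum _ (fun i _ => coord_integrable q hq hs i i)]
  simp_rw [int_coord q hq hs]
  simp

/-- The weight `|x|^{-n}`. -/
def aw {n : ℕ} (x : Eu n) : ℝ := (‖x‖ ^ 2) ^ (-(n:ℝ) / 2)

lemma aw_nonneg {n : ℕ} (x : Eu n) : 0 ≤ aw x := by unfold aw; positivity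

lemma hasFDerivAt_normsq_rpow {n : ℕ} (s : ℝ) {x : Eu n} (hx : x ≠ 0) :
    HasFDerivAt (fun y : Eu n => (‖y‖ ^ 2) ^ s)
      ((s * (‖x‖ ^ 2) ^ (s - 1)) • (2 • (innerSL ℝ x))) x := by
  have h := (hasStrictFDerivAt_norm_sq x).hasFDerivAt
  exact h.rpow_const (Or.inl (by positivity))

lemma contDiffAt_normsq_rpow {n : ℕ} (s : ℝ) {x : Eu n} (hx : x ≠ 0) {m : WithTop ℕ∞} :
    ContDiffAt ℝ m (fun y : Eu n => (‖y‖ ^ 2) ^ s) x :=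
  ContDiffAt.rpow_const_of_ne (contDiff_norm_sq ℝ).contDiffAt (by positivity)

lemma fderiv_normsq_rpow {n : ℕ} (s : ℝ) {x : Eu n} (hx : x ≠ 0) (v : Eu n) :
    fderiv ℝ (fun y : Eu n => (‖y‖ ^ 2) ^ s) x v = 2 * s * (‖x‖ ^ 2) ^ (s - 1) * inner ℝ x v := by
  rw [(hasFDerivAt_normsq_rpow s hx).fderiv]
  simp
  ring

lemma fderiv_aw {n : ℕ} {x : Eu n} (hx : x ≠ 0) (B : Eu n →L[ℝ] Eu n) (τ : ℝ)
    (hB : inner ℝ x (B x) = τ / n * ‖x‖ ^ 2) (hn : n ≠ 0) :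
    fderiv ℝ (aw : Eu n → ℝ) x (B x) = - τ * aw x := by
  unfold aw
  rw [fderiv_normsq_rpow _ hx, hB, Real.rpow_sub_one (by positivity)]
  field_simp

/-- Skew-adjointness. -/
lemma field_skew {n : ℕ} {F : Type*} [NormedAddCommGroup F] [NormedSpace ℝ F] (hn : n ≠ 0)
    (B : Eu n →L[ℝ] Eu n) (τ : ℝ) (hB : ∀ x, inner ℝ x (B x) = τ / n * ‖x‖ ^ 2)
    (hF : FieldId B τ) (b : F →L[ℝ] F →L[ℝ] ℝ) (p q : Eu n → F) (hp : ContDiff ℝ 1 p)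
    (hq : ContDiff ℝ 1 q) (hps : HasCompactSupport p) (h0 : 0 ∉ tsupport p) :
    ∫ x, aw x * b (fderiv ℝ p x (B x)) (q x) = - ∫ x, aw x * b (p x) (fderiv ℝ q x (B x)) := by
  have key : ∀ {k : Eu n → ℝ}, Continuous k → HasCompactSupport k → tsupport k ⊆ tsupport p →
      Continuous (fun x => aw x * k x) := by
    intro k hk hks hkp
    refine continuous_of_tsupport fun x hx => ?_
    have hx0 : x ≠ 0 := by
      rintro rfl
      exact h0 (hkp ((tsupport_mul_subset_right) hx))
    exact (contDiffAt_normsq_rpow (m := 1) _ hx0).continuousAt.mul hk.continuousAt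
  have hdp : Continuous (fun x => fderiv ℝ p x (B x)) :=
    (hp.continuous_fderiv (by norm_num)).clm_apply B.continuous
  have hdq : Continuous (fun x => fderiv ℝ q x (B x)) :=
    (hq.continuous_fderiv (by norm_num)).clm_apply B.continuous
  have hs1 : Function.support (fun x => b (fderiv ℝ p x (B x)) (q x)) ⊆ tsupport p := by
    intro x hx
    by_contra h
    apply hx
    have : fderiv ℝ p x = 0 := by
      by_contra h2
      exact h (support_fderiv_subset ℝ h2)
    simp [this]
  have hs2 : Function.support (fun x => b (p x) (fderiv ℝ q x (B x))) ⊆ tsupport p := by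
    intro x hx
    by_contra h
    apply hx
    simp [image_eq_zero_of_notMem_tsupport h]
  have hs3 : Function.support (fun x => b (p x) (q x)) ⊆ tsupport p := by
    intro x hx
    by_contra h
    apply hx
    simp [image_eq_zero_of_notMem_tsupport h]
  have i1 : Integrable (fun x => aw x * b (fderiv ℝ p x (B x)) (q x)) := by
    have hc : Continuous (fun x => b (fderiv ℝ p x (B x)) (q x)) :=
      (b.continuous.comp hdp).clm_apply hq.continuous
    have hcs : HasCompactSupport (fun x => b (fderiv ℝ p x (B x)) (q x)) :=
      HasCompactSupport.intro hps.isCompact fun x hx => by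
        by_contra h; exact hx (hs1 h)
    exact (key hc hcs (closure_minimal hs1 (isClosed_tsupport p))).integrable_of_hasCompactSupport
      hcs.mul_left
  have i2 : Integrable (fun x => aw x * b (p x) (fderiv ℝ q x (B x))) := by
    have hc : Continuous (fun x => b (p x) (fderiv ℝ q x (B x))) :=
      (b.continuous.comp hp.continuous).clm_apply hdq
    have hcs : HasCompactSupport (fun x => b (p x) (fderiv ℝ q x (B x))) :=
      HasCompactSupport.intro hps.isCompact fun x hx => by
        by_contra h; exact hx (hs2 h)
    exact (key hc hcs (closure_minimal hs2 (isClosed_tsupport p))).integrable_of_hasCompactSupport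
      hcs.mul_left
  have hb : ContDiff ℝ 1 (fun x => b (p x) (q x)) := (b.contDiff.comp hp).clm_apply hq
  have hcs : HasCompactSupport (fun x => b (p x) (q x)) :=
      HasCompactSupport.intro hps.isCompact fun x hx => by
        by_contra h; exact hx (hs3 h)
  have hne : ∀ x, x ∈ tsupport p → x ≠ 0 := by
    rintro x hx rfl; exact h0 hx
  have hQ : ContDiff ℝ 1 (fun x => aw x * b (p x) (q x)) := by
    refine contDiff_of_tsupport' fun x hx => ?_
    have hx0 : x ≠ 0 := hne x
      ((closure_minimal hs3 (isClosed_tsupport p)) ((tsupport_mul_subset_right) hx))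
    exact (contDiffAt_normsq_rpow _ hx0).mul hb.contDiffAt
  have hmain := hF _ hQ hcs.mul_left
  have hpt : ∀ x, fderiv ℝ (fun x => aw x * b (p x) (q x)) x (B x)
      = aw x * b (fderiv ℝ p x (B x)) (q x) + aw x * b (p x) (fderiv ℝ q x (B x))
        - τ * (aw x * b (p x) (q x)) := by
    intro x
    by_cases hx : x ∈ tsupport p
    · have hx0 := hne x hx
      have ha : DifferentiableAt ℝ (aw : Eu n → ℝ) x :=
        (contDiffAt_normsq_rpow (m := 1) _ hx0).differentiableAt (by norm_num)
      have hbp : HasFDerivAt (fun x => b (p x)) (b.comp (fderiv ℝ p x)) x :=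
        b.hasFDerivAt.comp x (hp.differentiable (by norm_num) x).hasFDerivAt
      have hbq := hbp.clm_apply (hq.differentiable (by norm_num) x).hasFDerivAt
      have hm : HasFDerivAt (fun x => aw x * b (p x) (q x)) _ x := ha.hasFDerivAt.mul hbq
      rw [hm.fderiv]
      simp [fderiv_aw hx0 B τ (hB x) hn]
      ring
    · have e : (fun x => aw x * b (p x) (q x)) =ᶠ[𝓝 x] fun _ => 0 := by
        filter_upwards [(isClosed_tsupport p).isOpen_compl.mem_nhds hx] with y hy
        simp [image_eq_zero_of_notMem_tsupport hy]
      have hp0 : fderiv ℝ p x = 0 := by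
        by_contra h2
        exact hx (support_fderiv_subset ℝ h2)
      rw [e.fderiv_eq]
      simp [hp0, image_eq_zero_of_notMem_tsupport hx]
  simp_rw [hpt] at hmain
  have i3 : Integrable (fun x => aw x * b (p x) (q x)) :=
    hQ.continuous.integrable_of_hasCompactSupport hcs.mul_left
  have i12 : Integrable (fun x => aw x * b (fderiv ℝ p x (B x)) (q x)
      + aw x * b (p x) (fderiv ℝ q x (B x))) := i1.add i2
  rw [integral_sub i12 (i3.const_mul τ), integral_add i1 i2, integral_const_mul] at hmain
  linarith

/-- Clifford relations for real-linear maps. -/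
def Cliff {n : ℕ} {F : Type*} [NormedAddCommGroup F] [NormedSpace ℝ F]
    (c : Fin n → F →L[ℝ] F) : Prop :=
  ∀ j k u, c j (c k u) + c k (c j u) = if j = k then (-2 : ℝ) • u else 0

/-- Clifford multiplication. -/
def cmap {n : ℕ} {F : Type*} [NormedAddCommGroup F] [NormedSpace ℝ F]
    (c : Fin n → F →L[ℝ] F) : Eu n →L[ℝ] (F →L[ℝ] F) :=
  ∑ j, (EuclideanSpace.proj j : Eu n →L[ℝ] ℝ).smulRight (c j)

/-- Dirac operator applied to a differential. -/
def Dlin {n : ℕ} {F : Type*} [NormedAddCommGroup F] [NormedSpace ℝ F]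
    (c : Fin n → F →L[ℝ] F) (L : Eu n →L[ℝ] F) : F := ∑ j, c j (L (bv j))

section
variable {n : ℕ} {F : Type*} [NormedAddCommGroup F] [NormedSpace ℝ F]

lemma cmap_apply (c : Fin n → F →L[ℝ] F) (x : Eu n) (u : F) :
    cmap c x u = ∑ j, x j • c j u := by
  simp [cmap]

lemma norm_sq_eq_sum (x : Eu n) : ‖x‖ ^ 2 = ∑ i, x i * x i := by
  rw [EuclideanSpace.norm_sq_eq]
  exact Finset.sum_congr rfl fun i _ => by rw [Real.norm_eq_abs, sq_abs, sq]

lemma cmap_sq {c : Fin n → F →L[ℝ] F} (hc : Cliff c) (x : Eu n) (u : F) :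
    cmap c x (cmap c x u) = -(‖x‖ ^ 2) • u := by
  have h1 : cmap c x (cmap c x u) = ∑ i, ∑ j, (x i * x j) • c i (c j u) := by
    rw [cmap_apply c x u, cmap_apply]
    refine Finset.sum_congr rfl fun i _ => ?_
    rw [map_sum, Finset.smul_sum]
    refine Finset.sum_congr rfl fun j _ => ?_
    rw [map_smul, smul_smul]
  have h2 : cmap c x (cmap c x u) = ∑ i, ∑ j, (x i * x j) • c j (c i u) := by
    rw [h1, Finset.sum_comm]
    refine Finset.sum_congr rfl fun i _ => Finset.sum_congr rfl fun j _ => ?_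
    rw [mul_comm]
  have h3 : (2:ℝ) • cmap c x (cmap c x u) = (2:ℝ) • (-(‖x‖ ^ 2) • u) := by
    rw [two_smul]
    nth_rewrite 1 [h1]
    rw [h2, ← Finset.sum_add_distrib]
    simp_rw [← Finset.sum_add_distrib, ← smul_add, hc _ _ u]
    rw [norm_sq_eq_sum]
    simp [smul_smul, Finset.sum_smul]
    rw [Finset.smul_sum]
    refine Finset.sum_congr rfl fun i _ => ?_
    rw [smul_smul, mul_comm]
  exact smul_right_injective F (two_ne_zero (α := ℝ)) h3

/-- `c(x) D = G - E`. -/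
lemma cmap_Dlin {c : Fin n → F →L[ℝ] F} (hc : Cliff c) (L : Eu n →L[ℝ] F) (x : Eu n) :
    cmap c x (Dlin c L)
      = (1/2:ℝ) • (∑ i, ∑ j, c i (c j (L (rotF i j x)))) - L x := by
  have h1 : cmap c x (Dlin c L) = ∑ i, ∑ j, x i • c i (c j (L (bv j))) := by
    rw [cmap_apply, Dlin]
    refine Finset.sum_congr rfl fun i _ => ?_
    rw [map_sum, Finset.smul_sum]
  have h2 : ∑ i, ∑ j, c i (c j (L (rotF i j x)))
      = ∑ i, ∑ j, x i • c i (c j (L (bv j))) - ∑ i, ∑ j, x i • c j (c i (L (bv j))) := by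
    have : ∑ i, ∑ j, x i • c j (c i (L (bv j))) = ∑ i, ∑ j, x j • c i (c j (L (bv i))) :=
      Finset.sum_comm
    rw [this, ← Finset.sum_sub_distrib]
    refine Finset.sum_congr rfl fun i _ => ?_
    rw [← Finset.sum_sub_distrib]
    refine Finset.sum_congr rfl fun j _ => ?_
    rw [rotF_apply]
    simp only [map_sub, map_smul]
  have h3 : ∑ i, ∑ j, x i • c i (c j (L (bv j))) + ∑ i, ∑ j, x i • c j (c i (L (bv j)))
      = (-2:ℝ) • L x := by
    rw [← Finset.sum_add_distrib]
    simp_rw [← Finset.sum_add_distrib, ← smul_add, hc _ _ _]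
    conv_rhs => rw [← sum_bv x, map_sum, Finset.smul_sum]
    simp [smul_smul, mul_comm]
  rw [h1, h2]
  have h4 : L x = (-1/2:ℝ) • ((-2:ℝ) • L x) := by rw [smul_smul]; norm_num
  rw [h4, ← h3]
  module

lemma fd_comm (A B : Eu n →L[ℝ] Eu n) (hAB : ∀ x, A (B x) = B (A x)) {v : Eu n → F}
    (hv : ContDiff ℝ 2 v) (x : Eu n) :
    fderiv ℝ (fun y => fderiv ℝ v y (A y)) x (B x)
      = fderiv ℝ (fun y => fderiv ℝ v y (B y)) x (A x) := by
  have hd : DifferentiableAt ℝ (fderiv ℝ v) x :=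
    (hv.fderiv_right (m := 1) (by norm_num)).differentiable (by norm_num) x
  have hA := hd.hasFDerivAt.clm_apply (A.hasFDerivAt (x := x))
  have hB := hd.hasFDerivAt.clm_apply (B.hasFDerivAt (x := x))
  have hs := (hv.contDiffAt (x := x)).isSymmSndFDerivAt (by simp)
  rw [hA.fderiv, hB.fderiv]
  simp [hAB x, hs.eq (B x) (A x)]

lemma contDiff_fd (A : Eu n →L[ℝ] Eu n) {v : Eu n → F} (hv : ContDiff ℝ 2 v) :
    ContDiff ℝ 1 (fun y => fderiv ℝ v y (A y)) :=
  (hv.fderiv_right (m := 1) (by norm_num)).clm_apply A.contDiff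

lemma T1 (hn : n ≠ 0) (b : F →L[ℝ] F →L[ℝ] ℝ) (hb : ∀ u v, b u v = b v u) (S : F →L[ℝ] F)
    (hS : ∀ u v, b u (S v) = - b (S u) v) (i j : Fin n) (v : Eu n → F) (hv : ContDiff ℝ 2 v)
    (hvs : HasCompactSupport v) (h0 : 0 ∉ tsupport v) :
    ∫ x, aw x * b (fderiv ℝ v x x) (S (fderiv ℝ v x (rotF i j x))) = 0 := by
  have hv1 : ContDiff ℝ 1 v := hv.of_le (by norm_num)
  have e1 := field_skew hn (ContinuousLinearMap.id ℝ (Eu n)) n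
    (fun x => by
      have : (n:ℝ) ≠ 0 := by exact_mod_cast hn
      field_simp; simp) fieldId_euler b v (fun x => S (fderiv ℝ v x (rotF i j x))) hv1
      (S.contDiff.comp (contDiff_fd _ hv)) hvs h0
  have e2 := field_skew hn (rotF i j) 0
    (fun x => by rw [inner_rotF]; simp) (fieldId_rot i j) b v
      (fun x => S (fderiv ℝ v x (ContinuousLinearMap.id ℝ (Eu n) x))) hv1
      (S.contDiff.comp (contDiff_fd _ hv)) hvs h0
  have hS' : ∀ (A : Eu n →L[ℝ] Eu n) (x w : Eu n),
      fderiv ℝ (fun y => S (fderiv ℝ v y (A y))) x w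
        = S (fderiv ℝ (fun y => fderiv ℝ v y (A y)) x w) := by
    intro A x w
    have := (S.hasFDerivAt (x := fderiv ℝ v x (A x))).comp x
      ((contDiff_fd A hv).differentiable (by norm_num) x).hasFDerivAt
    have h2 : HasFDerivAt (fun y => S (fderiv ℝ v y (A y))) _ x := this
    rw [h2.fderiv]; rfl
  simp_rw [hS'] at e1 e2
  have e3 : ∀ x, fderiv ℝ (fun y => fderiv ℝ v y (rotF i j y)) x (ContinuousLinearMap.id ℝ (Eu n) x)
      = fderiv ℝ (fun y => fderiv ℝ v y (ContinuousLinearMap.id ℝ (Eu n) y)) x (rotF i j x) :=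
    fun x => fd_comm (rotF i j) (ContinuousLinearMap.id ℝ (Eu n)) (fun x => rfl) hv x
  simp_rw [e3] at e1
  have e4 : ∀ x, aw x * b (fderiv ℝ v x (rotF i j x)) (S (fderiv ℝ v x (ContinuousLinearMap.id ℝ (Eu n) x)))
    = -(aw x * b (fderiv ℝ v x x) (S (fderiv ℝ v x (rotF i j x)))) := by
    intro x
    rw [hS, hb]
    simp
  simp_rw [e4] at e2
  rw [integral_neg] at e2
  simp only [ContinuousLinearMap.id_apply] at e1 e2
  linarith

lemma integrable_weight {G : Type*} [NormedAddCommGroup G] {v : Eu n → G}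
    (hvs : HasCompactSupport v) (h0 : 0 ∉ tsupport v)
    (w : Eu n → ℝ) (hw : ∀ x ≠ 0, ContinuousAt w x) (g : Eu n → ℝ) (hg : Continuous g)
    (hs : ∀ x ∉ tsupport v, g x = 0) : Integrable (fun x => w x * g x) := by
  have hgs : Function.support g ⊆ tsupport v := fun x hx => by
    by_contra h; exact hx (hs x h)
  have hgt : tsupport g ⊆ tsupport v := closure_minimal hgs (isClosed_tsupport v)
  have hgc : HasCompactSupport g := HasCompactSupport.intro hvs.isCompact hs
  refine Continuous.integrable_of_hasCompactSupport ?_ hgc.mul_left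
  refine continuous_of_tsupport fun x hx => ?_
  have hx0 : x ≠ 0 := by
    rintro rfl
    exact h0 (hgt ((tsupport_mul_subset_right) hx))
  exact (hw x hx0).mul hg.continuousAt

lemma aw_contAt {x : Eu n} (hx : x ≠ 0) : ContinuousAt (aw : Eu n → ℝ) x :=
  (contDiffAt_normsq_rpow (m := 1) _ hx).continuousAt

/-- Carleman weight. -/
def Ww (τ l : ℝ) (x : Eu n) : ℝ := (‖x‖ ^ 2) ^ (-τ / 2) * Real.exp (l / 2 * ‖x‖ ^ 2)

lemma Ww_contDiffAt (τ l : ℝ) {x : Eu n} (hx : x ≠ 0) {m : WithTop ℕ∞} :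
    ContDiffAt ℝ m (Ww τ l : Eu n → ℝ) x :=
  (contDiffAt_normsq_rpow _ hx).mul
    (Real.contDiff_exp.contDiffAt.comp x (contDiffAt_const.mul (contDiff_norm_sq ℝ).contDiffAt))

lemma fderiv_Ww (τ l : ℝ) {x : Eu n} (hx : x ≠ 0) (w : Eu n) :
    fderiv ℝ (Ww τ l : Eu n → ℝ) x w
      = (-τ / ‖x‖ ^ 2 + l) * Ww τ l x * inner ℝ x w := by
  have h1 := hasFDerivAt_normsq_rpow (-τ/2) hx
  have h2 := (((hasStrictFDerivAt_norm_sq x).hasFDerivAt).const_mul (l/2)).exp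
  have h3 : HasFDerivAt (Ww τ l : Eu n → ℝ) _ x := h1.mul h2
  rw [h3.fderiv]
  have : ‖x‖ ^ 2 ≠ 0 := by positivity
  simp [Ww, Real.rpow_sub_one this]
  field_simp
  ring

end

/-- An invariant positive form. -/
structure GoodForm {n : ℕ} {F : Type*} [NormedAddCommGroup F] [NormedSpace ℝ F]
    (c : Fin n → F →L[ℝ] F) (b : F →L[ℝ] F →L[ℝ] ℝ) : Prop where
  symm : ∀ u v, b u v = b v u
  skew : ∀ i u v, b (c i u) v = - b u (c i v)
  pos : ∀ u, ‖u‖ ^ 2 ≤ b u u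

section
variable {n : ℕ} {F : Type*} [NormedAddCommGroup F] [NormedSpace ℝ F]

lemma GoodForm.nonneg {c : Fin n → F →L[ℝ] F} {b : F →L[ℝ] F →L[ℝ] ℝ} (h : GoodForm c b) (u : F) :
    0 ≤ b u u := le_trans (by positivity) (h.pos u)

lemma GoodForm.cmap_skew {c : Fin n → F →L[ℝ] F} {b : F →L[ℝ] F →L[ℝ] ℝ} (h : GoodForm c b)
    (x : Eu n) (u v : F) : b (cmap c x u) v = - b u (cmap c x v) := by
  rw [cmap_apply, cmap_apply]
  simp [h.skew]

lemma GoodForm.cmap_norm {c : Fin n → F →L[ℝ] F} {b : F →L[ℝ] F →L[ℝ] ℝ} (h : GoodForm c b)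
    (hc : Cliff c) (x : Eu n) (u : F) : b (cmap c x u) (cmap c x u) = ‖x‖ ^ 2 * b u u := by
  rw [h.cmap_skew, cmap_sq hc]
  simp

lemma T1' (hn : n ≠ 0) {c : Fin n → F →L[ℝ] F} (hc : Cliff c)
    {b : F →L[ℝ] F →L[ℝ] ℝ} (hb : GoodForm c b) (i j : Fin n) (v : Eu n → F) (hv : ContDiff ℝ 2 v)
    (hvs : HasCompactSupport v) (h0 : 0 ∉ tsupport v) :
    ∫ x, aw x * b (fderiv ℝ v x x) (c i (c j (fderiv ℝ v x (rotF i j x)))) = 0 := by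
  by_cases hij : i = j
  · subst hij
    have : ∀ x : Eu n, rotF i i x = 0 := fun x => by simp [rotF_apply]
    simp [this]
  · refine T1 hn b hb.symm ((c i).comp (c j)) (fun u v => ?_) i j v hv hvs h0
    have h1 := hc i j u
    rw [if_neg hij] at h1
    have h2 : c j (c i u) = - c i (c j u) := by
      rw [eq_neg_iff_add_eq_zero, add_comm]; exact h1
    have h3 : b u (c i (c j v)) = b (c j (c i u)) v := by
      rw [hb.skew, hb.skew, neg_neg]
    simp only [ContinuousLinearMap.comp_apply]
    rw [h3, h2]; simp

/-- The logarithmic derivative of the Carleman weight. -/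
def kap (τ l : ℝ) (x : Eu n) : ℝ := -τ + l * ‖x‖ ^ 2

lemma T2 (hn : n ≠ 0) (τ l : ℝ) (b : F →L[ℝ] F →L[ℝ] ℝ) (hb : ∀ u v, b u v = b v u)
    (v : Eu n → F) (hv : ContDiff ℝ 1 v)
    (hvs : HasCompactSupport v) (h0 : 0 ∉ tsupport v) :
    2 * ∫ x, aw x * b (fderiv ℝ v x x) (kap τ l x • v x)
      = - ∫ x, aw x * ((2 * l * ‖x‖ ^ 2) * b (v x) (v x)) := by
  have hk : ContDiff ℝ 1 (kap τ l : Eu n → ℝ) :=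
    contDiff_const.add (contDiff_const.mul (contDiff_norm_sq ℝ))
  have e1 := field_skew hn (ContinuousLinearMap.id ℝ (Eu n)) n
    (fun x => by
      have : (n:ℝ) ≠ 0 := by exact_mod_cast hn
      field_simp; simp) fieldId_euler b v (fun x => kap τ l x • v x) hv
      (hk.smul hv) hvs h0
  have e2 : ∀ x, aw x * b (v x) (fderiv ℝ (fun x => kap τ l x • v x) x x)
      = aw x * b (fderiv ℝ v x x) (kap τ l x • v x)
        + aw x * ((2 * l * ‖x‖ ^ 2) * b (v x) (v x)) := by
    intro x
    have h1 : HasFDerivAt (kap τ l : Eu n → ℝ) _ x :=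
      (((hasStrictFDerivAt_norm_sq x).hasFDerivAt).const_mul l).const_add (-τ)
    have h2 : HasFDerivAt (fun x => kap τ l x • v x) _ x :=
      h1.smul (hv.differentiable (by norm_num) x).hasFDerivAt
    rw [h2.fderiv]
    simp [hb (v x) (fderiv ℝ v x x)]
    ring
  simp only [ContinuousLinearMap.id_apply] at e1
  simp_rw [e2] at e1
  have hdc : Continuous (fun x => fderiv ℝ v x x) :=
    (hv.continuous_fderiv (by norm_num)).clm_apply continuous_id
  rw [integral_add] at e1
  · linarith
  · refine integrable_weight hvs h0 _ (fun x hx => aw_contAt hx) _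
      ((b.continuous.comp hdc).clm_apply (hk.continuous.smul hv.continuous)) fun x hx => ?_
    simp [image_eq_zero_of_notMem_tsupport hx]
  · refine integrable_weight hvs h0 _ (fun x hx => aw_contAt hx) _
      (Continuous.mul (by fun_prop)
        ((b.continuous.comp hv.continuous).clm_apply hv.continuous)) fun x hx => ?_
    simp [image_eq_zero_of_notMem_tsupport hx]

lemma carleman_smooth (hn : n ≠ 0) {c : Fin n → F →L[ℝ] F} (hc : Cliff c)
    {b : F →L[ℝ] F →L[ℝ] ℝ} (hb : GoodForm c b) (τ l : ℝ) (u : Eu n → F) (hu : ContDiff ℝ 2 u)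
    (hus : HasCompactSupport u) (h0 : 0 ∉ tsupport u) :
    2 * l * ∫ x, (aw x * Ww τ l x ^ 2 * ‖x‖ ^ 2) * b (u x) (u x)
      ≤ ∫ x, (aw x * Ww τ l x ^ 2 * ‖x‖ ^ 2) * b (Dlin c (fderiv ℝ u x)) (Dlin c (fderiv ℝ u x)) := by
  have hne : ∀ x, x ∈ tsupport u → x ≠ 0 := by
    rintro x hx rfl; exact h0 hx
  set v : Eu n → F := fun x => Ww τ l x • u x with hvdef
  have hvt : tsupport v ⊆ tsupport u := tsupport_smul_subset_right _ _
  have hv : ContDiff ℝ 2 v := contDiff_of_tsupport' fun x hx =>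
    (Ww_contDiffAt τ l (hne x (hvt hx))).smul hu.contDiffAt
  have hvs : HasCompactSupport v := hus.smul_left
  have h0v : 0 ∉ tsupport v := fun h => h0 (hvt h)
  have hv1 : ContDiff ℝ 1 v := hv.of_le (by norm_num)
  have t2 := T2 hn τ l b hb.symm v hv1 hvs h0v
  have hwc : ∀ x : Eu n, x ≠ 0 → ContinuousAt (fun x => aw x * Ww τ l x ^ 2 * ‖x‖ ^ 2) x := by
    intro x hx
    have h1 := (Ww_contDiffAt (m := 1) τ l hx).continuousAt
    exact ((aw_contAt hx).mul (h1.pow 2)).mul (by fun_prop)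
  have hDc : Continuous (fun x => Dlin c (fderiv ℝ u x)) := by
    unfold Dlin
    refine continuous_finset_sum _ fun j _ => (c j).continuous.comp ?_
    exact (hu.continuous_fderiv (by norm_num)).clm_apply continuous_const
  have hfu0 : ∀ x ∉ tsupport u, fderiv ℝ u x = 0 := fun x hx => by
    by_contra h2
    exact hx (support_fderiv_subset ℝ h2)
  have hfv0 : ∀ x ∉ tsupport v, fderiv ℝ v x = 0 := fun x hx => by
    by_contra h2
    exact hx (support_fderiv_subset ℝ h2)
  have hdc : Continuous (fun x => fderiv ℝ v x x) :=
    (hv.continuous_fderiv (by norm_num)).clm_apply continuous_id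
  have hkc : Continuous (kap τ l : Eu n → ℝ) := by unfold kap; fun_prop
  have iR : Integrable (fun x => (aw x * Ww τ l x ^ 2 * ‖x‖ ^ 2) *
      b (Dlin c (fderiv ℝ u x)) (Dlin c (fderiv ℝ u x))) := by
    refine integrable_weight hus h0 _ hwc _ ((b.continuous.comp hDc).clm_apply hDc) fun x hx => ?_
    simp [hfu0 x hx, Dlin]
  have i1 : Integrable (fun x => aw x * b (fderiv ℝ v x x) (kap τ l x • v x)) := by
    refine integrable_weight hvs h0v _ (fun x hx => aw_contAt hx) _
      ((b.continuous.comp hdc).clm_apply (hkc.smul hv.continuous)) fun x hx => ?_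
    simp [image_eq_zero_of_notMem_tsupport hx]
  have i2 : ∀ i j, Integrable (fun x => aw x * b (fderiv ℝ v x x)
      (c i (c j (fderiv ℝ v x (rotF i j x))))) := by
    intro i j
    refine integrable_weight hvs h0v _ (fun x hx => aw_contAt hx) _
      ((b.continuous.comp hdc).clm_apply ((c i).continuous.comp ((c j).continuous.comp
        ((hv.continuous_fderiv (by norm_num)).clm_apply (rotF i j).continuous)))) fun x hx => ?_
    simp [hfv0 x hx]
  have hpt : ∀ x, -2 * (aw x * b (fderiv ℝ v x x) (kap τ l x • v x))
      - ∑ i, ∑ j, aw x * b (fderiv ℝ v x x) (c i (c j (fderiv ℝ v x (rotF i j x))))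
      ≤ (aw x * Ww τ l x ^ 2 * ‖x‖ ^ 2) *
      b (Dlin c (fderiv ℝ u x)) (Dlin c (fderiv ℝ u x)) := by
    intro x
    by_cases hx : x ∈ tsupport u
    · have hx0 := hne x hx
      have hnx : ‖x‖ ^ 2 ≠ 0 := by positivity
      have hfv : ∀ w, fderiv ℝ v x w = Ww τ l x • fderiv ℝ u x w
          + ((-τ / ‖x‖ ^ 2 + l) * Ww τ l x * inner ℝ x w) • u x := by
        intro w
        have h1 : HasFDerivAt v _ x :=
          ((Ww_contDiffAt (m := 1) τ l hx0).differentiableAt (by norm_num)).hasFDerivAt.smul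
            (hu.differentiable (by norm_num) x).hasFDerivAt
        rw [h1.fderiv]
        simp [fderiv_Ww τ l hx0]
      have hE : fderiv ℝ v x x = Ww τ l x • fderiv ℝ u x x + kap τ l x • v x := by
        rw [hfv, hvdef, real_inner_self_eq_norm_sq, smul_smul]
        congr 2
        unfold kap
        field_simp
      have hJ : ∀ i j, fderiv ℝ v x (rotF i j x) = Ww τ l x • fderiv ℝ u x (rotF i j x) := by
        intro i j
        rw [hfv, inner_rotF]; simp
      set p := fderiv ℝ v x x
      set G := (1/2:ℝ) • ∑ i, ∑ j, c i (c j (fderiv ℝ v x (rotF i j x))) with hG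
      have hcD : Ww τ l x • cmap c x (Dlin c (fderiv ℝ u x)) = (kap τ l x • v x + G) - p := by
        rw [cmap_Dlin hc, hG, hE]
        simp_rw [hJ, map_smul, ← Finset.smul_sum]
        module
      have hq : (Ww τ l x ^ 2 * ‖x‖ ^ 2) * b (Dlin c (fderiv ℝ u x)) (Dlin c (fderiv ℝ u x))
          = b ((kap τ l x • v x + G) - p) ((kap τ l x • v x + G) - p) := by
        rw [← hcD]
        simp only [map_smul, ContinuousLinearMap.smul_apply, smul_eq_mul]
        rw [hb.cmap_norm hc]
        ring
      have hexp : -2 * b p (kap τ l x • v x) - 2 * b p G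
          ≤ b ((kap τ l x • v x + G) - p) ((kap τ l x • v x + G) - p) := by
        have n1 := hb.nonneg (kap τ l x • v x + G)
        have n2 := hb.nonneg p
        have e : b ((kap τ l x • v x + G) - p) ((kap τ l x • v x + G) - p)
          = b (kap τ l x • v x + G) (kap τ l x • v x + G) + b p p
            - 2 * (b p (kap τ l x • v x) + b p G) := by
          have s1 := hb.symm (kap τ l x • v x) p
          have s2 := hb.symm G p
          simp only [map_sub, map_add, ContinuousLinearMap.sub_apply, ContinuousLinearMap.add_apply]
          linarith
        linarith
      have hsum : ∑ i, ∑ j, aw x * b p (c i (c j (fderiv ℝ v x (rotF i j x)))) = aw x * (2 * b p G) := by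
        rw [hG]
        simp [Finset.mul_sum]
      rw [hsum, mul_assoc (aw x), mul_assoc (aw x), hq]
      have := mul_le_mul_of_nonneg_left hexp (aw_nonneg x)
      linarith
    · have hxv : x ∉ tsupport v := fun h => hx (hvt h)
      simp [hfu0 x hx, hfv0 x hxv, Dlin]
  have hIntg := integral_mono (μ := volume)
    ((i1.const_mul (-2)).sub (integrable_finsetSum _ fun i _ => integrable_finsetSum _ fun j _ => i2 i j)) iR hpt
  have hL : ∫ x, (-2 * (aw x * b (fderiv ℝ v x x) (kap τ l x • v x))
      - ∑ i, ∑ j, aw x * b (fderiv ℝ v x x) (c i (c j (fderiv ℝ v x (rotF i j x)))))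
      = -2 * ∫ x, aw x * b (fderiv ℝ v x x) (kap τ l x • v x) := by
    rw [integral_sub (i1.const_mul (-2))
      (integrable_finsetSum _ fun i _ => integrable_finsetSum _ fun j _ => i2 i j),
      integral_const_mul, integral_finsetSum _ fun i _ => integrable_finsetSum _ fun j _ => i2 i j]
    simp_rw [integral_finsetSum _ fun j _ => i2 _ j, T1' hn hc hb _ _ v hv hvs h0v]
    simp
  have hfin : 2 * l * ∫ x, (aw x * Ww τ l x ^ 2 * ‖x‖ ^ 2) * b (u x) (u x)
      = ∫ x, aw x * ((2 * l * ‖x‖ ^ 2) * b (v x) (v x)) := by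
    rw [← integral_const_mul]
    refine integral_congr_ae (Eventually.of_forall fun x => ?_)
    simp [hvdef]
    ring
  rw [hfin]
  calc _ = -2 * ∫ x, aw x * b (fderiv ℝ v x x) (kap τ l x • v x) := by linarith
    _ ≤ _ := by rw [← hL]; exact hIntg
end

section
variable {n : ℕ} {F : Type*} [NormedAddCommGroup F] [NormedSpace ℝ F]
open scoped Convolution

lemma mollify [CompleteSpace F] (u : Eu n → F) (hu : ContDiff ℝ 1 u) (hus : HasCompactSupport u)
    (δ : ℝ) (hδ : 0 < δ) :
    ∃ v : ℕ → Eu n → F, (∀ k, ContDiff ℝ 2 (v k)) ∧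
      (∀ k x, x ∉ cthickening δ (tsupport u) → v k x = 0) ∧
      (∃ C, ∀ k x, ‖v k x‖ ≤ C ∧ ‖fderiv ℝ (v k) x‖ ≤ C) ∧
      ∀ x, Tendsto (fun k => v k x) atTop (𝓝 (u x)) ∧
        Tendsto (fun k => fderiv ℝ (v k) x) atTop (𝓝 (fderiv ℝ u x)) := by
  let φ : ℕ → ContDiffBump (0 : Eu n) := fun k =>
    ⟨δ / 2 / (k + 1 : ℝ) / 2, δ / 2 / (k + 1 : ℝ), by positivity, half_lt_self (by positivity)⟩
  have hφo : ∀ k, (φ k).rOut ≤ δ / 2 := fun k => by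
    show δ / 2 / (k + 1 : ℝ) ≤ δ / 2
    exact div_le_self (by positivity) (by linarith [(Nat.cast_nonneg k : (0:ℝ) ≤ k)])
  have hφt : Tendsto (fun k => (φ k).rOut) atTop (𝓝 0) := by
    show Tendsto (fun k : ℕ => δ / 2 / (k + 1 : ℝ)) atTop (𝓝 0)
    have := (tendsto_one_div_add_atTop_nhds_zero_nat (𝕜 := ℝ)).const_mul (δ/2)
    simpa [div_eq_mul_inv] using this
  have hfc : Continuous (fderiv ℝ u) := hu.continuous_fderiv (by norm_num)
  have hfs : HasCompactSupport (fderiv ℝ u) := hus.fderiv ℝ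
  have hd : ∀ k x, HasFDerivAt ((φ k).normed volume ⋆[ContinuousLinearMap.lsmul ℝ ℝ, volume] u)
      (((φ k).normed volume ⋆[ContinuousLinearMap.lsmul ℝ ℝ, volume] (fderiv ℝ u)) x) x := by
    intro k x
    have := hus.hasFDerivAt_convolution_right (μ := volume) (ContinuousLinearMap.lsmul ℝ ℝ)
      (((φ k).continuous_normed (μ := volume)).locallyIntegrable) hu x
    exact this
  obtain ⟨C1, hC1⟩ := hus.exists_bound_of_continuous hu.continuous
  obtain ⟨C2, hC2⟩ := hfs.exists_bound_of_continuous hfc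
  have key : ∀ {G : Type _} [NormedAddCommGroup G] [NormedSpace ℝ G] [CompleteSpace G] (g : Eu n → G)
      (hg : Continuous g) (C : ℝ) (hC : ∀ x, ‖g x‖ ≤ C) (k : ℕ) (x : Eu n),
      ‖((φ k).normed volume ⋆[ContinuousLinearMap.lsmul ℝ ℝ, volume] g) x‖ ≤ 3 * C := by
    intro G _ _ _ g hg C hC k x
    have := (φ k).dist_normed_convolution_le (μ := volume) (x₀ := x) (ε := 2 * C)
      hg.aestronglyMeasurable (fun y _ => by
        rw [dist_eq_norm]; linarith [norm_sub_le (g y) (g x), hC x, hC y])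
    rw [dist_eq_norm] at this
    have h2 := norm_le_norm_add_norm_sub' (((φ k).normed volume ⋆[ContinuousLinearMap.lsmul ℝ ℝ, volume] g) x) (g x)
    linarith [hC x]
  refine ⟨fun k => (φ k).normed volume ⋆[ContinuousLinearMap.lsmul ℝ ℝ, volume] u, ?_, ?_, ?_, ?_⟩
  · intro k
    exact (φ k).hasCompactSupport_normed.contDiff_convolution_left (n := 2) _
      (φ k).contDiff_normed (hu.continuous.locallyIntegrable)
  · intro k x hx
    by_contra h
    apply hx
    obtain ⟨a, ha, y, hy, rfl⟩ := Set.mem_add.1 (support_convolution_subset _ h)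
    rw [(φ k).support_normed_eq] at ha
    refine mem_cthickening_of_dist_le _ y δ _ (subset_tsupport _ hy) ?_
    rw [mem_ball_zero_iff] at ha
    rw [dist_eq_norm]; simp
    linarith [hφo k]
  · refine ⟨max (3 * C1) (3 * C2), fun k x => ⟨(key u hu.continuous C1 hC1 k x).trans (le_max_left _ _), ?_⟩⟩
    rw [(hd k x).fderiv]
    exact (key _ hfc C2 hC2 k x).trans (le_max_right _ _)
  · intro x
    refine ⟨ContDiffBump.convolution_tendsto_right_of_continuous hφt hu.continuous x, ?_⟩
    simp_rw [fun k => (hd k x).fderiv]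
    exact ContDiffBump.convolution_tendsto_right_of_continuous hφt hfc x

lemma Dlin_norm_le (c : Fin n → F →L[ℝ] F) (L : Eu n →L[ℝ] F) :
    ‖Dlin c L‖ ≤ (∑ j, ‖c j‖) * ‖L‖ := by
  unfold Dlin
  rw [Finset.sum_mul]
  refine norm_sum_le_of_le _ fun j _ => ?_
  refine (ContinuousLinearMap.le_opNorm _ _).trans ?_
  gcongr
  refine (ContinuousLinearMap.le_opNorm _ _).trans ?_
  simp [bv]

lemma Dlin_cont (c : Fin n → F →L[ℝ] F) : Continuous (Dlin c : (Eu n →L[ℝ] F) → F) := by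
  unfold Dlin
  fun_prop

lemma carleman [CompleteSpace F] (hn : n ≠ 0) {c : Fin n → F →L[ℝ] F} (hc : Cliff c)
    {b : F →L[ℝ] F →L[ℝ] ℝ} (hb : GoodForm c b) (τ l : ℝ) (u : Eu n → F) (hu : ContDiff ℝ 1 u)
    (hus : HasCompactSupport u) (h0 : 0 ∉ tsupport u) :
    2 * l * ∫ x, (aw x * Ww τ l x ^ 2 * ‖x‖ ^ 2) * b (u x) (u x)
      ≤ ∫ x, (aw x * Ww τ l x ^ 2 * ‖x‖ ^ 2) * b (Dlin c (fderiv ℝ u x)) (Dlin c (fderiv ℝ u x)) := by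
  obtain ⟨δ, hδ, hδ0⟩ : ∃ δ > 0, (0 : Eu n) ∉ cthickening δ (tsupport u) := by
    obtain ⟨δ, hδ, h⟩ := Metric.isOpen_iff.1 (isClosed_tsupport u).isOpen_compl 0 h0
    refine ⟨δ/2, by positivity, fun hm => ?_⟩
    have h1 : cthickening (δ/2) (tsupport u) ⊆ thickening δ (tsupport u) :=
      cthickening_subset_thickening' hδ (by linarith) _
    obtain ⟨y, hy, hy2⟩ := mem_thickening_iff.1 (h1 hm)
    exact h (by rw [mem_ball, dist_comm]; exact hy2) hy
  obtain ⟨v, hv, hvK, ⟨C, hC⟩, hvt⟩ := mollify u hu hus δ hδ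
  set K := cthickening δ (tsupport u) with hK
  have hKc : IsCompact K := hus.isCompact.cthickening
  have hts : ∀ k, tsupport (v k) ⊆ K := fun k =>
    closure_minimal (fun x hx => by by_contra h; exact hx (hvK k x h)) isClosed_cthickening
  set w : Eu n → ℝ := fun x => aw x * Ww τ l x ^ 2 * ‖x‖ ^ 2 with hw
  have hwc : ∀ x ≠ 0, ContinuousAt w x := fun x hx =>
    ((aw_contAt hx).mul ((Ww_contDiffAt (m := 1) τ l hx).continuousAt.pow 2)).mul (continuous_norm.pow 2).continuousAt
  have hwK : ContinuousOn w K := fun x hx => (hwc x (by rintro rfl; exact hδ0 hx)).continuousWithinAt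
  have hwm : Measurable w := by
    have : Measurable (aw : Eu n → ℝ) := by unfold aw; fun_prop
    have : Measurable (Ww τ l : Eu n → ℝ) := by unfold Ww; fun_prop
    simp only [hw]; fun_prop
  have lim : ∀ (f : ℕ → Eu n → F) (g : Eu n → F) (C' : ℝ), (∀ k, Continuous (f k)) →
      (∀ k x, x ∉ K → f k x = 0) → (∀ k x, ‖f k x‖ ≤ C') → (∀ x, Tendsto (fun k => f k x) atTop (𝓝 (g x))) →
      Tendsto (fun k => ∫ x, w x * b (f k x) (f k x)) atTop (𝓝 (∫ x, w x * b (g x) (g x))) := by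
    intro f g C' hf hfK hfC hft
    refine tendsto_integral_of_dominated_convergence
      (K.indicator fun x => |w x| * (‖b‖ * C' * C')) ?_ ?_ ?_ ?_
    · intro k
      refine hwm.aestronglyMeasurable.mul (Continuous.aestronglyMeasurable ?_)
      have := hf k
      fun_prop
    · rw [integrable_indicator_iff hKc.measurableSet]
      exact (hwK.abs.mul continuousOn_const).integrableOn_compact hKc
    · intro k
      refine Eventually.of_forall fun x => ?_
      by_cases hx : x ∈ K
      · simp only [Set.indicator_of_mem hx, norm_mul, Real.norm_eq_abs]
        gcongr
        rw [← Real.norm_eq_abs]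
        refine (b.le_opNorm₂ _ _).trans ?_
        have := hfC k x
        have h0 := norm_nonneg (f k x)
        have : 0 ≤ ‖b‖ * C' := mul_nonneg (norm_nonneg b) (by linarith)
        gcongr
      · simp [hx, hfK k x hx]
    · refine Eventually.of_forall fun x => ?_
      have hcb : Continuous fun y => b y y := by fun_prop
      exact ((hcb.tendsto _).comp (hft x)).const_mul _
  have l1 := lim v u C (fun k => (hv k).continuous) hvK (fun k x => (hC k x).1) (fun x => (hvt x).1)
  have l2 := lim (fun k x => Dlin c (fderiv ℝ (v k) x)) (fun x => Dlin c (fderiv ℝ u x))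
    ((∑ j, ‖c j‖) * C) (fun k => (Dlin_cont c).comp ((hv k).continuous_fderiv (by norm_num)))
    (fun k x hx => by
      have : fderiv ℝ (v k) x = 0 := image_eq_zero_of_notMem_tsupport
        (fun h => hx (hts k (tsupport_fderiv_subset ℝ h)))
      simp [this, Dlin])
    (fun k x => (Dlin_norm_le c _).trans (by
      have := (hC k x).2
      have : 0 ≤ ∑ j, ‖c j‖ := Finset.sum_nonneg fun _ _ => norm_nonneg _
      gcongr))
    (fun x => ((Dlin_cont c).tendsto _).comp (hvt x).2)
  refine le_of_tendsto_of_tendsto' (l1.const_mul (2 * l)) l2 fun k => ?_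
  exact carleman_smooth hn hc hb τ l (v k) (hv k)
    (hKc.of_isClosed_subset (isClosed_tsupport _) (hts k)) (fun h => hδ0 (hts k h))

end

section
variable {n : ℕ} {F : Type*} [NormedAddCommGroup F] [NormedSpace ℝ F]

lemma aw_eq (x : Eu n) : aw x = (‖x‖ ^ n)⁻¹ := by
  unfold aw
  rw [← Real.rpow_natCast ‖x‖ 2, ← Real.rpow_mul (norm_nonneg _), ← Real.rpow_natCast ‖x‖ n,
    ← Real.rpow_neg (norm_nonneg _)]
  congr 1
  push_cast; ring

lemma weight_eq (m : ℕ) (l : ℝ) (x : Eu n) :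
    aw x * Ww (m:ℝ) l x ^ 2 * ‖x‖ ^ 2
      = (aw x * Real.exp (l * ‖x‖ ^ 2) * ‖x‖ ^ 2) * (‖x‖ ^ (2 * m))⁻¹ := by
  unfold Ww
  have h1 : ((‖x‖ ^ 2) ^ (-(m:ℝ) / 2)) ^ 2 = (‖x‖ ^ (2 * m))⁻¹ := by
    rw [← Real.rpow_natCast ((‖x‖ ^ 2) ^ (-(m:ℝ) / 2)) 2, ← Real.rpow_mul (by positivity)]
    rw [show -(m:ℝ) / 2 * ((2:ℕ):ℝ) = -(m:ℝ) by push_cast; ring, Real.rpow_neg (by positivity),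
      Real.rpow_natCast, pow_mul]
  have h2 : Real.exp (l / 2 * ‖x‖ ^ 2) ^ 2 = Real.exp (l * ‖x‖ ^ 2) := by
    rw [← Real.exp_nat_mul]; congr 1; push_cast; ring
  rw [mul_pow, h1, h2]; ring

/-- infinite order vanishing at a point -/
def InfOrd (u : Eu n → F) (x : Eu n) : Prop :=
  ∀ k : ℕ, ∃ M : ℝ, ∀ᶠ z in 𝓝 (0 : Eu n), ‖u (x + z)‖ ≤ M * ‖z‖ ^ k

lemma Dlin_smul_le (c : Fin n → F →L[ℝ] F) {h : Eu n → ℝ} {u : Eu n → F} {x : Eu n}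
    (hh : DifferentiableAt ℝ h x) (hu : DifferentiableAt ℝ u x) :
    ‖Dlin c (fderiv ℝ (fun y => h y • u y) x)‖ ≤ |h x| * ‖Dlin c (fderiv ℝ u x)‖
      + (∑ j, ‖c j‖) * ‖fderiv ℝ h x‖ * ‖u x‖ := by
  rw [fderiv_fun_smul hh hu]
  have : Dlin c (h x • fderiv ℝ u x + (fderiv ℝ h x).smulRight (u x))
      = h x • Dlin c (fderiv ℝ u x) + Dlin c ((fderiv ℝ h x).smulRight (u x)) := by
    simp [Dlin, Finset.sum_add_distrib, Finset.smul_sum]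
  rw [this]
  refine (norm_add_le _ _).trans ?_
  rw [norm_smul, Real.norm_eq_abs, mul_assoc]
  gcongr
  refine (Dlin_norm_le c _).trans ?_
  rw [ContinuousLinearMap.norm_smulRight_apply]

set_option maxHeartbeats 4000000 in
lemma sucp_core [CompleteSpace F] (hn : n ≠ 0) {c : Fin n → F →L[ℝ] F} (hc : Cliff c)
    {b : F →L[ℝ] F →L[ℝ] ℝ} (hb : GoodForm c b) (u : Eu n → F) (hu : ContDiff ℝ 1 u)
    (hus : HasCompactSupport u) (ρ C : ℝ) (hC : 0 ≤ C)
    (hD : ∀ x, ‖x‖ < ρ → ‖Dlin c (fderiv ℝ u x)‖ ≤ C * ‖u x‖) (hinf : InfOrd u 0) :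
    ∀ x, ‖x‖ < ρ → u x = 0 := by
  -- first, away from zero
  suffices H : ∀ x, x ≠ 0 → ‖x‖ < ρ → u x = 0 by
    intro x hx
    by_cases h : x = 0
    · subst h
      obtain ⟨M, hM⟩ := hinf 1
      have := hM.self_of_nhds
      simpa using this
    · exact H x h hx
  intro x0 hx0 hx0ρ
  by_contra hne
  set l : ℝ := ‖b‖ * C ^ 2 + 1 with hl
  have hlpos : 0 < l := by positivity
  set g0 : Eu n → ℝ := fun x => aw x * Real.exp (l * ‖x‖ ^ 2) * ‖x‖ ^ 2 with hg0
  have hg0nn : ∀ x, 0 ≤ g0 x := fun x => by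
    have := aw_nonneg x
    simp only [hg0]; positivity
  have hg0c : ∀ x ≠ 0, ContinuousAt g0 x := fun x hx =>
    ((aw_contAt hx).mul (by fun_prop)).mul (by fun_prop)
  have hbc : Continuous fun x => b (u x) (u x) := by
    have := hu.continuous
    fun_prop
  have hDc : Continuous fun x => Dlin c (fderiv ℝ u x) :=
    (Dlin_cont c).comp (hu.continuous_fderiv (by norm_num))
  -- lower bound near x0
  have hpos0 : 0 < g0 x0 * b (u x0) (u x0) := by
    have h1 : 0 < b (u x0) (u x0) := lt_of_lt_of_le (by positivity) (hb.pos _)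
    have h2 : 0 < g0 x0 := by
      simp only [hg0, aw_eq]; have := norm_pos_iff.2 hx0; positivity
    positivity
  obtain ⟨m', hm'0, s, hs0, hsx, hsρ, hs⟩ : ∃ m' > 0, ∃ s > 0, s < ‖x0‖ ∧ ‖x0‖ + s < ρ ∧
      ∀ x ∈ ball x0 s, m' ≤ g0 x * b (u x) (u x) := by
    have hcont : ContinuousAt (fun x => g0 x * b (u x) (u x)) x0 := (hg0c x0 hx0).mul hbc.continuousAt
    have hev := hcont.eventually (lt_mem_nhds (half_lt_self hpos0))
    obtain ⟨s, hs, hs2⟩ := Metric.eventually_nhds_iff_ball.1 hev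
    refine ⟨g0 x0 * b (u x0) (u x0) / 2, by positivity, min s (min ((ρ - ‖x0‖)/2) (‖x0‖/2)),
      lt_min hs (lt_min (by linarith) (by positivity)), ?_, ?_, fun x hx => ?_⟩
    · have := norm_pos_iff.2 hx0
      linarith [min_le_right s (min ((ρ - ‖x0‖)/2) (‖x0‖/2)), min_le_right ((ρ - ‖x0‖)/2) (‖x0‖/2)]
    · linarith [min_le_right s (min ((ρ - ‖x0‖)/2) (‖x0‖/2)), min_le_left ((ρ - ‖x0‖)/2) (‖x0‖/2)]
    exact (hs2 x (ball_subset_ball (min_le_left _ _) hx)).le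
  set ρ0 := ‖x0‖ + s with hρ0
  have hρ0pos : 0 < ρ0 := by positivity
  have hρpos : 0 < ρ := by linarith
  -- outer bound
  obtain ⟨R, hR⟩ := hus.isCompact.isBounded.subset_closedBall (0 : Eu n)
  obtain ⟨Q, hQ0, hQ⟩ : ∃ Q ≥ 0, ∀ x, ρ ≤ ‖x‖ →
      g0 x * b (Dlin c (fderiv ℝ u x)) (Dlin c (fderiv ℝ u x)) ≤ Q := by
    set K := tsupport u ∩ {x | ρ ≤ ‖x‖} with hK
    have hKc : IsCompact K := hus.isCompact.inter_right (isClosed_le continuous_const continuous_norm)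
    have hcont : ContinuousOn (fun x => g0 x * b (Dlin c (fderiv ℝ u x)) (Dlin c (fderiv ℝ u x))) K := by
      intro x hx
      have hxne : x ≠ 0 := by
        rintro rfl
        have := hx.2
        simp at this; linarith
      refine ContinuousAt.continuousWithinAt ((hg0c x hxne).mul (Continuous.continuousAt ?_))
      fun_prop
    obtain ⟨Q, hQ⟩ := hKc.exists_bound_of_continuousOn hcont
    refine ⟨max Q 0, le_max_right _ _, fun x hx => ?_⟩
    by_cases hxt : x ∈ tsupport u
    · exact ((le_abs_self _).trans (hQ x ⟨hxt, hx⟩)).trans (le_max_left _ _)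
    · have : fderiv ℝ u x = 0 := image_eq_zero_of_notMem_tsupport
        (fun h => hxt (tsupport_fderiv_subset ℝ h))
      simp [this, Dlin]
  have hR' : ∀ x, x ∉ closedBall (0 : Eu n) R → fderiv ℝ u x = 0 := fun x hx =>
    image_eq_zero_of_notMem_tsupport (fun h => hx (hR (tsupport_fderiv_subset ℝ h)))
  -- the bump
  let f : ContDiffBump (0 : Eu n) := ⟨1, 2, one_pos, one_lt_two⟩
  have hfC : ContDiff ℝ 1 f := f.contDiff
  obtain ⟨A, hA⟩ := (f.hasCompactSupport.fderiv ℝ).exists_bound_of_continuous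
    (hfC.continuous_fderiv (by norm_num))
  have hA0 : 0 ≤ A := (norm_nonneg _).trans (hA 0)
  set S : ℝ := ∑ j, ‖c j‖ with hS
  have hS0 : 0 ≤ S := Finset.sum_nonneg fun _ _ => norm_nonneg _
  set V1 := (volume (ball x0 s)).toReal with hV1
  have hV1pos : 0 < V1 := ENNReal.toReal_pos (measure_ball_pos _ _ hs0).ne' measure_ball_lt_top.ne
  set V2 := (volume (closedBall (0 : Eu n) R)).toReal with hV2
  -- main inequality for fixed m
  have main : ∀ m : ℕ, l * (m' * (ρ0 ^ (2*m))⁻¹ * V1) ≤ (ρ ^ (2*m))⁻¹ * Q * V2 := by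
    intro m
    obtain ⟨M, hM⟩ := hinf (m + n + 2)
    obtain ⟨r, hr0, hr⟩ := Metric.eventually_nhds_iff_ball.1 hM
    have hM0 : 0 ≤ |M| := abs_nonneg _
    -- constant
    set B : ℝ := Real.exp l * 4 * (‖b‖ * ((C + S * A) * (|M| * 2 ^ (m+n+2))) ^ 2) with hB
    have hB0 : 0 ≤ B := by positivity
    have eps : ∀ ε : ℝ, 0 < ε → ε < 1/2 → 2 * ε < r → 2 * ε < ρ → 2 * ε < ‖x0‖ - s →
        l * (m' * (ρ0 ^ (2*m))⁻¹ * V1) ≤ (ρ ^ (2*m))⁻¹ * Q * V2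
          + B * ε * (volume (ball (0 : Eu n) 2)).toReal := by
      intro ε hε hε1 hεr hερ hεs
      set χ : Eu n → ℝ := fun x => 1 - f (ε⁻¹ • x) with hχ
      have hχC : ContDiff ℝ 1 χ := contDiff_const.sub (hfC.comp (contDiff_const_smul _))
      have hχ01 : ∀ x, |χ x| ≤ 1 := fun x => by
        have h1 := f.nonneg' (ε⁻¹ • x); have h2 := f.le_one (x := ε⁻¹ • x)
        rw [abs_le]; constructor <;> simp only [hχ] <;> linarith
      have hχd : ∀ x, ‖fderiv ℝ χ x‖ ≤ A / ε := fun x => by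
        have h1 : HasFDerivAt (fun y : Eu n => ε⁻¹ • y) (ε⁻¹ • ContinuousLinearMap.id ℝ (Eu n)) x :=
          (hasFDerivAt_id (𝕜 := ℝ) x).const_smul ε⁻¹
        have h2 : HasFDerivAt (fun y => f (ε⁻¹ • y)) _ x :=
          ((hfC.differentiable (by norm_num) (ε⁻¹ • x)).hasFDerivAt).comp x h1
        have h3 : HasFDerivAt χ _ x := h2.const_sub 1
        rw [h3.fderiv, norm_neg]
        refine (ContinuousLinearMap.opNorm_comp_le _ _).trans ?_
        rw [div_eq_mul_inv]
        refine mul_le_mul (hA _) ?_ (norm_nonneg _) hA0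
        rw [norm_smul, norm_inv, Real.norm_of_nonneg hε.le]
        exact mul_le_of_le_one_right (by positivity) ContinuousLinearMap.norm_id_le
      have hχin : ∀ x, ‖x‖ ≤ ε → χ x = 0 := fun x hx => by
        simp only [hχ]
        rw [f.one_of_mem_closedBall]; · simp
        simp only [mem_closedBall_zero_iff, norm_smul, norm_inv, Real.norm_of_nonneg hε.le]
        show ε⁻¹ * ‖x‖ ≤ 1
        rw [inv_mul_le_iff₀ hε]; linarith
      have hχout : ∀ x, 2 * ε ≤ ‖x‖ → χ x = 1 := fun x hx => by
        simp only [hχ]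
        rw [f.zero_of_le_dist]; · simp
        simp only [dist_zero_right, norm_smul, norm_inv, Real.norm_of_nonneg hε.le]
        show 2 ≤ ε⁻¹ * ‖x‖
        rw [le_inv_mul_iff₀ hε]; linarith
      set v : Eu n → F := fun x => χ x • u x with hv
      have hvC : ContDiff ℝ 1 v := hχC.smul hu
      have hvs : HasCompactSupport v := hus.smul_left
      have hvz : ∀ x, ‖x‖ < ε → v =ᶠ[𝓝 x] 0 := fun x hx => by
        filter_upwards [(isOpen_lt continuous_norm continuous_const).mem_nhds hx] with y hy
        simp [hv, hχin y (le_of_lt hy)]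
      have hv0 : (0 : Eu n) ∉ tsupport v := by
        rw [notMem_tsupport_iff_eventuallyEq]
        exact hvz 0 (by simpa using hε)
      have hvout : ∀ x, 2 * ε < ‖x‖ → v =ᶠ[𝓝 x] u := fun x hx => by
        filter_upwards [(isOpen_lt continuous_const continuous_norm).mem_nhds hx] with y hy
        simp [hv, hχout y (le_of_lt hy)]
      have hcar := carleman hn hc hb m l v hvC hvs hv0
      set w : Eu n → ℝ := fun x => aw x * Ww (m:ℝ) l x ^ 2 * ‖x‖ ^ 2 with hw
      have hwnn : ∀ x, 0 ≤ w x := fun x => by have := aw_nonneg x; simp only [hw]; positivity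
      have hwc : ∀ x ≠ 0, ContinuousAt w x := fun x hx =>
        ((aw_contAt hx).mul ((Ww_contDiffAt (m := 1) m l hx).continuousAt.pow 2)).mul
          (continuous_norm.pow 2).continuousAt
      have hweq : ∀ x, w x = g0 x * (‖x‖ ^ (2 * m))⁻¹ := weight_eq m l
      have hvDc : Continuous fun x => Dlin c (fderiv ℝ v x) :=
        (Dlin_cont c).comp (hvC.continuous_fderiv (by norm_num))
      have hvc := hvC.continuous
      have i1 : Integrable fun x => w x * b (v x) (v x) :=
        integrable_weight hvs hv0 w hwc _ (by fun_prop) (fun x hx => by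
          simp [image_eq_zero_of_notMem_tsupport hx])
      have i2 : Integrable fun x => w x * b (Dlin c (fderiv ℝ v x)) (Dlin c (fderiv ℝ v x)) :=
        integrable_weight hvs hv0 w hwc _ (by fun_prop) (fun x hx => by
          have : fderiv ℝ v x = 0 := image_eq_zero_of_notMem_tsupport
            (fun h => hx (tsupport_fderiv_subset ℝ h))
          simp [this, Dlin])
      have i3 : Integrable ((ball (0 : Eu n) 2).indicator fun _ => B * ε) :=
        (integrable_indicator_iff measurableSet_ball).2 (integrableOn_const measure_ball_lt_top.ne)
      have i4 : Integrable ((closedBall (0 : Eu n) R).indicator fun _ => (ρ ^ (2*m))⁻¹ * Q) :=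
        (integrable_indicator_iff measurableSet_closedBall).2
          (integrableOn_const measure_closedBall_lt_top.ne)
      have i5 : Integrable ((ball x0 s).indicator fun _ => m' * (ρ0 ^ (2*m))⁻¹) :=
        (integrable_indicator_iff measurableSet_ball).2 (integrableOn_const measure_ball_lt_top.ne)
      have n3 : ∀ x, 0 ≤ (ball (0 : Eu n) 2).indicator (fun _ => B * ε) x := fun x =>
        Set.indicator_nonneg (fun _ _ => by positivity) x
      have n4 : ∀ x, 0 ≤ (closedBall (0 : Eu n) R).indicator (fun _ => (ρ ^ (2*m))⁻¹ * Q) x := fun x =>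
        Set.indicator_nonneg (fun _ _ => by positivity) x
      have nb : ∀ x, 0 ≤ w x * b (v x) (v x) := fun x => mul_nonneg (hwnn x) (hb.nonneg _)
      -- pointwise bound
      have pw : ∀ x, w x * b (Dlin c (fderiv ℝ v x)) (Dlin c (fderiv ℝ v x)) ≤
          l * (w x * b (v x) (v x)) + ((ball (0 : Eu n) 2).indicator (fun _ => B * ε) x +
            (closedBall (0 : Eu n) R).indicator (fun _ => (ρ ^ (2*m))⁻¹ * Q) x) := by
        intro x
        rcases lt_or_ge (2 * ε) ‖x‖ with h1 | h1
        · rw [(hvout x h1).fderiv_eq, (hvout x h1).eq_of_nhds]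
          rcases lt_or_ge ‖x‖ ρ with h2 | h2
          · have hd := hD x h2
            have e1 : b (Dlin c (fderiv ℝ u x)) (Dlin c (fderiv ℝ u x)) ≤ l * b (u x) (u x) := by
              refine (le_abs_self _).trans ?_
              rw [← Real.norm_eq_abs]
              refine (b.le_opNorm₂ _ _).trans ?_
              calc ‖b‖ * ‖Dlin c (fderiv ℝ u x)‖ * ‖Dlin c (fderiv ℝ u x)‖
                  ≤ ‖b‖ * (C * ‖u x‖) * (C * ‖u x‖) := by gcongr
                _ = ‖b‖ * C ^ 2 * ‖u x‖ ^ 2 := by ring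
                _ ≤ l * b (u x) (u x) := by
                    have := hb.pos (u x)
                    have h3 : ‖b‖ * C ^ 2 ≤ l := by rw [hl]; linarith
                    gcongr
            have := mul_le_mul_of_nonneg_left e1 (hwnn x)
            linarith [n3 x, n4 x]
          · have e1 := hQ x h2
            have nb' : 0 ≤ w x * b (u x) (u x) := mul_nonneg (hwnn x) (hb.nonneg _)
            by_cases hxR : x ∈ closedBall (0 : Eu n) R
            · rw [Set.indicator_of_mem hxR]
              have e2 : w x * b (Dlin c (fderiv ℝ u x)) (Dlin c (fderiv ℝ u x)) ≤ (ρ ^ (2*m))⁻¹ * Q := by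
                rw [hweq, mul_comm (g0 x), mul_assoc]
                have := mul_nonneg (hg0nn x) (hb.nonneg (Dlin c (fderiv ℝ u x)))
                gcongr
              have : 0 ≤ l * (w x * b (u x) (u x)) := by positivity
              linarith [n3 x]
            · rw [hR' x hxR]
              simp only [Dlin, _root_.zero_apply, map_zero, Finset.sum_const_zero, mul_zero]
              have : 0 ≤ l * (w x * b (u x) (u x)) := by positivity
              linarith [n3 x, n4 x]
        · rcases lt_or_ge ‖x‖ ε with h2 | h2
          · rw [(hvz x h2).fderiv_eq]
            have : 0 ≤ l * (w x * b (v x) (v x)) := mul_nonneg hlpos.le (nb x)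
            simp only [Dlin, fderiv_zero, Pi.zero_apply, _root_.zero_apply, map_zero, Finset.sum_const_zero, mul_zero]
            linarith [n3 x, n4 x]
          · have hxr : x ∈ ball (0 : Eu n) r := by simp; linarith
            have hx2 : x ∈ ball (0 : Eu n) 2 := by simp; linarith
            rw [Set.indicator_of_mem hx2]
            have hux := hr x hxr
            rw [zero_add] at hux
            have hux2 : ‖u x‖ ≤ |M| * 2 ^ (m+n+2) * ε ^ (m+n+2) := by
              refine hux.trans ?_
              calc M * ‖x‖ ^ (m+n+2) ≤ |M| * (2 * ε) ^ (m+n+2) := by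
                    gcongr; exact le_abs_self M
                _ = _ := by rw [mul_pow]; ring
            have hDv : ‖Dlin c (fderiv ℝ v x)‖ ≤ (C + S * A) * (|M| * 2 ^ (m+n+2)) * ε ^ (m+n+1) := by
              refine (Dlin_smul_le c (hχC.differentiable (by norm_num) x)
                (hu.differentiable (by norm_num) x)).trans ?_
              have hd := hD x (by linarith)
              have k1 : |χ x| * ‖Dlin c (fderiv ℝ u x)‖ ≤ 1 * (C * ‖u x‖) := by
                gcongr; exact hχ01 x
              have k2 : S * ‖fderiv ℝ χ x‖ * ‖u x‖ ≤ S * (A / ε) * ‖u x‖ := by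
                gcongr; exact hχd x
              have k3 : 1 * (C * ‖u x‖) ≤ C / ε * ‖u x‖ := by
                rw [one_mul]
                gcongr
                rw [le_div_iff₀ hε]
                exact mul_le_of_le_one_right hC (by linarith)
              calc _ ≤ C / ε * ‖u x‖ + S * (A / ε) * ‖u x‖ := by linarith
                _ = (C + S * A) / ε * ‖u x‖ := by ring
                _ ≤ (C + S * A) / ε * (|M| * 2 ^ (m+n+2) * ε ^ (m+n+2)) := by gcongr
                _ = _ := by rw [pow_succ ε (m+n+1)]; field_simp
            have hwx : w x ≤ Real.exp l * 4 * ε ^ 2 * (ε ^ n)⁻¹ * (ε ^ (2*m))⁻¹ := by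
              rw [hweq]; simp only [hg0, aw_eq]
              calc (‖x‖ ^ n)⁻¹ * Real.exp (l * ‖x‖ ^ 2) * ‖x‖ ^ 2 * (‖x‖ ^ (2*m))⁻¹
                  ≤ (ε ^ n)⁻¹ * Real.exp l * (2 * ε) ^ 2 * (ε ^ (2*m))⁻¹ := by
                    have : l * ‖x‖ ^ 2 ≤ l := mul_le_of_le_one_right hlpos.le
                      (pow_le_one₀ (norm_nonneg _) (by linarith))
                    gcongr
                _ = _ := by ring
            have hbx : b (Dlin c (fderiv ℝ v x)) (Dlin c (fderiv ℝ v x)) ≤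
                ‖b‖ * ((C + S * A) * (|M| * 2 ^ (m+n+2))) ^ 2 * (ε ^ (m+n+1)) ^ 2 := by
              refine (le_abs_self _).trans ?_
              rw [← Real.norm_eq_abs]
              refine (b.le_opNorm₂ _ _).trans ?_
              calc ‖b‖ * ‖Dlin c (fderiv ℝ v x)‖ * ‖Dlin c (fderiv ℝ v x)‖
                  ≤ ‖b‖ * ((C + S * A) * (|M| * 2 ^ (m+n+2)) * ε ^ (m+n+1))
                    * ((C + S * A) * (|M| * 2 ^ (m+n+2)) * ε ^ (m+n+1)) := by gcongr
                _ = _ := by ring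
            have hfin : w x * b (Dlin c (fderiv ℝ v x)) (Dlin c (fderiv ℝ v x)) ≤ B * ε := by
              calc _ ≤ (Real.exp l * 4 * ε ^ 2 * (ε ^ n)⁻¹ * (ε ^ (2*m))⁻¹) *
                    (‖b‖ * ((C + S * A) * (|M| * 2 ^ (m+n+2))) ^ 2 * (ε ^ (m+n+1)) ^ 2) :=
                    mul_le_mul hwx hbx (hb.nonneg _) (by positivity)
                _ = B * ε ^ (n + 4) := by
                    rw [hB, show (ε ^ (m+n+1)) ^ 2 = ε ^ (2*m) * ε ^ n * (ε ^ (n+2)) by ring]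
                    field_simp
                    ring
                _ ≤ B * ε := by
                    gcongr
                    calc ε ^ (n+4) ≤ ε ^ 1 := pow_le_pow_of_le_one hε.le (by linarith) (by omega)
                      _ = ε := pow_one _
            have : 0 ≤ l * (w x * b (v x) (v x)) := mul_nonneg hlpos.le (nb x)
            linarith [n4 x]
      -- lower bound
      have lw : ∀ x, (ball x0 s).indicator (fun _ => m' * (ρ0 ^ (2*m))⁻¹) x ≤ w x * b (v x) (v x) := by
        intro x
        by_cases hx : x ∈ ball x0 s
        · rw [Set.indicator_of_mem hx]
          have hx' : ‖x - x0‖ < s := by rwa [mem_ball, dist_eq_norm] at hx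
          have hxn : 2 * ε < ‖x‖ := by
            have := norm_sub_norm_le x0 x
            rw [norm_sub_rev] at this; linarith
          have hxn2 : ‖x‖ ≤ ρ0 := by
            have := norm_sub_norm_le x x0; linarith
          have hxp : 0 < ‖x‖ := by linarith
          rw [(hvout x hxn).eq_of_nhds, hweq, mul_right_comm]
          have := hs x hx
          have hh := hm'0.le.trans this
          gcongr
        · rw [Set.indicator_of_notMem hx]; exact nb x
      have I1 := integral_mono i5 i1 lw
      have I2 := integral_mono i2 ((i1.const_mul l).add (i3.add i4)) pw
      have I20 : ∫ x, (l * (w x * b (v x) (v x)) + ((ball (0 : Eu n) 2).indicator (fun _ => B * ε) +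
            (closedBall (0 : Eu n) R).indicator (fun _ => (ρ ^ (2*m))⁻¹ * Q)) x) = _ :=
        integral_add (i1.const_mul l) (i3.add i4)
      replace I2 := I2.trans_eq I20
      rw [integral_const_mul] at I2
      have I3 : ∫ x, ((ball (0 : Eu n) 2).indicator (fun _ => B * ε) + (closedBall (0 : Eu n) R).indicator (fun _ => (ρ ^ (2*m))⁻¹ * Q)) x
        = (volume (ball (0 : Eu n) 2)).toReal * (B * ε) + V2 * ((ρ ^ (2*m))⁻¹ * Q) := by
        rw [integral_add' i3 i4, integral_indicator_const _ measurableSet_ball,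
          integral_indicator_const _ measurableSet_closedBall]
        simp [Measure.real, hV2]
      rw [I3] at I2
      rw [integral_indicator_const _ measurableSet_ball] at I1
      simp only [Measure.real, smul_eq_mul] at I1
      have I4 := mul_le_mul_of_nonneg_left I1 hlpos.le
      simp only [← hV1] at I4
      have := I4.trans (by linarith [hcar, I2] : _ ≤ (volume (ball (0 : Eu n) 2)).toReal * (B * ε) + V2 * ((ρ ^ (2*m))⁻¹ * Q))
      linarith
    have ht : Tendsto (fun ε : ℝ => (ρ ^ (2*m))⁻¹ * Q * V2
          + B * ε * (volume (ball (0 : Eu n) 2)).toReal) (𝓝[>] 0) (𝓝 ((ρ ^ (2*m))⁻¹ * Q * V2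
          + B * 0 * (volume (ball (0 : Eu n) 2)).toReal)) := by
      refine Tendsto.mono_left (Continuous.tendsto ?_ 0) nhdsWithin_le_nhds
      fun_prop
    have ht2 := ge_of_tendsto ht (b := l * (m' * (ρ0 ^ (2*m))⁻¹ * V1)) ?_
    · simpa using ht2
    · have hsmall : ∀ a : ℝ, 0 < a → ∀ᶠ ε : ℝ in 𝓝[>] 0, 2 * ε < a := fun a ha => by
        filter_upwards [nhdsWithin_le_nhds (Iio_mem_nhds (half_pos ha))] with ε hε
        have : ε < a / 2 := hε
        linarith
      filter_upwards [self_mem_nhdsWithin, hsmall 1 one_pos, hsmall r hr0, hsmall ρ hρpos,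
        hsmall (‖x0‖ - s) (by linarith)] with ε h1 h2 h3 h4 h5
      exact eps ε h1 (by linarith) h3 h4 h5
  have hq : Tendsto (fun m : ℕ => ((ρ0 / ρ) ^ 2) ^ m * (Q * V2)) atTop (𝓝 (0 * (Q * V2))) := by
    refine (tendsto_pow_atTop_nhds_zero_of_lt_one (by positivity) ?_).mul_const _
    exact pow_lt_one₀ (by positivity) ((div_lt_one hρpos).2 hsρ) (by norm_num)
  have hle := ge_of_tendsto' hq (b := l * (m' * V1)) (fun m => by
    have h := main m
    have h2 := mul_le_mul_of_nonneg_left h (by positivity : 0 ≤ ρ0 ^ (2*m))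
    calc l * (m' * V1) = ρ0 ^ (2*m) * (l * (m' * (ρ0 ^ (2*m))⁻¹ * V1)) := by field_simp
      _ ≤ _ := h2
      _ = _ := by rw [← pow_mul, div_pow]; ring)
  have : 0 < l * (m' * V1) := by positivity
  linarith

end

section
variable {n : ℕ} {F : Type*} [NormedAddCommGroup F] [NormedSpace ℝ F]

lemma cutoff_ext (ψ : Eu n → F) (x : Eu n) (R : ℝ) (hR : 0 < R) (hψ : ContDiffOn ℝ 1 ψ (ball x R)) :
    ∃ u : Eu n → F, ContDiff ℝ 1 u ∧ HasCompactSupport u ∧ (∀ z, ‖z‖ < R / 2 → u z = ψ (x + z)) ∧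
      (∀ z, ‖z‖ < R / 2 → fderiv ℝ u z = fderiv ℝ ψ (x + z)) := by
  let η : ContDiffBump (0 : Eu n) := ⟨R / 2, 3 * R / 4, by positivity, by linarith⟩
  have hts : tsupport (fun z => η z • ψ (x + z)) ⊆ closedBall 0 (3 * R / 4) := by
    refine (tsupport_smul_subset_left _ _).trans ?_
    rw [η.tsupport_eq]
  have heq : ∀ z, ‖z‖ < R / 2 → η z • ψ (x + z) = ψ (x + z) := fun z hz => by
    rw [η.one_of_mem_closedBall, one_smul]
    rw [mem_closedBall_zero_iff]; exact hz.le
  refine ⟨fun z => η z • ψ (x + z), ?_, ?_, heq, ?_⟩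
  · refine contDiff_of_tsupport' fun z hz => η.contDiff.contDiffAt.smul ?_
    have hz2 := hts hz
    rw [mem_closedBall_zero_iff] at hz2
    have : ContDiffAt ℝ 1 ψ (x + z) := hψ.contDiffAt (isOpen_ball.mem_nhds (by
      simp; linarith))
    exact this.comp z (contDiff_const.add contDiff_id).contDiffAt
  · exact η.hasCompactSupport.smul_right
  · intro z hz
    have : (fun z => η z • ψ (x + z)) =ᶠ[𝓝 z] fun z => ψ (x + z) := by
      filter_upwards [(isOpen_lt continuous_norm continuous_const).mem_nhds hz] with y hy
      exact heq y hy
    rw [this.fderiv_eq, fderiv_comp_add_left]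

lemma sucp_ball [CompleteSpace F] (hn : n ≠ 0) {c : Fin n → F →L[ℝ] F} (hc : Cliff c)
    {b : F →L[ℝ] F →L[ℝ] ℝ} (hb : GoodForm c b) (ψ : Eu n → F) (x : Eu n) (R C : ℝ) (hR : 0 < R)
    (hC : 0 ≤ C) (hψ : ContDiffOn ℝ 1 ψ (ball x R))
    (hD : ∀ y ∈ ball x R, ‖Dlin c (fderiv ℝ ψ y)‖ ≤ C * ‖ψ y‖) (hinf : InfOrd ψ x) :
    ∀ y ∈ ball x (R / 2), ψ y = 0 := by
  obtain ⟨u, hu, hus, h1, h2⟩ := cutoff_ext ψ x R hR hψ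
  have := sucp_core hn hc hb u hu hus (R/2) C hC (fun z hz => by
    rw [h1 z hz, h2 z hz]
    exact hD _ (by simp; linarith)) (fun k => by
      obtain ⟨M, hM⟩ := hinf k
      refine ⟨M, ?_⟩
      filter_upwards [hM, ball_mem_nhds (0 : Eu n) (half_pos hR)] with z hz hz2
      rw [mem_ball_zero_iff] at hz2
      rwa [zero_add, h1 z hz2])
  intro y hy
  rw [mem_ball, dist_eq_norm] at hy
  have h := this (y - x) hy
  rw [h1 _ hy] at h
  simpa using h

lemma infOrd_of_eventually {ψ : Eu n → F} {x : Eu n} (h : ψ =ᶠ[𝓝 x] 0) : InfOrd ψ x := by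
  intro k
  refine ⟨0, ?_⟩
  have ht : Tendsto (fun z : Eu n => x + z) (𝓝 0) (𝓝 x) := by
    have : Continuous fun z : Eu n => x + z := by fun_prop
    simpa using this.tendsto 0
  filter_upwards [ht.eventually h] with z hz
  simp [hz]

lemma local_bound {c : Fin n → F →L[ℝ] F} {ψ : Eu n → F} {p : ℝ} (hp : 0 < p)
    (hψ : ContDiffOn ℝ 1 ψ (ball 0 1))
    (hD : ∀ y ∈ ball (0 : Eu n) 1, ‖Dlin c (fderiv ℝ ψ y)‖ ≤ ‖ψ y‖ ^ p * ‖ψ y‖)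
    {x : Eu n} (hx : x ∈ ball (0 : Eu n) 1) :
    ∃ R > 0, ∃ C ≥ 0, ball x R ⊆ ball 0 1 ∧ ∀ y ∈ ball x R, ‖Dlin c (fderiv ℝ ψ y)‖ ≤ C * ‖ψ y‖ := by
  have hcont : ContinuousAt (fun y => ‖ψ y‖ ^ p) x :=
    ((hψ.continuousOn.continuousAt (isOpen_ball.mem_nhds hx)).norm).rpow_const (Or.inr hp.le)
  have hev := (hcont.eventually (gt_mem_nhds (lt_add_one (‖ψ x‖ ^ p)))).and (isOpen_ball.mem_nhds hx)
  obtain ⟨R, hR, h⟩ := Metric.eventually_nhds_iff_ball.1 hev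
  refine ⟨R, hR, ‖ψ x‖ ^ p + 1, by positivity, fun y hy => (h y hy).2, fun y hy => ?_⟩
  refine (hD y (h y hy).2).trans ?_
  gcongr
  exact (h y hy).1.le

lemma finite_order [CompleteSpace F] (hn : n ≠ 0) {c : Fin n → F →L[ℝ] F} (hc : Cliff c)
    {b : F →L[ℝ] F →L[ℝ] ℝ} (hb : GoodForm c b) {ψ : Eu n → F} {p : ℝ} (hp : 0 < p)
    (hψ : ContDiffOn ℝ 1 ψ (ball 0 1))
    (hD : ∀ y ∈ ball (0 : Eu n) 1, ‖Dlin c (fderiv ℝ ψ y)‖ ≤ ‖ψ y‖ ^ p * ‖ψ y‖)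
    (hne : ∃ x ∈ ball (0 : Eu n) 1, ψ x ≠ 0) :
    ∀ x ∈ ball (0 : Eu n) 1, ¬ InfOrd ψ x := by
  intro x0 hx0 hinf
  set S : Set (Eu n) := {x | x ∈ ball (0 : Eu n) 1 ∧ ψ =ᶠ[𝓝 x] 0} with hS
  have step : ∀ x ∈ ball (0 : Eu n) 1, InfOrd ψ x → ψ =ᶠ[𝓝 x] 0 := by
    intro x hx hi
    obtain ⟨R, hR, C, hC, hsub, hd⟩ := local_bound hp hψ hD hx
    have := sucp_ball hn hc hb ψ x R C hR hC (hψ.mono hsub) hd hi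
    filter_upwards [ball_mem_nhds x (half_pos hR)] with y hy using this y hy
  have hopen : IsOpen S := by
    refine isOpen_iff_mem_nhds.2 fun x hx => ?_
    filter_upwards [isOpen_ball.mem_nhds hx.1, hx.2.eventually_nhds] with y h1 h2
    exact ⟨h1, h2⟩
  have hsub : ball (0 : Eu n) 1 ⊆ S := by
    refine (convex_ball _ _).isPreconnected.subset_of_closure_inter_subset hopen
      ⟨x0, hx0, hx0, step x0 hx0 hinf⟩ ?_
    rintro x ⟨hxc, hx⟩
    refine ⟨hx, ?_⟩
    obtain ⟨R, hR, C, hC, hsub, hd⟩ := local_bound hp hψ hD hx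
    obtain ⟨y, hy, hxy⟩ := Metric.mem_closure_iff.1 hxc (R/8) (by positivity)
    have hbb : ball y (R/2) ⊆ ball x R := ball_subset_ball' (by rw [dist_comm]; linarith)
    have := sucp_ball hn hc hb ψ y (R/2) C (by positivity) hC ((hψ.mono hsub).mono hbb)
      (fun z hz => hd z (hbb hz)) (infOrd_of_eventually hy.2)
    filter_upwards [isOpen_ball.mem_nhds (show x ∈ ball y (R/2/2) by rw [mem_ball]; linarith)] with z hz
    exact this z hz
  obtain ⟨x, hx, hx2⟩ := hne
  exact hx2 (hsub hx).2.self_of_nhds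

end

section
variable {n : ℕ} {F : Type*} [NormedAddCommGroup F] [NormedSpace ℝ F]

lemma cmap_bv (c : Fin n → F →L[ℝ] F) (j : Fin n) : cmap c (bv j) = c j := by
  ext u
  rw [cmap_apply]
  rw [Finset.sum_eq_single j]
  · simp [bv]
  · intro i _ hij; simp [bv, hij]
  · simp

lemma cliff_sq {c : Fin n → F →L[ℝ] F} (hc : Cliff c) (j : Fin n) (u : F) : c j (c j u) = -u := by
  have h := hc j j u
  simp only [if_true] at h
  rw [← two_smul ℝ] at h
  have h2 := congrArg (fun v => (1/2 : ℝ) • v) h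
  simp only [smul_smul] at h2
  norm_num at h2
  exact h2

def hreg (ε s : ℝ) (z : Eu n) : ℝ := (‖z‖ ^ 2 + ε ^ 2) ^ s

lemma hreg_contDiff {ε : ℝ} (hε : 0 < ε) (s : ℝ) : ContDiff ℝ 1 (hreg ε s : Eu n → ℝ) := by
  refine ContDiff.rpow_const_of_ne ((contDiff_norm_sq ℝ).add contDiff_const) fun x => ?_
  positivity

lemma hreg_fderiv {ε : ℝ} (hε : 0 < ε) (s : ℝ) (z v : Eu n) :
    fderiv ℝ (hreg ε s : Eu n → ℝ) z v = 2 * s * hreg ε (s - 1) z * inner ℝ z v := by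
  have h1 : HasFDerivAt (fun z : Eu n => ‖z‖ ^ 2 + ε ^ 2) _ z :=
    ((hasStrictFDerivAt_norm_sq z).hasFDerivAt).add_const (ε ^ 2)
  have h2 := h1.rpow_const (p := s) (Or.inl (by positivity))
  have h3 : HasFDerivAt (hreg ε s : Eu n → ℝ) _ z := h2
  rw [h3.fderiv]
  simp [hreg]
  ring

lemma reg_id {c : Fin n → F →L[ℝ] F} (hc : Cliff c) {ε : ℝ} (hε : 0 < ε)
    (f : Eu n → F) (hf : ContDiff ℝ 1 f) (hfs : HasCompactSupport f) :
    ∫ z, hreg ε (-(n:ℝ)/2) z • cmap c z (Dlin c (fderiv ℝ f z))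
      = ∫ z, (n * ε ^ 2 * hreg ε (-(n:ℝ)/2 - 1) z) • f z := by
  set h : Eu n → ℝ := hreg ε (-(n:ℝ)/2) with hh
  have hhC : ContDiff ℝ 1 h := hreg_contDiff hε _
  let R : (F →L[ℝ] F) → (F →L[ℝ] F) →L[ℝ] (F →L[ℝ] F) := fun A =>
    (ContinuousLinearMap.compL ℝ F F F).flip A
  let k : Fin n → Eu n → (F →L[ℝ] F) := fun j z => h z • (R (c j)) (cmap c z)
  have hkC : ∀ j, ContDiff ℝ 1 (k j) := fun j =>
    hhC.smul ((R (c j)).contDiff.comp (cmap c).contDiff)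
  have hkd : ∀ j z u, fderiv ℝ (k j) z (bv j) u
      = (-(n:ℝ) * hreg ε (-(n:ℝ)/2 - 1) z) • (z j • cmap c z (c j u)) - h z • u := by
    intro j z u
    have h1 : HasFDerivAt (fun z => (R (c j)) (cmap c z)) ((R (c j)).comp (cmap c)) z :=
      ((R (c j)).comp (cmap c)).hasFDerivAt
    have h2 := ((hhC.differentiable (by norm_num) z).hasFDerivAt).smul h1
    have h3 : HasFDerivAt (k j) _ z := h2
    rw [h3.fderiv]
    simp only [_root_.add_apply, _root_.smul_apply, ContinuousLinearMap.smulRight_apply,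
      ContinuousLinearMap.comp_apply, R, ContinuousLinearMap.flip_apply, ContinuousLinearMap.compL_apply, cmap_bv]
    rw [cliff_sq hc, hh, hreg_fderiv hε, inner_bv, smul_neg, smul_smul]
    have e5 : 2 * (-(n:ℝ) / 2) * hreg ε (-(n:ℝ) / 2 - 1) z * z j
        = -(n:ℝ) * hreg ε (-(n:ℝ) / 2 - 1) z * z j := by ring
    rw [e5]
    abel
  have hfc := hf.continuous
  have hfdc : ∀ v, Continuous fun z => fderiv ℝ f z v := fun v =>
    (hf.continuous_fderiv (by norm_num)).clm_apply continuous_const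
  have cs1 : ∀ (g : Eu n → (F →L[ℝ] F)) (w : Eu n → F), Continuous g → Continuous w → HasCompactSupport w →
      Integrable fun z => g z (w z) := by
    intro g w hg hw hws
    refine (hg.clm_apply hw).integrable_of_hasCompactSupport ?_
    exact hws.mono fun z hz => by
      simp only [Function.mem_support] at hz ⊢
      intro h0; simp [h0] at hz
  have hfds : ∀ v, HasCompactSupport fun z => fderiv ℝ f z v := fun v => hfs.fderiv_apply ℝ v
  have ibp : ∀ j, ∫ z, k j z (fderiv ℝ f z (bv j)) = - ∫ z, (fderiv ℝ (k j) z (bv j)) (f z) := by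
    intro j
    refine integral_bilinear_fderiv_right_eq_neg_left_of_integrable
      (B := ContinuousLinearMap.id ℝ (F →L[ℝ] F)) ?_ ?_ ?_ ?_ ?_
    · exact cs1 _ f (((hkC j).continuous_fderiv (by norm_num)).clm_apply continuous_const) hfc hfs
    · exact cs1 _ _ (hkC j).continuous (hfdc _) (hfds _)
    · exact cs1 _ _ (hkC j).continuous hfc hfs
    · exact fun x _ => (hkC j).differentiable (by norm_num) x
    · exact fun x _ => hf.differentiable (by norm_num) x
  have e1 : ∀ z, h z • cmap c z (Dlin c (fderiv ℝ f z)) = ∑ j, k j z (fderiv ℝ f z (bv j)) := by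
    intro z
    simp [Dlin, k, R, Finset.smul_sum]
  have e2 : ∀ z, (n * ε ^ 2 * hreg ε (-(n:ℝ)/2 - 1) z) • f z
      = ∑ j, -((fderiv ℝ (k j) z (bv j)) (f z)) := by
    intro z
    simp_rw [hkd]
    rw [Finset.sum_neg_distrib, Finset.sum_sub_distrib, ← Finset.smul_sum]
    have e3 : ∑ j, z j • cmap c z (c j (f z)) = -(‖z‖ ^ 2) • f z := by
      rw [← cmap_sq hc, cmap_apply c z (f z), map_sum]; simp
    rw [e3]
    have e4 : h z = hreg ε (-(n:ℝ)/2 - 1) z * (‖z‖ ^ 2 + ε ^ 2) := by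
      simp only [hh, hreg]
      rw [Real.rpow_sub_one (by positivity)]
      field_simp
    rw [e4]
    simp only [Finset.sum_const, Finset.card_univ, Fintype.card_fin, ← Nat.cast_smul_eq_nsmul ℝ, smul_smul, ← sub_smul, ← neg_smul]
    congr 1
    ring
  have hng : ∀ j, Integrable fun z => -((fderiv ℝ (k j) z (bv j)) (f z)) := fun j =>
    (cs1 _ f (((hkC j).continuous_fderiv (by norm_num)).clm_apply continuous_const) hfc hfs).neg
  simp_rw [e1, e2]
  rw [integral_finsetSum _ (fun j _ => cs1 _ _ (hkC j).continuous (hfdc _) (hfds _)),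
    integral_finsetSum _ (fun j _ => hng j)]
  refine Finset.sum_congr rfl fun j _ => ?_
  rw [ibp j, integral_neg]

/-- fundamental kernel -/
def Kf (c : Fin n → F →L[ℝ] F) (z : Eu n) : F →L[ℝ] F := aw z • cmap c z

def c0 (n : ℕ) : ℝ := ∫ z : Eu n, (n * hreg 1 (-(n:ℝ)/2 - 1) z)

lemma hreg1_integrable : Integrable (fun z : Eu n => (n * hreg 1 (-(n:ℝ)/2 - 1) z)) := by
  have := integrable_rpow_neg_one_add_norm_sq (E := Eu n) (μ := volume) (r := n + 2) (by simp)
  refine (this.const_mul n).congr (Eventually.of_forall fun z => ?_)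
  simp only [hreg]
  congr 2 <;> ring

lemma c0_pos (hn : n ≠ 0) : 0 < c0 n := by
  unfold c0
  have hpos : ∀ z : Eu n, 0 < (n * hreg 1 (-(n:ℝ)/2 - 1) z) := fun z => by
    have : (0:ℝ) < n := by positivity
    unfold hreg; positivity
  rw [integral_pos_iff_support_of_nonneg (fun z => (hpos z).le) hreg1_integrable]
  have : Function.support (fun z : Eu n => (n * hreg 1 (-(n:ℝ)/2 - 1) z)) = Set.univ := by
    ext z; simpa using (hpos z).ne'
  rw [this]
  exact Measure.measure_univ_pos.2 (NeZero.ne _)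

lemma aw_rpow (x : Eu n) (hx : x ≠ 0) : aw x * ‖x‖ = ‖x‖ ^ (-((n:ℝ) - 1)) := by
  rw [aw_eq, neg_sub, Real.rpow_sub (norm_pos_iff.2 hx), Real.rpow_one, Real.rpow_natCast]
  rw [mul_comm]; rfl

lemma Kf_norm_le (c : Fin n → F →L[ℝ] F) (z : Eu n) (hz : z ≠ 0) :
    ‖Kf c z‖ ≤ ‖cmap c‖ * ‖z‖ ^ (-((n:ℝ) - 1)) := by
  unfold Kf
  rw [norm_smul, Real.norm_of_nonneg (aw_nonneg z), ← aw_rpow z hz]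
  have := (cmap c).le_opNorm z
  have h2 := aw_nonneg z
  calc _ ≤ aw z * (‖cmap c‖ * ‖z‖) := by gcongr
    _ = _ := by ring

lemma rpow_integrableOn (hn : n ≠ 0) {s : ℝ} (hs : s < n) (R : ℝ) :
    IntegrableOn (fun z : Eu n => ‖z‖ ^ (-s)) (ball 0 R) := by
  refine integrableOn_ball_of_norm_le_rpow (C := 1) (α := s) (by simp; omega) (by simpa using hs) ?_ ?_
  · refine Eventually.of_forall fun z => ?_
    rw [one_mul, Real.norm_of_nonneg (by positivity)]
  · have : Measurable fun z : Eu n => ‖z‖ ^ (-s) := by fun_prop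
    exact this.aestronglyMeasurable

lemma pompeiu [CompleteSpace F] (hn : n ≠ 0) {c : Fin n → F →L[ℝ] F} (hc : Cliff c)
    (f : Eu n → F) (hf : ContDiff ℝ 1 f) (hfs : HasCompactSupport f) :
    ∫ z, Kf c z (Dlin c (fderiv ℝ f z)) = c0 n • f 0 := by
  obtain ⟨C, hC⟩ := hfs.exists_bound_of_continuous hf.continuous
  set g : Eu n → F := fun z => Dlin c (fderiv ℝ f z) with hg
  have hgc : Continuous g := (Dlin_cont c).comp (hf.continuous_fderiv (by norm_num))
  have hgs : HasCompactSupport g := (hfs.fderiv ℝ).comp_left (g := Dlin c) (by simp [Dlin])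
  obtain ⟨C', hC'⟩ := hgs.exists_bound_of_continuous hgc
  have hC'0 : 0 ≤ C' := (norm_nonneg _).trans (hC' 0)
  obtain ⟨R, hR0, hR⟩ := hgs.isCompact.isBounded.exists_pos_norm_lt
  have hgR : ∀ z, z ∉ ball (0 : Eu n) R → g z = 0 := fun z hz =>
    image_eq_zero_of_notMem_tsupport (fun h => hz (by simpa using hR z h))
  -- sequence
  let ε : ℕ → ℝ := fun k => 1 / ((k:ℝ) + 1)
  have hε : ∀ k, 0 < ε k := fun k => by positivity
  have hεt : Tendsto ε atTop (𝓝 0) := tendsto_one_div_add_atTop_nhds_zero_nat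
  have L1 : Tendsto (fun k => ∫ z, hreg (ε k) (-(n:ℝ)/2) z • cmap c z (g z)) atTop
      (𝓝 (∫ z, Kf c z (g z))) := by
    refine tendsto_integral_of_dominated_convergence
      ((ball (0 : Eu n) R).indicator fun z => ‖z‖ ^ (-((n:ℝ) - 1)) * (‖cmap c‖ * C')) ?_ ?_ ?_ ?_
    · intro k
      refine Continuous.aestronglyMeasurable ?_
      have := (hreg_contDiff (n := n) (hε k) (-(n:ℝ)/2)).continuous
      fun_prop
    · rw [integrable_indicator_iff measurableSet_ball]
      exact (rpow_integrableOn hn (by linarith) R).mul_const _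
    · intro k
      refine Eventually.of_forall fun z => ?_
      by_cases hz : z ∈ ball (0 : Eu n) R
      · rw [Set.indicator_of_mem hz]
        by_cases hz0 : z = 0
        · subst hz0; simp only [map_zero, _root_.zero_apply, smul_zero, norm_zero]; positivity
        · rw [← aw_rpow z hz0, norm_smul]
          have h1 : ‖hreg (ε k) (-(n:ℝ)/2) z‖ ≤ aw z := by
            unfold hreg aw
            rw [Real.norm_of_nonneg (by positivity)]
            have : 0 < ‖z‖ := norm_pos_iff.2 hz0
            refine Real.rpow_le_rpow_of_nonpos (by positivity) ?_ ?_
            · have := hε k; linarith [sq_nonneg (ε k)]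
            · have : (0:ℝ) ≤ n := by positivity
              linarith
          have h2 : ‖cmap c z (g z)‖ ≤ ‖cmap c‖ * ‖z‖ * C' :=
            ((cmap c).le_opNorm₂ z (g z)).trans (by gcongr; exact hC' z)
          calc _ ≤ aw z * (‖cmap c‖ * ‖z‖ * C') := mul_le_mul h1 h2 (norm_nonneg _) (aw_nonneg z)
            _ = _ := by ring
      · rw [Set.indicator_of_notMem hz, hgR z hz]; simp
    · refine Eventually.of_forall fun z => ?_
      by_cases hz0 : z = 0
      · subst hz0; simp [Kf]
      · have : Tendsto (fun k => hreg (ε k) (-(n:ℝ)/2) z) atTop (𝓝 (aw z)) := by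
          unfold hreg aw
          have h1 : Tendsto (fun k => ‖z‖ ^ 2 + ε k ^ 2) atTop (𝓝 (‖z‖ ^ 2)) := by
            simpa using (hεt.pow 2).const_add (‖z‖ ^ 2)
          exact h1.rpow_const (Or.inl (by have := norm_pos_iff.2 hz0; positivity))
        exact this.smul_const _
  have L2 : Tendsto (fun k => ∫ z, (n * hreg 1 (-(n:ℝ)/2 - 1) z) • f (ε k • z)) atTop
      (𝓝 (∫ z : Eu n, (n * hreg 1 (-(n:ℝ)/2 - 1) z) • f 0)) := by
    refine tendsto_integral_of_dominated_convergence
      (fun z => (n * hreg 1 (-(n:ℝ)/2 - 1) z) * C) ?_ ?_ ?_ ?_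
    · intro k
      have := (hreg_contDiff (n := n) one_pos (-(n:ℝ)/2 - 1)).continuous
      have := hf.continuous
      exact Continuous.aestronglyMeasurable (by fun_prop)
    · exact hreg1_integrable.mul_const C
    · intro k
      refine Eventually.of_forall fun z => ?_
      rw [norm_smul, Real.norm_of_nonneg (by unfold hreg; positivity)]
      exact mul_le_mul_of_nonneg_left (hC _) (by unfold hreg; positivity)
    · refine Eventually.of_forall fun z => Tendsto.const_smul ?_ _
      have h1 : Tendsto (fun k => ε k • z) atTop (𝓝 0) := by simpa using hεt.smul_const z
      exact (hf.continuous.tendsto 0).comp h1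
  have e : ∀ k, ∫ z, hreg (ε k) (-(n:ℝ)/2) z • cmap c z (g z)
      = ∫ z, (n * hreg 1 (-(n:ℝ)/2 - 1) z) • f (ε k • z) := by
    intro k
    rw [reg_id hc (hε k) f hf hfs]
    have h1 := Measure.integral_comp_smul (volume : Measure (Eu n))
      (fun z => (n * (ε k) ^ 2 * hreg (ε k) (-(n:ℝ)/2 - 1) z) • f z) (ε k)
    have he := hε k
    have h2 : ∀ z : Eu n, n * (ε k) ^ 2 * hreg (ε k) (-(n:ℝ)/2 - 1) (ε k • z)
        = ((ε k) ^ n)⁻¹ * (n * hreg 1 (-(n:ℝ)/2 - 1) z) := by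
      intro z
      unfold hreg
      rw [norm_smul, Real.norm_of_nonneg he.le,
        show (ε k * ‖z‖) ^ 2 + ε k ^ 2 = (ε k) ^ 2 * (‖z‖ ^ 2 + 1 ^ 2) by ring,
        Real.mul_rpow (by positivity) (by positivity), Real.rpow_sub_one (by positivity)]
      have : ((ε k) ^ 2) ^ (-(n:ℝ)/2) = ((ε k) ^ n)⁻¹ := by
        rw [← Real.rpow_natCast (ε k) 2, ← Real.rpow_mul he.le, ← Real.rpow_natCast (ε k) n,
          ← Real.rpow_neg he.le]
        congr 1; push_cast; ring
      rw [this]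
      field_simp
    simp_rw [h2, mul_smul] at h1
    rw [integral_smul] at h1
    simp only [finrank_euclideanSpace, Fintype.card_fin] at h1
    rw [abs_of_nonneg (by positivity)] at h1
    have h3 := smul_right_injective F (by positivity : ((ε k) ^ n)⁻¹ ≠ 0) h1
    simp_rw [mul_smul]
    exact h3.symm
  simp_rw [e] at L1
  have := tendsto_nhds_unique L1 L2
  rw [this, integral_smul_const]
  rfl

end

section
variable {n : ℕ} {F : Type*} [NormedAddCommGroup F] [NormedSpace ℝ F]

lemma Kf_contDiffAt (c : Fin n → F →L[ℝ] F) {z : Eu n} (hz : z ≠ 0) {m : WithTop ℕ∞} :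
    ContDiffAt ℝ m (Kf c) z :=
  (contDiffAt_normsq_rpow _ hz).smul (cmap c).contDiff.contDiffAt

/-- the homogeneous weight of degree `1 - n` -/
def kp (z : Eu n) : ℝ := ‖z‖ ^ (-((n:ℝ) - 1))

lemma kp_nonneg (z : Eu n) : 0 ≤ kp z := by unfold kp; positivity

lemma Kf_scale (c : Fin n → F →L[ℝ] F) {t : ℝ} (ht : 0 < t) (z : Eu n) :
    Kf c (t • z) = t ^ (-((n:ℝ) - 1)) • Kf c z := by
  unfold Kf
  rw [aw_eq, aw_eq, map_smul, norm_smul, Real.norm_of_nonneg ht.le, smul_smul, smul_smul]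
  congr 1
  rw [neg_sub, Real.rpow_sub ht, Real.rpow_one, Real.rpow_natCast, mul_pow, mul_inv]
  field_simp

lemma Kf_norm_le' (c : Fin n → F →L[ℝ] F) (z : Eu n) : ‖Kf c z‖ ≤ ‖cmap c‖ * kp z := by
  by_cases hz : z = 0
  · subst hz
    simp only [Kf, map_zero, smul_zero, norm_zero]
    exact mul_nonneg (norm_nonneg (cmap c)) (kp_nonneg _)
  · exact Kf_norm_le c z hz

lemma Kf_deriv_bound (c : Fin n → F →L[ℝ] F) (i : ℕ) :
    ∃ C, 0 ≤ C ∧ ∀ z : Eu n, z ≠ 0 →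
      ‖iteratedFDeriv ℝ i (Kf c) z‖ ≤ C * (‖z‖⁻¹) ^ i * kp z := by
  have hcont : ContinuousOn (iteratedFDeriv ℝ i (Kf c)) (sphere (0 : Eu n) 1) := by
    intro z hz
    have hz0 : z ≠ 0 := by
      rintro rfl; simp at hz
    exact ((Kf_contDiffAt c hz0 (m := i)).iteratedFDeriv_right (m := 0) (by simp)).continuousAt.continuousWithinAt
  obtain ⟨C, hC⟩ := (isCompact_sphere (0 : Eu n) 1).exists_bound_of_continuousOn hcont
  refine ⟨max C 0, le_max_right _ _, fun z hz => ?_⟩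
  have hr : 0 < ‖z‖ := norm_pos_iff.2 hz
  set r := ‖z‖ with hrd
  let e : Eu n ≃L[ℝ] Eu n := ContinuousLinearEquiv.smulLeft (Units.mk0 (r⁻¹) (by positivity))
  have he : ∀ w, e w = r⁻¹ • w := fun w => rfl
  have hK : Kf c = (r ^ (-((n:ℝ) - 1))) • (Kf c ∘ e) := by
    funext w
    have := Kf_scale c hr (r⁻¹ • w)
    rw [smul_smul, mul_inv_cancel₀ hr.ne', one_smul] at this
    simpa [he] using this
  have hez : e z ≠ 0 := by rw [he]; exact smul_ne_zero (by positivity) hz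
  have hcd : ContDiffAt ℝ i (Kf c ∘ e) z :=
    (Kf_contDiffAt c hez).comp z e.contDiff.contDiffAt
  have h1 := e.iteratedFDerivWithin_comp_right (f := Kf c) (s := Set.univ) uniqueDiffOn_univ
    (x := z) (Set.mem_univ _) i
  rw [Set.preimage_univ, iteratedFDerivWithin_univ, iteratedFDerivWithin_univ] at h1
  have hen : ‖(e : Eu n →L[ℝ] Eu n)‖ ≤ r⁻¹ := by
    refine ContinuousLinearMap.opNorm_le_bound _ (by positivity) fun w => ?_
    change ‖r⁻¹ • w‖ ≤ _
    rw [norm_smul, Real.norm_of_nonneg (by positivity)]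
  have h2 : ‖iteratedFDeriv ℝ i (Kf c ∘ e) z‖ ≤ max C 0 * (r⁻¹) ^ i := by
    rw [h1]
    refine (ContinuousMultilinearMap.norm_compContinuousLinearMap_le _ _).trans ?_
    simp only [Finset.prod_const, Finset.card_univ, Fintype.card_fin]
    gcongr
    refine (hC _ ?_).trans (le_max_left _ _)
    rw [mem_sphere_zero_iff_norm, he, norm_smul, Real.norm_of_nonneg (by positivity), ← hrd]
    field_simp
  rw [hK, iteratedFDeriv_const_smul_apply hcd, norm_smul, Real.norm_of_nonneg (by positivity)]
  unfold kp
  rw [mul_comm]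
  gcongr

/-- Uniform Taylor estimate for the kernel. -/
lemma Kf_taylor [CompleteSpace F] (c : Fin n → F →L[ℝ] F) (hn : n ≠ 0) (j : ℕ) :
    ∃ C, 0 ≤ C ∧ ∀ x y : Eu n, y ≠ 0 →
      ‖Kf c (y - x) - ∑ i ∈ Finset.range (j + 1),
          (i.factorial : ℝ)⁻¹ • iteratedFDeriv ℝ i (Kf c) y (fun _ => -x)‖
        ≤ C * (‖x‖ * ‖y‖⁻¹) ^ (j + 1) * (kp y + kp (y - x)) := by
  choose B hB0 hB using Kf_deriv_bound c
  set S := ∑ i ∈ Finset.range (j + 1), B i with hS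
  have hS0 : 0 ≤ S := Finset.sum_nonneg fun i _ => hB0 i
  set C1 := B (j+1) * 2 ^ (j+1) * 2 ^ ((n:ℝ) - 1) with hC1
  have hC10 : 0 ≤ C1 := by have := hB0 (j+1); positivity
  set C2 := (‖cmap c‖ + S) * 2 ^ (j+1) with hC2
  have hC20 : 0 ≤ C2 := by positivity
  refine ⟨C1 + C2, by positivity, fun x y hy => ?_⟩
  have hr : 0 < ‖y‖ := norm_pos_iff.2 hy
  have hk1 := kp_nonneg y
  have hk2 := kp_nonneg (y - x)
  rcases le_or_gt ‖x‖ (‖y‖ / 2) with hxy | hxy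
  · have hseg : ∀ t ∈ Set.Icc (0:ℝ) 1, ‖y‖ / 2 ≤ ‖y + t • (-x)‖ := by
      intro t ht
      have h1 : ‖y‖ ≤ ‖y + t • (-x)‖ + ‖t • x‖ := by
        have := norm_add_le (y + t • (-x)) (t • x)
        simpa using this
      have h2 : ‖t • x‖ ≤ ‖x‖ := by
        rw [norm_smul, Real.norm_of_nonneg ht.1]
        exact mul_le_of_le_one_left (norm_nonneg _) ht.2
      linarith
    have hne : ∀ t ∈ Set.Icc (0:ℝ) 1, y + t • (-x) ≠ 0 := fun t ht => by
      have := hseg t ht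
      exact norm_pos_iff.1 (by linarith)
    have hT := map_add_eq_sum_add_integral_iteratedFDeriv (f := Kf c) (x := y) (y := -x) (n := j)
      fun t ht => Kf_contDiffAt c (hne t ht)
    rw [← sub_eq_add_neg] at hT
    rw [hT, add_sub_cancel_left, norm_smul]
    have hI : ‖∫ t in (0:ℝ)..1, (1 - t) ^ j • iteratedFDeriv ℝ (j + 1) (Kf c) (y + t • (-x)) (fun _ => -x)‖
        ≤ C1 * (‖x‖ * ‖y‖⁻¹) ^ (j + 1) * kp y * |1 - 0| := by
      refine intervalIntegral.norm_integral_le_of_norm_le_const fun t ht => ?_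
      rw [Set.uIoc_of_le zero_le_one] at ht
      have ht' : t ∈ Set.Icc (0:ℝ) 1 := ⟨ht.1.le, ht.2⟩
      have hs := hseg t ht'
      rw [norm_smul]
      have a1 : ‖(1 - t) ^ j‖ ≤ 1 := by
        rw [norm_pow]
        refine pow_le_one₀ (norm_nonneg _) ?_
        rw [Real.norm_of_nonneg (by linarith [ht.2])]; linarith [ht.1]
      have a2 : ‖iteratedFDeriv ℝ (j + 1) (Kf c) (y + t • (-x)) (fun _ => -x)‖
          ≤ ‖iteratedFDeriv ℝ (j + 1) (Kf c) (y + t • (-x))‖ * ‖x‖ ^ (j+1) := by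
        refine (ContinuousMultilinearMap.le_opNorm _ _).trans ?_
        simp
      have a3 := hB (j+1) _ (hne t ht')
      have a4 : ‖y + t • (-x)‖⁻¹ ≤ 2 * ‖y‖⁻¹ := by
        rw [show 2 * ‖y‖⁻¹ = (‖y‖/2)⁻¹ by field_simp]
        exact inv_anti₀ (by positivity) hs
      have a5 : kp (y + t • (-x)) ≤ 2 ^ ((n:ℝ) - 1) * kp y := by
        unfold kp
        have hn1 : (1:ℝ) ≤ n := by exact_mod_cast Nat.one_le_iff_ne_zero.2 hn
        refine (Real.rpow_le_rpow_of_nonpos (by positivity) hs (by linarith)).trans (le_of_eq ?_)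
        rw [div_eq_mul_inv, Real.mul_rpow (by positivity) (by positivity), mul_comm, Real.inv_rpow (by norm_num), Real.rpow_neg (by norm_num), inv_inv]
      have a6 : ‖iteratedFDeriv ℝ (j + 1) (Kf c) (y + t • (-x))‖
          ≤ B (j+1) * (2 * ‖y‖⁻¹) ^ (j+1) * (2 ^ ((n:ℝ) - 1) * kp y) := by
        refine a3.trans ?_
        have := hB0 (j+1)
        have := kp_nonneg (y + t • (-x))
        gcongr
      calc _ ≤ 1 * ((B (j+1) * (2 * ‖y‖⁻¹) ^ (j+1) * (2 ^ ((n:ℝ) - 1) * kp y)) * ‖x‖ ^ (j+1)) := by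
            refine mul_le_mul a1 (a2.trans ?_) (norm_nonneg _) (by norm_num)
            gcongr
        _ = _ := by rw [hC1]; simp only [mul_pow]; ring
    have hfac : ‖((j.factorial : ℝ))⁻¹‖ ≤ 1 := by
      rw [Real.norm_of_nonneg (by positivity)]
      exact inv_le_one_of_one_le₀ (by exact_mod_cast j.factorial_pos)
    calc _ ≤ 1 * (C1 * (‖x‖ * ‖y‖⁻¹) ^ (j + 1) * kp y * |1 - 0|) :=
          mul_le_mul hfac hI (norm_nonneg _) (by norm_num)
      _ = C1 * (‖x‖ * ‖y‖⁻¹) ^ (j + 1) * kp y := by norm_num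
      _ ≤ _ := by gcongr <;> linarith
  · have hq : 1 ≤ 2 * (‖x‖ * ‖y‖⁻¹) := by
      rw [← mul_assoc, ← div_eq_mul_inv, le_div_iff₀ hr]; linarith
    set q := ‖x‖ * ‖y‖⁻¹ with hqd
    have hq0 : 0 ≤ q := by positivity
    have hq2 : (1:ℝ) ≤ 2 ^ (j+1) * q ^ (j+1) := by
      rw [← mul_pow]; exact one_le_pow₀ hq
    have t1 : ‖Kf c (y - x)‖ ≤ ‖cmap c‖ * (2 ^ (j+1) * q ^ (j+1)) * kp (y - x) := by
      refine (Kf_norm_le' c _).trans ?_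
      gcongr
      exact le_mul_of_one_le_right (norm_nonneg (cmap c)) hq2
    have t2 : ∀ i ∈ Finset.range (j+1), ‖(i.factorial : ℝ)⁻¹ • iteratedFDeriv ℝ i (Kf c) y (fun _ => -x)‖
        ≤ B i * ((2 ^ (j+1) * q ^ (j+1)) * kp y) := by
      intro i hi
      have hi' : i ≤ j + 1 := (Finset.mem_range.1 hi).le
      have hfac : ‖((i.factorial : ℝ))⁻¹‖ ≤ 1 := by
        rw [Real.norm_of_nonneg (by positivity)]
        exact inv_le_one_of_one_le₀ (by exact_mod_cast i.factorial_pos)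
      have a2 : ‖iteratedFDeriv ℝ i (Kf c) y (fun _ => -x)‖
          ≤ ‖iteratedFDeriv ℝ i (Kf c) y‖ * ‖x‖ ^ i := by
        refine (ContinuousMultilinearMap.le_opNorm _ _).trans ?_
        simp
      have a3 := hB i y hy
      have a4 : q ^ i ≤ 2 ^ (j+1) * q ^ (j+1) := by
        rw [← mul_pow]
        calc q ^ i ≤ (2 * q) ^ i := by gcongr; linarith
          _ ≤ (2 * q) ^ (j+1) := pow_le_pow_right₀ hq hi'
      rw [norm_smul]
      calc _ ≤ 1 * ((B i * (‖y‖⁻¹) ^ i * kp y) * ‖x‖ ^ i) := by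
            refine mul_le_mul hfac (a2.trans ?_) (norm_nonneg _) (by norm_num)
            gcongr
        _ = B i * (q ^ i * kp y) := by rw [hqd, mul_pow]; ring
        _ ≤ _ := by have := hB0 i; gcongr
    calc _ ≤ ‖cmap c‖ * (2 ^ (j+1) * q ^ (j+1)) * kp (y - x) + S * ((2 ^ (j+1) * q ^ (j+1)) * kp y) := by
          refine (norm_sub_le _ _).trans (add_le_add t1 ((norm_sum_le_of_le _ t2).trans ?_))
          rw [← Finset.sum_mul]
      _ ≤ (‖cmap c‖ + S) * (2 ^ (j+1) * q ^ (j+1)) * kp (y - x) + (‖cmap c‖ + S) * ((2 ^ (j+1) * q ^ (j+1)) * kp y) := by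
          gcongr
          · linarith
          · linarith [norm_nonneg (cmap c)]
      _ = C2 * q ^ (j+1) * (kp y + kp (y - x)) := by rw [hC2]; ring
      _ ≤ _ := by gcongr; linarith

end

section
variable {n : ℕ} {F : Type*} [NormedAddCommGroup F] [NormedSpace ℝ F]

lemma ae_ne_zero (hn : n ≠ 0) : ∀ᵐ y : Eu n, y ≠ 0 := by
  haveI : Nonempty (Fin n) := ⟨⟨0, Nat.pos_of_ne_zero hn⟩⟩
  haveI : Nontrivial (Eu n) := inferInstance
  exact Measure.ae_ne volume 0

lemma aesm_of_contAt (hn : n ≠ 0) {G : Type*} [NormedAddCommGroup G] {f : Eu n → G}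
    (hf : ∀ y ≠ 0, ContinuousAt f y) : AEStronglyMeasurable f volume := by
  have h1 : ContinuousOn f {0}ᶜ := fun y hy => (hf y hy).continuousWithinAt
  have h2 := h1.aestronglyMeasurable (μ := volume) (measurableSet_singleton (0 : Eu n)).compl
  rwa [Measure.restrict_eq_self_of_ae_mem (s := {0}ᶜ) (ae_ne_zero hn)] at h2

lemma kp_split {δ : ℝ} (hδ1 : δ ≤ 1) (hn : n ≠ 0) {y z : Eu n} (hy : y ≠ 0) (hz : z ≠ 0) :
    ‖y‖ ^ (δ - 1) * kp z ≤ ‖y‖ ^ (-((n:ℝ) - δ)) + ‖z‖ ^ (-((n:ℝ) - δ)) := by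
  have hy' := norm_pos_iff.2 hy
  have hz' := norm_pos_iff.2 hz
  have hn1 : (1:ℝ) ≤ n := by exact_mod_cast Nat.one_le_iff_ne_zero.2 hn
  unfold kp
  rcases le_total ‖y‖ ‖z‖ with h | h
  · calc _ ≤ ‖y‖ ^ (δ - 1) * ‖y‖ ^ (-((n:ℝ) - 1)) := by
          gcongr ?_ * ?_
          exact Real.rpow_le_rpow_of_nonpos hy' h (by linarith)
      _ = ‖y‖ ^ (-((n:ℝ) - δ)) := by rw [← Real.rpow_add hy']; congr 1; ring
      _ ≤ _ := le_add_of_nonneg_right (by positivity)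
  · calc _ ≤ ‖z‖ ^ (δ - 1) * ‖z‖ ^ (-((n:ℝ) - 1)) := by
          gcongr ?_ * ?_
          exact Real.rpow_le_rpow_of_nonpos hz' h (by linarith)
      _ = ‖z‖ ^ (-((n:ℝ) - δ)) := by rw [← Real.rpow_add hz']; congr 1; ring
      _ ≤ _ := le_add_of_nonneg_left (by positivity)

set_option maxHeartbeats 1600000 in
lemma expansion [CompleteSpace F] (hn : n ≠ 0) {c : Fin n → F →L[ℝ] F} (hc : Cliff c)
    (φ : Eu n → F) (hφ : ContDiff ℝ 1 φ) (hφs : HasCompactSupport φ) (j : ℕ) {δ : ℝ}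
    (hδ0 : 0 < δ) (hδ1 : δ ≤ 1) {G : ℝ} (hG : 0 ≤ G)
    (hg : ∀ y, ‖Dlin c (fderiv ℝ φ y)‖ ≤ G * ‖y‖ ^ j * ‖y‖ ^ δ) :
    ∃ (M : (i : ℕ) → ContinuousMultilinearMap ℝ (fun _ : Fin i => Eu n) F) (C : ℝ),
      ∀ x, ‖x‖ ≤ 1 →
        ‖φ x - ∑ i ∈ Finset.range (j + 1), M i (fun _ => x)‖ ≤ C * ‖x‖ ^ (j + 1) := by
  set g : Eu n → F := fun z => Dlin c (fderiv ℝ φ z) with hgd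
  have hgc : Continuous g := (Dlin_cont c).comp (hφ.continuous_fderiv (by norm_num))
  have hgs : HasCompactSupport g := (hφs.fderiv ℝ).comp_left (g := Dlin c) (by simp [Dlin])
  obtain ⟨C', hC'⟩ := hgs.exists_bound_of_continuous hgc
  have hC'0 : 0 ≤ C' := (norm_nonneg _).trans (hC' 0)
  obtain ⟨R, hR0, hR⟩ := hgs.isCompact.isBounded.exists_pos_norm_lt
  have hgR : ∀ z, R ≤ ‖z‖ → g z = 0 := fun z hz =>
    image_eq_zero_of_notMem_tsupport (fun h => absurd (hR z h) (by linarith))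
  have hn1 : (1:ℝ) ≤ n := by exact_mod_cast Nat.one_le_iff_ne_zero.2 hn
  -- the dominating weight
  let W : ℝ → Eu n → ℝ := fun s => (ball (0 : Eu n) (R + 1)).indicator fun z => ‖z‖ ^ (-s)
  have hW : ∀ s < (n:ℝ), Integrable (W s) := fun s hs => by
    rw [integrable_indicator_iff measurableSet_ball]; exact rpow_integrableOn hn hs _
  have hWin : ∀ s z, ‖z‖ < R + 1 → W s z = ‖z‖ ^ (-s) := fun s z hz =>
    Set.indicator_of_mem (by simpa using hz) _
  have hW0 : ∀ s z, 0 ≤ W s z := fun s z => Set.indicator_nonneg (fun z _ => by positivity) z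
  -- the coefficients
  let T : (i : ℕ) → Eu n → ContinuousMultilinearMap ℝ (fun _ : Fin i => Eu n) F := fun i y =>
    ContinuousLinearMap.compContinuousMultilinearMapL ℝ (fun _ : Fin i => Eu n) (F →L[ℝ] F) F
      (ContinuousLinearMap.apply ℝ F (g y)) (iteratedFDeriv ℝ i (Kf c) y)
  have hTapp : ∀ i y m, T i y m = iteratedFDeriv ℝ i (Kf c) y m (g y) := fun i y m => rfl
  have hTn : ∀ i y, ‖T i y‖ ≤ ‖iteratedFDeriv ℝ i (Kf c) y‖ * ‖g y‖ := by
    intro i y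
    refine ContinuousMultilinearMap.opNorm_le_bound (by positivity) fun m => ?_
    rw [hTapp]
    calc _ ≤ ‖iteratedFDeriv ℝ i (Kf c) y m‖ * ‖g y‖ := ContinuousLinearMap.le_opNorm _ _
      _ ≤ (‖iteratedFDeriv ℝ i (Kf c) y‖ * ∏ k, ‖m k‖) * ‖g y‖ := by
          gcongr; exact ContinuousMultilinearMap.le_opNorm _ _
      _ = _ := by ring
  have hTc : ∀ i, ∀ y ≠ 0, ContinuousAt (T i) y := by
    intro i y hy
    have h1 : ContinuousAt (iteratedFDeriv ℝ i (Kf c)) y :=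
      ((Kf_contDiffAt c hy (m := i)).iteratedFDeriv_right (m := 0) (by simp)).continuousAt
    have h2 : Continuous fun y => ContinuousLinearMap.compContinuousMultilinearMapL ℝ
        (fun _ : Fin i => Eu n) (F →L[ℝ] F) F (ContinuousLinearMap.apply ℝ F (g y)) :=
      (ContinuousLinearMap.continuous _).comp ((ContinuousLinearMap.continuous _).comp hgc)
    exact h2.continuousAt.clm_apply h1
  choose B hB0 hB using Kf_deriv_bound c
  have hTi : ∀ i ∈ Finset.range (j + 1), Integrable (T i) := by
    intro i hi
    have hij : i ≤ j := by have := Finset.mem_range.1 hi; omega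
    refine Integrable.mono' ((hW ((n:ℝ) - 1 - δ) (by linarith)).const_mul (B i * G * R ^ (j - i)))
      (aesm_of_contAt hn (hTc i)) ?_
    filter_upwards [ae_ne_zero hn] with y hy
    have hy' := norm_pos_iff.2 hy
    rcases le_or_gt R ‖y‖ with hyR | hyR
    · refine (hTn i y).trans ?_
      rw [hgR y hyR, norm_zero, mul_zero]
      have := hW0 ((n:ℝ) - 1 - δ) y
      have := hB0 i
      positivity
    · rw [hWin _ y (by linarith)]
      have hk := kp_nonneg y
      calc ‖T i y‖ ≤ (B i * (‖y‖⁻¹) ^ i * kp y) * (G * ‖y‖ ^ j * ‖y‖ ^ δ) := by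
            refine (hTn i y).trans ?_
            have := hB0 i
            exact mul_le_mul (hB i y hy) (hg y) (norm_nonneg _) (by positivity)
        _ = B i * G * ((‖y‖⁻¹) ^ i * ‖y‖ ^ j) * (kp y * ‖y‖ ^ δ) := by ring
        _ = B i * G * ‖y‖ ^ (j - i) * ‖y‖ ^ (-((n:ℝ) - 1 - δ)) := by
            congr 1
            · rw [← Nat.sub_add_cancel hij, pow_add, Nat.sub_add_cancel hij, inv_pow]
              field_simp
            · unfold kp; rw [← Real.rpow_add hy']; congr 1; ring
        _ ≤ _ := by
            have := hB0 i
            gcongr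
  have hc0 := c0_pos hn
  refine ⟨fun i => (c0 n)⁻¹ • (((i.factorial : ℝ)⁻¹ * (-1) ^ i) • ∫ y, T i y), ?_⟩
  obtain ⟨C, hC0, hC⟩ := Kf_taylor c hn j
  set I := ∫ y, W ((n:ℝ) - δ) y with hI
  refine ⟨(c0 n)⁻¹ * (C * G * (3 * I)), fun x hx => ?_⟩
  -- representation
  have hKi : Integrable fun y => Kf c (y - x) (g y) := by
    have h1 : Integrable fun z => Kf c z (g (x + z)) := by
      refine Integrable.mono' ((hW ((n:ℝ) - 1) (by linarith)).const_mul (‖cmap c‖ * C')) ?_ ?_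
      · refine aesm_of_contAt hn fun y hy => ?_
        exact ((Kf_contDiffAt c hy (m := 0)).continuousAt).clm_apply
          (hgc.comp (continuous_const.add continuous_id)).continuousAt
      · refine Eventually.of_forall fun z => ?_
        rcases le_or_gt (R + 1) ‖z‖ with hz | hz
        · have : R ≤ ‖x + z‖ := by
            have := norm_sub_le (x + z) x
            rw [add_sub_cancel_left] at this; linarith
          rw [hgR _ this, map_zero, norm_zero]
          exact mul_nonneg (mul_nonneg (norm_nonneg (cmap c)) hC'0) (hW0 _ _)
        · rw [hWin _ _ hz]
          calc _ ≤ ‖Kf c z‖ * ‖g (x + z)‖ := ContinuousLinearMap.le_opNorm _ _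
            _ ≤ (‖cmap c‖ * kp z) * C' := by
                have := kp_nonneg z
                exact mul_le_mul (Kf_norm_le' c z) (hC' _) (norm_nonneg _)
                  (mul_nonneg (norm_nonneg (cmap c)) this)
            _ = _ := by unfold kp; ring
    have h2 := h1.comp_sub_right x
    simpa using h2
  have hrep : ∫ y, Kf c (y - x) (g y) = c0 n • φ x := by
    have h1 := pompeiu hn hc (fun z => φ (x + z)) (hφ.comp (contDiff_const.add contDiff_id))
      (hφs.comp_homeomorph (Homeomorph.addLeft x))
    rw [add_zero] at h1
    rw [← h1]
    rw [← integral_sub_right_eq_self (fun z => Kf c z (Dlin c (fderiv ℝ (fun z => φ (x + z)) z))) x]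
    refine integral_congr_ae (Eventually.of_forall fun y => ?_)
    simp only [hgd]
    rw [fderiv_comp_add_left]
    simp
  have hterm : ∀ i ∈ Finset.range (j + 1),
      (((c0 n)⁻¹ • (((i.factorial : ℝ)⁻¹ * (-1) ^ i) • ∫ y, T i y) :
        ContinuousMultilinearMap ℝ (fun _ : Fin i => Eu n) F) fun _ => x)
      = (c0 n)⁻¹ • ∫ y, ((i.factorial : ℝ)⁻¹ • iteratedFDeriv ℝ i (Kf c) y (fun _ => -x)) (g y) := by
    intro i hi
    rw [ContinuousMultilinearMap.smul_apply, ContinuousMultilinearMap.smul_apply,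
      ContinuousMultilinearMap.integral_apply (hTi i hi), ← integral_smul]
    congr 2
    funext y
    have h1 := (iteratedFDeriv ℝ i (Kf c) y).map_smul_univ (fun _ => (-1:ℝ)) (fun _ => x)
    simp only [neg_smul, one_smul, Finset.prod_const, Finset.card_univ, Fintype.card_fin] at h1
    rw [h1, hTapp, smul_smul, _root_.smul_apply]
  have hIntg : ∀ i ∈ Finset.range (j + 1), Integrable fun y =>
      ((i.factorial : ℝ)⁻¹ • iteratedFDeriv ℝ i (Kf c) y (fun _ => -x)) (g y) := by
    intro i hi
    have h1 := ((ContinuousMultilinearMap.apply ℝ (fun _ : Fin i => Eu n) F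
      (fun _ => -x)).integrable_comp (hTi i hi)).smul ((i.factorial : ℝ)⁻¹)
    exact h1
  have heq : φ x - ∑ i ∈ Finset.range (j + 1),
      (((c0 n)⁻¹ • (((i.factorial : ℝ)⁻¹ * (-1) ^ i) • ∫ y, T i y) :
        ContinuousMultilinearMap ℝ (fun _ : Fin i => Eu n) F) fun _ => x)
      = (c0 n)⁻¹ • ∫ y, (Kf c (y - x) - ∑ i ∈ Finset.range (j + 1),
          (i.factorial : ℝ)⁻¹ • iteratedFDeriv ℝ i (Kf c) y (fun _ => -x)) (g y) := by
    rw [Finset.sum_congr rfl hterm, ← Finset.smul_sum, ← integral_finsetSum _ hIntg]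
    have h1 : φ x = (c0 n)⁻¹ • ∫ y, Kf c (y - x) (g y) := by
      rw [hrep, smul_smul, inv_mul_cancel₀ hc0.ne', one_smul]
    rw [h1, ← smul_sub, ← integral_sub hKi (integrable_finset_sum _ hIntg)]
    congr 2
    funext y
    simp
  rw [heq, norm_smul, Real.norm_of_nonneg (by positivity), mul_assoc]
  refine mul_le_mul_of_nonneg_left ?_ (by positivity)
  have hWi := hW ((n:ℝ) - δ) (by linarith)
  have hdom : Integrable fun y => (C * G * ‖x‖ ^ (j + 1)) * (2 * W ((n:ℝ) - δ) y + W ((n:ℝ) - δ) (y - x)) :=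
    ((hWi.const_mul 2).add (hWi.comp_sub_right x)).const_mul _
  refine (norm_integral_le_of_norm_le hdom ?_).trans (le_of_eq ?_)
  · have hnx : ∀ᵐ y : Eu n, y - x ≠ 0 := by
      haveI : Nonempty (Fin n) := ⟨⟨0, Nat.pos_of_ne_zero hn⟩⟩
      haveI : Nontrivial (Eu n) := inferInstance
      filter_upwards [Measure.ae_ne (volume : Measure (Eu n)) x] with y hy
      exact sub_ne_zero.2 hy
    filter_upwards [ae_ne_zero hn, hnx] with y hy hyx
    have hy' := norm_pos_iff.2 hy
    rcases le_or_gt R ‖y‖ with hyR | hyR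
    · rw [hgR y hyR, map_zero, norm_zero]
      have := hW0 ((n:ℝ) - δ) y
      have := hW0 ((n:ℝ) - δ) (y - x)
      positivity
    · rw [hWin _ y (by linarith), hWin _ (y - x) ((norm_sub_le _ _).trans_lt (by linarith))]
      have k1 := kp_nonneg y
      have k2 := kp_nonneg (y - x)
      have s1 : ‖y‖ ^ (δ - 1) * kp y = ‖y‖ ^ (-((n:ℝ) - δ)) := by
        unfold kp; rw [← Real.rpow_add hy']; congr 1; ring
      have s2 := kp_split hδ1 hn hy hyx
      calc _ ≤ (C * (‖x‖ * ‖y‖⁻¹) ^ (j + 1) * (kp y + kp (y - x))) * (G * ‖y‖ ^ j * ‖y‖ ^ δ) :=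
            (ContinuousLinearMap.le_opNorm _ _).trans
              (mul_le_mul (hC x y hy) (hg y) (norm_nonneg _) (by positivity))
        _ = (C * G * ‖x‖ ^ (j + 1)) * (‖y‖ ^ (δ - 1) * kp y + ‖y‖ ^ (δ - 1) * kp (y - x)) := by
            rw [Real.rpow_sub_one hy'.ne', mul_pow, inv_pow, pow_succ ‖y‖ j]
            field_simp
        _ ≤ _ := by
            rw [s1]
            gcongr ?_ * ?_
            linarith
  · have e1 : ∫ y, (2 * W ((n:ℝ) - δ) y + W ((n:ℝ) - δ) (y - x)) = 3 * I := by
      rw [integral_add (hWi.const_mul 2) (hWi.comp_sub_right x), integral_const_mul,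
        integral_sub_right_eq_self (W ((n:ℝ) - δ)) x]
      ring
    rw [integral_const_mul, e1]
    ring

end

section
variable {n : ℕ} {F : Type*} [NormedAddCommGroup F] [NormedSpace ℝ F]

lemma poly_small (j : ℕ) : ∀ (a : ℕ → F) (C : ℝ),
    (∀ᶠ t in 𝓝[>] (0:ℝ), ‖∑ i ∈ Finset.range j, t ^ i • a i‖ ≤ C * t ^ j) → ∀ i < j, a i = 0 := by
  induction j with
  | zero => intro a C _ i hi; omega
  | succ j ih =>
    intro a C h
    have h1 : Tendsto (fun t : ℝ => ∑ i ∈ Finset.range (j+1), t ^ i • a i) (𝓝[>] 0)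
        (𝓝 (∑ i ∈ Finset.range (j+1), (0:ℝ) ^ i • a i)) := by
      have : Continuous (fun t : ℝ => ∑ i ∈ Finset.range (j+1), t ^ i • a i) := by fun_prop
      exact (this.tendsto 0).mono_left nhdsWithin_le_nhds
    have h2 : Tendsto (fun t : ℝ => C * t ^ (j+1)) (𝓝[>] 0) (𝓝 (C * 0 ^ (j+1))) := by
      have : Continuous (fun t : ℝ => C * t ^ (j+1)) := by fun_prop
      exact (this.tendsto 0).mono_left nhdsWithin_le_nhds
    have h3 : ‖∑ i ∈ Finset.range (j+1), (0:ℝ) ^ i • a i‖ ≤ C * 0 ^ (j+1) :=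
      le_of_tendsto_of_tendsto h1.norm h2 h
    have ha0 : a 0 = 0 := by
      rw [Finset.sum_range_succ'] at h3
      simpa using h3
    have h4 := ih (fun i => a (i+1)) C ?_
    · intro i hi
      rcases i with _ | i
      · exact ha0
      · exact h4 i (by omega)
    · filter_upwards [h, self_mem_nhdsWithin] with t ht ht0
      have ht0' : 0 < t := ht0
      rw [Finset.sum_range_succ', ha0, smul_zero, add_zero] at ht
      have : ∑ i ∈ Finset.range j, t ^ (i+1) • a (i+1) = t • ∑ i ∈ Finset.range j, t ^ i • a (i+1) := by
        rw [Finset.smul_sum]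
        exact Finset.sum_congr rfl fun i _ => by rw [smul_smul, pow_succ, mul_comm]
      rw [this, norm_smul, Real.norm_of_nonneg ht0'.le, pow_succ] at ht
      have : t * ‖∑ i ∈ Finset.range j, t ^ i • a (i+1)‖ ≤ t * (C * t ^ j) := by linarith
      exact le_of_mul_le_mul_left this ht0'

lemma leading [CompleteSpace F] (hn : n ≠ 0) {c : Fin n → F →L[ℝ] F} (hc : Cliff c)
    {ψ : Eu n → F} {p : ℝ} (hp : 0 < p)
    (hψ : ContDiffOn ℝ 1 ψ (ball 0 1))
    (hD : ∀ y ∈ ball (0 : Eu n) 1, ‖Dlin c (fderiv ℝ ψ y)‖ ≤ ‖ψ y‖ ^ p * ‖ψ y‖)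
    {x : Eu n} (hx : x ∈ ball (0 : Eu n) 1) {j : ℕ} (hj : 1 ≤ j) {M : ℝ}
    (hO : ∀ᶠ z in 𝓝 (0 : Eu n), ‖ψ (x + z)‖ ≤ M * ‖z‖ ^ j) :
    ∃ (P : ContinuousMultilinearMap ℝ (fun _ : Fin j => Eu n) F) (C : ℝ),
      ∀ᶠ z in 𝓝 (0 : Eu n), ‖ψ (x + z) - P (fun _ => z)‖ ≤ C * ‖z‖ ^ (j + 1) := by
  rw [mem_ball_zero_iff] at hx
  set R := 1 - ‖x‖ with hR
  have hR0 : 0 < R := by linarith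
  have hsub : ball x R ⊆ ball (0 : Eu n) 1 := by
    intro y hy
    rw [mem_ball, dist_eq_norm] at hy
    rw [mem_ball_zero_iff]
    have := norm_add_le x (y - x)
    rw [add_sub_cancel] at this
    linarith
  obtain ⟨u, hu, hus, hu1, hu2⟩ := cutoff_ext ψ x R hR0 (hψ.mono hsub)
  set g : Eu n → F := fun z => Dlin c (fderiv ℝ u z) with hgd
  have hgc : Continuous g := (Dlin_cont c).comp (hu.continuous_fderiv (by norm_num))
  have hgs : HasCompactSupport g := (hus.fderiv ℝ).comp_left (g := Dlin c) (by simp [Dlin])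
  obtain ⟨C', hC'⟩ := hgs.exists_bound_of_continuous hgc
  have hC'0 : 0 ≤ C' := (norm_nonneg _).trans (hC' 0)
  obtain ⟨ε0, hε0, hε⟩ := Metric.eventually_nhds_iff.1 hO
  set ε := min ε0 (min 1 (R/2)) with hεd
  have hεpos : 0 < ε := by positivity
  have hM : 0 ≤ max M 0 := le_max_right _ _
  set δ := min p 1 with hδ
  have hδ0 : 0 < δ := by positivity
  have hub : ∀ z, ‖z‖ < ε → ‖ψ (x + z)‖ ≤ max M 0 * ‖z‖ ^ j := fun z hz => by
    refine (hε (by rw [dist_zero_right]; exact hz.trans_le (min_le_left _ _))).trans ?_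
    gcongr; exact le_max_left _ _
  set G := max M 0 ^ p * max M 0 + C' / (ε ^ j * ε ^ δ) with hG
  have hG0 : 0 ≤ G := by positivity
  have hgb : ∀ y, ‖g y‖ ≤ G * ‖y‖ ^ j * ‖y‖ ^ δ := by
    intro y
    rcases lt_or_ge ‖y‖ ε with hy | hy
    · have hy1 : ‖y‖ ≤ 1 := hy.le.trans ((min_le_right _ _).trans (min_le_left _ _))
      have hyR : ‖y‖ < R / 2 := hy.trans_le ((min_le_right _ _).trans (min_le_right _ _))
      have h1 : g y = Dlin c (fderiv ℝ ψ (x + y)) := by simp only [hgd]; rw [hu2 y hyR]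
      have hmem : x + y ∈ ball (0 : Eu n) 1 := hsub (by
        rw [mem_ball, dist_eq_norm, add_sub_cancel_left]; linarith)
      have h2 := hub y hy
      rw [h1]
      by_cases hy0 : y = 0
      · have hx0 : ψ (x + y) = 0 := by
          subst hy0
          rw [norm_zero, zero_pow (by omega), mul_zero] at h2
          exact norm_le_zero_iff.1 h2
        refine (hD _ hmem).trans ?_
        rw [hx0, norm_zero, mul_zero]; positivity
      have hy' := norm_pos_iff.2 hy0
      calc _ ≤ ‖ψ (x + y)‖ ^ p * ‖ψ (x + y)‖ := hD _ hmem
        _ ≤ (max M 0 * ‖y‖ ^ j) ^ p * (max M 0 * ‖y‖ ^ j) := by gcongr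
        _ = (max M 0 ^ p * max M 0) * ‖y‖ ^ j * (‖y‖ ^ j) ^ p := by
            rw [Real.mul_rpow hM (by positivity)]; ring
        _ ≤ G * ‖y‖ ^ j * ‖y‖ ^ δ := by
            have h3 : (‖y‖ ^ j) ^ p ≤ ‖y‖ ^ δ := by
              calc (‖y‖ ^ j) ^ p ≤ ‖y‖ ^ p := by
                    gcongr; exact pow_le_of_le_one hy'.le hy1 (by omega)
                _ ≤ ‖y‖ ^ δ := Real.rpow_le_rpow_of_exponent_ge hy' hy1 (min_le_left _ _)
            gcongr
            rw [hG]; exact le_add_of_nonneg_right (by positivity)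
    · calc _ ≤ C' := hC' y
        _ = C' / (ε ^ j * ε ^ δ) * ε ^ j * ε ^ δ := by field_simp
        _ ≤ _ := by
            gcongr
            rw [hG]; exact le_add_of_nonneg_left (by positivity)
  obtain ⟨A, C, hA⟩ := expansion hn hc u hu hus j hδ0 (min_le_right _ _) hG0 hgb
  have hC0 : 0 ≤ max C 0 := le_max_right _ _
  have hAe : ∀ z, ‖z‖ < ε → ‖ψ (x + z) - ∑ i ∈ Finset.range (j + 1), A i (fun _ => z)‖ ≤ max C 0 * ‖z‖ ^ (j + 1) := by
    intro z hz
    rw [← hu1 z (hz.trans_le ((min_le_right _ _).trans (min_le_right _ _)))]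
    refine (hA z (hz.le.trans ((min_le_right _ _).trans (min_le_left _ _)))).trans ?_
    gcongr; exact le_max_left _ _
  have hAscale : ∀ i (t : ℝ) z, A i (fun _ => t • z) = t ^ i • A i (fun _ => z) := by
    intro i t z
    have := (A i).map_smul_univ (fun _ => t) (fun _ => z)
    simpa using this
  have hlow : ∀ z, ∀ i < j, A i (fun _ => z) = 0 := by
    intro z
    refine poly_small j (fun i => A i (fun _ => z)) ((max C 0 + max M 0) * (‖z‖ + 1) ^ (j+1)
      + ‖A j (fun _ => z)‖) ?_
    have hev : ∀ᶠ t in 𝓝[>] (0:ℝ), t < 1 ∧ t * ‖z‖ < ε := by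
      have e1 : ∀ᶠ t in 𝓝 (0:ℝ), t < 1 := eventually_lt_nhds one_pos
      have e2 : ∀ᶠ t in 𝓝 (0:ℝ), t * ‖z‖ < ε := by
        have : Continuous fun t : ℝ => t * ‖z‖ := by fun_prop
        exact this.tendsto' 0 0 (by simp) |>.eventually (eventually_lt_nhds hεpos)
      exact (e1.and e2).filter_mono nhdsWithin_le_nhds
    filter_upwards [hev, self_mem_nhdsWithin] with t ht ht0
    have ht0' : 0 < t := ht0
    have hnz : ‖t • z‖ = t * ‖z‖ := by rw [norm_smul, Real.norm_of_nonneg ht0'.le]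
    have b1 := hAe (t • z) (by rw [hnz]; exact ht.2)
    have b2 := hub (t • z) (by rw [hnz]; exact ht.2)
    rw [Finset.sum_range_succ] at b1
    simp_rw [hAscale] at b1
    set S := ∑ i ∈ Finset.range j, t ^ i • A i (fun _ => z) with hS
    rw [hnz, mul_pow] at b1 b2
    have b3 : ‖S‖ ≤ ‖ψ (x + t • z) - (S + t ^ j • A j fun _ => z)‖ + ‖ψ (x + t • z)‖
        + ‖t ^ j • A j fun _ => z‖ := by
      have : S = ψ (x + t • z) - (ψ (x + t • z) - (S + t ^ j • A j fun _ => z)) - t ^ j • A j fun _ => z := by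
        abel
      calc ‖S‖ = _ := congrArg norm this
        _ ≤ _ := by
          refine (norm_sub_le _ _).trans ?_
          have := norm_sub_le (ψ (x + t • z)) (ψ (x + t • z) - (S + t ^ j • A j fun _ => z))
          linarith
    rw [norm_smul, Real.norm_of_nonneg (by positivity)] at b3
    have q1 : ‖z‖ ^ (j+1) ≤ (‖z‖ + 1) ^ (j+1) := by gcongr; linarith
    have q2 : ‖z‖ ^ j ≤ (‖z‖ + 1) ^ (j+1) :=
      calc ‖z‖ ^ j ≤ (‖z‖ + 1) ^ j := by gcongr; linarith
        _ ≤ _ := pow_le_pow_right₀ (by linarith [norm_nonneg z]) (by omega)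
    have q3 : t ^ (j+1) ≤ t ^ j := pow_le_pow_of_le_one ht0'.le ht.1.le (by omega)
    have r1 : max C 0 * (t ^ (j+1) * ‖z‖ ^ (j+1)) ≤ max C 0 * (t ^ j * (‖z‖ + 1) ^ (j+1)) := by gcongr
    have r2 : max M 0 * (t ^ j * ‖z‖ ^ j) ≤ max M 0 * (t ^ j * (‖z‖ + 1) ^ (j+1)) := by gcongr
    nlinarith
  refine ⟨A j, max C 0, ?_⟩
  rw [Metric.eventually_nhds_iff]
  refine ⟨ε, hεpos, fun z hz => ?_⟩
  rw [dist_zero_right] at hz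
  have := hAe z hz
  rw [Finset.sum_range_succ, Finset.sum_eq_zero (fun i hi => hlow z i (Finset.mem_range.1 hi)), zero_add] at this
  exact this

lemma exists_leading [CompleteSpace F] (hn : n ≠ 0) {c : Fin n → F →L[ℝ] F} (hc : Cliff c)
    {b : F →L[ℝ] F →L[ℝ] ℝ} (hb : GoodForm c b) {ψ : Eu n → F} {p : ℝ} (hp : 0 < p)
    (hψ : ContDiffOn ℝ 1 ψ (ball 0 1))
    (hD : ∀ y ∈ ball (0 : Eu n) 1, ‖Dlin c (fderiv ℝ ψ y)‖ ≤ ‖ψ y‖ ^ p * ‖ψ y‖)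
    (hne : ∃ x ∈ ball (0 : Eu n) 1, ψ x ≠ 0) {x : Eu n} (hx : x ∈ ball (0 : Eu n) 1)
    (hx0 : ψ x = 0) :
    ∃ (k : ℕ) (P : ContinuousMultilinearMap ℝ (fun _ : Fin k => Eu n) F) (C : ℝ), 1 ≤ k ∧
      (∃ z, P (fun _ => z) ≠ 0) ∧
      ∀ᶠ z in 𝓝 (0 : Eu n), ‖ψ (x + z) - P (fun _ => z)‖ ≤ C * ‖z‖ ^ (k + 1) := by
  classical
  have hfin := finite_order hn hc hb hp hψ hD hne x hx
  unfold InfOrd at hfin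
  push Not at hfin
  have hfin' : ∃ k : ℕ, ¬ ∃ M : ℝ, ∀ᶠ z in 𝓝 (0 : Eu n), ‖ψ (x + z)‖ ≤ M * ‖z‖ ^ k := by
    obtain ⟨k, hk⟩ := hfin
    refine ⟨k, fun ⟨M, hM⟩ => ?_⟩
    have := hk M
    exact this (by simpa using hM)
  have hdiff : DifferentiableAt ℝ ψ x :=
    (hψ.contDiffAt (isOpen_ball.mem_nhds hx)).differentiableAt (by norm_num)
  have h1 : ∃ M : ℝ, ∀ᶠ z in 𝓝 (0 : Eu n), ‖ψ (x + z)‖ ≤ M * ‖z‖ ^ 1 := by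
    have := hdiff.hasFDerivAt.isBigO_sub
    obtain ⟨M, hM⟩ := this.bound
    refine ⟨M, ?_⟩
    have ht : Tendsto (fun z : Eu n => x + z) (𝓝 0) (𝓝 x) := by
      have : Continuous fun z : Eu n => x + z := by fun_prop
      exact this.tendsto' 0 x (by simp)
    filter_upwards [ht.eventually hM] with z hz
    simpa [hx0] using hz
  have h0 : ∃ M : ℝ, ∀ᶠ z in 𝓝 (0 : Eu n), ‖ψ (x + z)‖ ≤ M * ‖z‖ ^ 0 := by
    obtain ⟨M, hM⟩ := h1
    refine ⟨|M|, ?_⟩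
    have : ∀ᶠ z in 𝓝 (0 : Eu n), ‖z‖ < 1 :=
      (continuous_norm.tendsto' (0 : Eu n) 0 (by simp)).eventually (eventually_lt_nhds one_pos)
    filter_upwards [hM, this] with z hz hz1
    calc _ ≤ M * ‖z‖ ^ 1 := hz
      _ ≤ |M| * 1 := by
          rw [pow_one]; exact mul_le_mul (le_abs_self _) hz1.le (norm_nonneg _) (abs_nonneg _)
      _ = _ := by simp
  set k0 := Nat.find hfin' with hk0
  have hk0s := Nat.find_spec hfin'
  rw [← hk0] at hk0s
  have hk2 : 2 ≤ k0 := by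
    by_contra hlt
    push Not at hlt
    interval_cases k0
    · exact hk0s h0
    · exact hk0s h1
  obtain ⟨k, hk⟩ : ∃ k, k0 = k + 1 := ⟨k0 - 1, by omega⟩
  have hkO := Nat.find_min hfin' (m := k) (by omega)
  push Not at hkO
  obtain ⟨M, hM⟩ := hkO
  obtain ⟨P, C, hP⟩ := leading hn hc hp hψ hD hx (j := k) (by omega) (M := M) (by simpa using hM)
  refine ⟨k, P, C, by omega, ?_, hP⟩
  by_contra hcon
  push Not at hcon
  refine hk0s ⟨C, ?_⟩
  rw [hk]
  filter_upwards [hP] with z hz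
  simpa [hcon z] using hz

end

section
variable {n : ℕ} {F : Type*} [NormedAddCommGroup F] [NormedSpace ℝ F]

lemma diagP_smul {k : ℕ} (P : ContinuousMultilinearMap ℝ (fun _ : Fin k => Eu n) F) (t : ℝ) (z : Eu n) :
    P (fun _ => t • z) = t ^ k • P (fun _ => z) := by
  have := P.map_smul_univ (fun _ => t) (fun _ => z)
  simpa using this

lemma diag_expand {k : ℕ} (P : ContinuousMultilinearMap ℝ (fun _ : Fin k => Eu n) F) (u z : Eu n) :
    ∃ a : ℕ → F, a k = P (fun _ => z) ∧
      ∀ t : ℝ, P (fun _ => u + t • z) = ∑ i ∈ Finset.range (k + 1), t ^ i • a i := by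
  classical
  let b : Finset (Fin k) → F := fun s => P (s.piecewise (fun _ => z) (fun _ => u))
  refine ⟨fun i => ∑ s ∈ Finset.univ.filter (fun s : Finset (Fin k) => s.card = i), b s, ?_, fun t => ?_⟩
  · have : Finset.univ.filter (fun s : Finset (Fin k) => s.card = k) = {Finset.univ} := by
      ext s
      simp only [Finset.mem_filter, Finset.mem_univ, true_and, Finset.mem_singleton]
      constructor
      · intro h; exact Finset.card_eq_iff_eq_univ s |>.1 (by simpa using h)
      · rintro rfl; simp
    simp only [this, Finset.sum_singleton, b, Finset.piecewise_univ]
  · have h1 := P.map_add_univ (fun _ => t • z) (fun _ => u)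
    have h2 : (fun _ : Fin k => u + t • z) = (fun _ => t • z) + (fun _ => u) := by
      funext i; simp [add_comm]
    rw [h2, h1]
    have h3 : ∀ s : Finset (Fin k), P (s.piecewise (fun _ => t • z) (fun _ => u)) = t ^ s.card • b s := by
      intro s
      have h4 := P.map_piecewise_smul (fun _ => t) (s.piecewise (fun _ => z) (fun _ => u)) s
      rw [Finset.prod_const] at h4
      rw [← h4]
      congr 1
      funext i
      by_cases hi : i ∈ s <;> simp [hi]
    simp_rw [h3, Finset.smul_sum]
    rw [← Finset.sum_fiberwise_of_maps_to (t := Finset.range (k+1)) (g := fun s : Finset (Fin k) => s.card)]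
    · refine Finset.sum_congr rfl fun i _ => Finset.sum_congr rfl fun s hs => ?_
      rw [(Finset.mem_filter.1 hs).2]
    · intro s _
      have := Finset.card_le_univ s
      simp at this
      simp; omega

lemma diag_invariant {k : ℕ} (P : ContinuousMultilinearMap ℝ (fun _ : Fin k => Eu n) F) (u : Eu n)
    (M : ℝ) (h : ∀ z, ‖P (fun _ => u + z)‖ ≤ M * ‖z‖ ^ k) (z : Eu n) :
    P (fun _ => u + z) = P (fun _ => z) := by
  obtain ⟨a, hak, ha⟩ := diag_expand P u z
  have h0 : ∀ i < k, a i = 0 := by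
    refine poly_small k a (M * ‖z‖ ^ k + ‖a k‖) ?_
    filter_upwards [self_mem_nhdsWithin] with t ht
    have ht0 : 0 < t := ht
    have h1 := h (t • z)
    rw [ha t, Finset.sum_range_succ, norm_smul, Real.norm_of_nonneg ht0.le, mul_pow] at h1
    have h2 := norm_sub_le (∑ i ∈ Finset.range k, t ^ i • a i + t ^ k • a k) (t ^ k • a k)
    rw [add_sub_cancel_right, norm_smul, Real.norm_of_nonneg (by positivity)] at h2
    nlinarith
  have h1 := ha 1
  rw [Finset.sum_range_succ, Finset.sum_eq_zero (fun i hi => by rw [h0 i (Finset.mem_range.1 hi), smul_zero])] at h1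
  simpa [hak] using h1

/-- the invariance subspace of a homogeneous polynomial -/
def invSub {k : ℕ} (P : ContinuousMultilinearMap ℝ (fun _ : Fin k => Eu n) F) :
    Submodule ℝ (Eu n) where
  carrier := {v | ∀ z, P (fun _ => v + z) = P (fun _ => z)}
  zero_mem' := fun z => by simp
  add_mem' := by
    intro v w hv hw z
    rw [add_assoc, hv, hw]
  smul_mem' := by
    intro t v hv z
    by_cases ht : t = 0
    · simp [ht]
    · have h1 : t • v + z = t • (v + t⁻¹ • z) := by
        rw [smul_add, smul_smul, mul_inv_cancel₀ ht, one_smul]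
      rw [h1, diagP_smul, hv, ← diagP_smul, smul_smul, mul_inv_cancel₀ ht, one_smul]

lemma invSub_large {k : ℕ} (P : ContinuousMultilinearMap ℝ (fun _ : Fin k => Eu n) F) (hk : 1 ≤ k)
    (hP : ∃ z, P (fun _ => z) ≠ 0) (hn : 2 ≤ n) (hd : n - 2 < Module.finrank ℝ (invSub P)) :
    ∃ (v : Eu n) (w : F), v ≠ 0 ∧ w ≠ 0 ∧ ∀ z, P (fun _ => z) = (inner ℝ v z) ^ k • w := by
  have h1 := (invSub P).finrank_add_finrank_orthogonal
  rw [finrank_euclideanSpace, Fintype.card_fin] at h1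
  obtain ⟨v, hv⟩ := (finrank_le_one_iff (K := ℝ) (V := (invSub P)ᗮ)).1 (by omega)
  have h2 : ∀ z : Eu n, ∃ t : ℝ, P (fun _ => z) = t ^ k • P (fun _ => (v : Eu n)) ∧
      inner ℝ (v : Eu n) z = t * ‖(v : Eu n)‖ ^ 2 := by
    intro z
    obtain ⟨l, hl, m, hm, hz⟩ := (invSub P).exists_add_mem_mem_orthogonal z
    obtain ⟨t, ht⟩ := hv ⟨m, hm⟩
    have ht' : t • (v : Eu n) = m := congrArg Subtype.val ht
    refine ⟨t, ?_, ?_⟩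
    · rw [hz, hl m, ← ht', diagP_smul]
    · rw [hz, inner_add_right, ← ht', inner_smul_right, real_inner_self_eq_norm_sq,
        (Submodule.mem_orthogonal' _ _).1 v.2 l hl, zero_add]
  have hPv : P (fun _ => (v : Eu n)) ≠ 0 := by
    intro h0
    obtain ⟨z, hz⟩ := hP
    obtain ⟨t, ht, _⟩ := h2 z
    rw [h0, smul_zero] at ht
    exact hz ht
  have hv0 : (v : Eu n) ≠ 0 := by
    intro h0
    apply hPv
    have := diagP_smul P 0 (v : Eu n)
    rw [zero_smul, zero_pow (by omega), zero_smul] at this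
    rw [h0]; exact this
  have hvn : 0 < ‖(v : Eu n)‖ := norm_pos_iff.2 hv0
  refine ⟨v, ((‖(v : Eu n)‖ ^ 2)⁻¹) ^ k • P (fun _ => (v : Eu n)), hv0,
    smul_ne_zero (by positivity) hPv, fun z => ?_⟩
  obtain ⟨t, ht, ht2⟩ := h2 z
  rw [ht, ht2, smul_smul, ← mul_pow, mul_assoc, mul_inv_cancel₀ (by positivity), mul_one]

lemma weak_ibp (c : Fin n → F →L[ℝ] F) (U : Eu n → F) (hU : ContDiff ℝ 1 U) (η : Eu n → ℝ)
    (hη : ContDiff ℝ 1 η) (hηs : HasCompactSupport η) :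
    ∫ z, η z • Dlin c (fderiv ℝ U z) = - ∫ z, ∑ j, (fderiv ℝ η z (bv j)) • c j (U z) := by
  have hUc := hU.continuous
  have hηc := hη.continuous
  have hfU : ∀ v, Continuous fun z => fderiv ℝ U z v := fun v =>
    (hU.continuous_fderiv (by norm_num)).clm_apply continuous_const
  have hfη : ∀ v, Continuous fun z => fderiv ℝ η z v := fun v =>
    (hη.continuous_fderiv (by norm_num)).clm_apply continuous_const
  have cs : ∀ (q : Eu n → ℝ) (W : Eu n → F), Continuous q → HasCompactSupport q → Continuous W →
      Integrable fun z => q z • W z := fun q W hq hqs hW =>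
    (hq.smul hW).integrable_of_hasCompactSupport hqs.smul_right
  have hfηs : ∀ v, HasCompactSupport fun z => fderiv ℝ η z v := fun v => hηs.fderiv_apply ℝ v
  have i1 : ∀ j, Integrable fun z => η z • c j (fderiv ℝ U z (bv j)) := fun j =>
    cs _ _ hηc hηs ((c j).continuous.comp (hfU _))
  have i2 : ∀ j, Integrable fun z => (fderiv ℝ η z (bv j)) • c j (U z) := fun j =>
    cs _ _ (hfη _) (hfηs _) ((c j).continuous.comp hUc)
  have ibp : ∀ j, ∫ z, η z • c j (fderiv ℝ U z (bv j)) = - ∫ z, (fderiv ℝ η z (bv j)) • c j (U z) := by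
    intro j
    have hcU : ContDiff ℝ 1 fun z => c j (U z) := (c j).contDiff.comp hU
    have hfd : ∀ z, fderiv ℝ (fun z => c j (U z)) z (bv j) = c j (fderiv ℝ U z (bv j)) := by
      intro z
      have := ((c j).hasFDerivAt.comp z (hU.differentiable (by norm_num) z).hasFDerivAt).fderiv
      have h2 : fderiv ℝ (fun z => c j (U z)) z = _ := this
      rw [h2]; rfl
    have := integral_bilinear_fderiv_right_eq_neg_left_of_integrable (μ := (volume : Measure (Eu n)))
      (B := ContinuousLinearMap.lsmul ℝ ℝ) (f := η) (g := fun z => c j (U z)) (v := bv j) ?_ ?_ ?_ ?_ ?_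
    · simpa [hfd] using this
    · exact i2 j
    · simpa [hfd] using i1 j
    · exact cs _ _ hηc hηs ((c j).continuous.comp hUc)
    · exact fun x _ => hη.differentiable (by norm_num) x
    · exact fun x _ => hcU.differentiable (by norm_num) x
  rw [integral_finsetSum _ (fun j _ => i2 j), ← Finset.sum_neg_distrib]
  simp_rw [← ibp]
  rw [← integral_finsetSum _ (fun j _ => i1 j)]
  simp [Dlin, Finset.smul_sum]

end

section
variable {n : ℕ} {F : Type*} [NormedAddCommGroup F] [NormedSpace ℝ F]

lemma Dlin_smulRight (c : Fin n → F →L[ℝ] F) (v : Eu n) (w : F) :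
    Dlin c ((innerSL ℝ v).smulRight w) = cmap c v w := by
  rw [cmap_apply, Dlin]
  refine Finset.sum_congr rfl fun j _ => ?_
  simp [inner_bv]

lemma Dlin_sub (c : Fin n → F →L[ℝ] F) (L L2 : Eu n →L[ℝ] F) :
    Dlin c (L - L2) = Dlin c L - Dlin c L2 := by
  simp [Dlin, Finset.sum_sub_distrib]

lemma Dlin_smul (c : Fin n → F →L[ℝ] F) (t : ℝ) (L : Eu n →L[ℝ] F) :
    Dlin c (t • L) = t • Dlin c L := by
  simp [Dlin, Finset.smul_sum]

lemma blowup [CompleteSpace F] (c : Fin n → F →L[ℝ] F) (u : Eu n → F) (hu : ContDiff ℝ 1 u) (k : ℕ) (hk : 1 ≤ k)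
    (v : Eu n) (w : F) (hv : v ≠ 0) (C A δ : ℝ) (hδ : 0 < δ) (hC : 0 ≤ C) (hA : 0 ≤ A)
    (h1 : ∀ z, ‖z‖ < δ → ‖u z - (inner ℝ v z) ^ k • w‖ ≤ C * ‖z‖ ^ (k + 1))
    (h2 : ∀ z, ‖z‖ < δ → ‖Dlin c (fderiv ℝ u z)‖ ≤ A * ‖z‖ ^ k) : cmap c v w = 0 := by
  have hvn : 0 < ‖v‖ := norm_pos_iff.2 hv
  let η : ContDiffBump v := ⟨‖v‖ / 4, ‖v‖ / 2, by positivity, by linarith⟩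
  have hη : ContDiff ℝ 1 (η : Eu n → ℝ) := η.contDiff
  have hηs : HasCompactSupport (η : Eu n → ℝ) := η.hasCompactSupport
  have hts : tsupport (η : Eu n → ℝ) = closedBall v (‖v‖ / 2) := η.tsupport_eq
  set L : ℝ := 2 * ‖v‖ with hL
  have hL0 : 0 < L := by positivity
  have hzL : ∀ z ∈ tsupport (η : Eu n → ℝ), ‖z‖ ≤ L := by
    intro z hz
    rw [hts, mem_closedBall, dist_eq_norm] at hz
    have := norm_add_le (z - v) v
    rw [sub_add_cancel] at this
    linarith
  have hin : ∀ z ∈ tsupport (η : Eu n → ℝ), 0 < inner ℝ v z := by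
    intro z hz
    rw [hts, mem_closedBall, dist_eq_norm] at hz
    have e : inner ℝ v z = ‖v‖ ^ 2 + inner ℝ v (z - v) := by
      rw [inner_sub_right, real_inner_self_eq_norm_sq]; ring
    have h3 := (abs_le.1 (abs_real_inner_le_norm v (z - v))).1
    have h4 : ‖v‖ * ‖z - v‖ ≤ ‖v‖ * (‖v‖ / 2) := by gcongr
    rw [e]; nlinarith
  let q : Eu n → ℝ := fun z => η z * (k * (inner ℝ v z) ^ (k - 1))
  have hinc : Continuous fun z : Eu n => (inner ℝ v z : ℝ) := by fun_prop
  have hqc : Continuous q := η.continuous.mul (continuous_const.mul (hinc.pow _))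
  have hqs : HasCompactSupport q := hηs.mul_right
  have hqi : Integrable q := hqc.integrable_of_hasCompactSupport hqs
  have hI : 0 < ∫ z, q z := by
    refine hqc.integral_pos_of_hasCompactSupport_nonneg_nonzero hqs ?_ (x := v) ?_
    · intro z
      by_cases hz : z ∈ tsupport (η : Eu n → ℝ)
      · have := hin z hz
        exact mul_nonneg η.nonneg (by positivity)
      · simp [q, image_eq_zero_of_notMem_tsupport hz]
    · have e : η v = 1 := η.one_of_mem_closedBall (mem_closedBall_self (by simp only [η]; positivity))
      simp only [q, e, one_mul, real_inner_self_eq_norm_sq]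
      have : (k:ℝ) ≠ 0 := by exact_mod_cast (by omega : k ≠ 0)
      positivity
  have hfη : ∀ v, Continuous fun z => fderiv ℝ η z v := fun v =>
    (hη.continuous_fderiv (by norm_num)).clm_apply continuous_const
  let m1 : Eu n → ℝ := fun z => η z * (A * L ^ k)
  let m2 : Eu n → ℝ := fun z => ∑ j, |fderiv ℝ η z (bv j)| * (‖c j‖ * (C * L ^ (k+1)))
  have hm1 : Integrable m1 := (η.continuous.mul continuous_const).integrable_of_hasCompactSupport hηs.mul_right
  have hm2 : Integrable m2 := by
    refine integrable_finsetSum _ fun j _ => ?_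
    refine ((hfη _).abs.mul continuous_const).integrable_of_hasCompactSupport ?_
    refine HasCompactSupport.mul_right ?_
    have := (hηs.fderiv_apply ℝ (bv j : Eu n))
    exact this.comp_left (g := fun t : ℝ => |t|) abs_zero
  have key : ∀ r : ℝ, 0 < r → r < δ / (L + 1) →
      (∫ z, q z) * ‖cmap c v w‖ ≤ r * ((∫ z, m1 z) + ∫ z, m2 z) := by
    intro r hr hrδ
    have hsm : ∀ z ∈ tsupport (η : Eu n → ℝ), ‖r • z‖ < δ := by
      intro z hz
      rw [norm_smul, Real.norm_of_nonneg hr.le]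
      have := hzL z hz
      rw [lt_div_iff₀ (by positivity)] at hrδ
      nlinarith
    have hrz : ∀ z ∈ tsupport (η : Eu n → ℝ), ‖r • z‖ ≤ r * L := by
      intro z hz
      rw [norm_smul, Real.norm_of_nonneg hr.le]
      exact mul_le_mul_of_nonneg_left (hzL z hz) hr.le
    let U : Eu n → F := fun z => u (r • z) - r ^ k • ((inner ℝ v z) ^ k • w)
    have hd : ∀ z, HasFDerivAt U (r • fderiv ℝ u (r • z) - (r ^ k * (k * (inner ℝ v z) ^ (k - 1))) •
        (innerSL ℝ v).smulRight w) z := by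
      intro z
      have a1 : HasFDerivAt (fun z => u (r • z)) (r • fderiv ℝ u (r • z)) z := by
        have := ((hu.differentiable (by norm_num) (r • z)).hasFDerivAt).comp z
          ((hasFDerivAt_id z).const_smul r)
        refine HasFDerivAt.congr_fderiv this ?_
        ext y; simp
      have a2 : HasFDerivAt (fun z : Eu n => (inner ℝ v z : ℝ) ^ k) ((k * (inner ℝ v z) ^ (k - 1) : ℝ) • innerSL ℝ v) z := by
        have := ((innerSL ℝ v).hasFDerivAt (x := z)).pow k
        refine HasFDerivAt.congr_fderiv this ?_
        ext y; simp
      have a3 := (a2.smul_const w).const_smul (r ^ k)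
      refine HasFDerivAt.congr_fderiv (a1.sub a3) ?_
      ext y; simp [smul_smul, mul_assoc]
    have hU : ContDiff ℝ 1 U := by
      refine (hu.comp (contDiff_const_smul r)).sub (contDiff_const.smul (ContDiff.smul ?_ contDiff_const))
      exact ((innerSL ℝ v).contDiff).pow k
    have hb := weak_ibp c U hU η hη hηs
    have e1 : ∀ z, η z • Dlin c (fderiv ℝ U z) =
        η z • (r • Dlin c (fderiv ℝ u (r • z))) - q z • (r ^ k • cmap c v w) := by
      intro z
      rw [(hd z).fderiv, Dlin_sub, Dlin_smul, Dlin_smul, Dlin_smulRight, smul_sub]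
      simp only [q, smul_smul]
      congr 2; ring
    have i1 : Integrable fun z => η z • (r • Dlin c (fderiv ℝ u (r • z))) := by
      refine Continuous.integrable_of_hasCompactSupport ?_ hηs.smul_right
      refine η.continuous.smul (Continuous.const_smul ?_ r)
      have hfu := (hu.continuous_fderiv (by norm_num)).comp (continuous_const_smul r)
      refine continuous_finsetSum _ fun j _ => (c j).continuous.comp ?_
      exact hfu.clm_apply continuous_const
    simp_rw [e1] at hb
    rw [integral_sub i1 (hqi.smul_const _), integral_smul_const] at hb
    have hb' : (∫ z, q z) • (r ^ k • cmap c v w) = (∫ z, η z • (r • Dlin c (fderiv ℝ u (r • z)))) +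
        ∫ z, ∑ j, (fderiv ℝ η z (bv j)) • c j (U z) := by
      have := eq_add_of_sub_eq hb
      rw [this]; abel
    have n1 : ‖∫ z, η z • (r • Dlin c (fderiv ℝ u (r • z)))‖ ≤ ∫ z, r ^ (k+1) * m1 z := by
      refine norm_integral_le_of_norm_le (hm1.const_mul _) (Eventually.of_forall fun z => ?_)
      by_cases hz : z ∈ tsupport (η : Eu n → ℝ)
      · rw [norm_smul, norm_smul, Real.norm_of_nonneg hr.le, Real.norm_of_nonneg η.nonneg]
        have a1 := h2 _ (hsm z hz)
        have a2 : A * ‖r • z‖ ^ k ≤ A * (r * L) ^ k := by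
          gcongr; exact hrz z hz
        have : η z * (r * ‖Dlin c (fderiv ℝ u (r • z))‖) ≤ η z * (r * (A * (r * L) ^ k)) := by
          have := η.nonneg (x := z)
          gcongr; exact a1.trans a2
        refine this.trans (le_of_eq ?_)
        simp only [m1]; ring
      · simp [m1, image_eq_zero_of_notMem_tsupport hz]
    have n2 : ‖∫ z, ∑ j, (fderiv ℝ η z (bv j)) • c j (U z)‖ ≤ ∫ z, r ^ (k+1) * m2 z := by
      refine norm_integral_le_of_norm_le (hm2.const_mul _) (Eventually.of_forall fun z => ?_)
      by_cases hz : z ∈ tsupport (η : Eu n → ℝ)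
      · have hUz : ‖U z‖ ≤ C * (r * L) ^ (k+1) := by
          have a1 := h1 _ (hsm z hz)
          rw [inner_smul_right, mul_pow, mul_smul] at a1
          refine a1.trans ?_
          gcongr; exact hrz z hz
        refine (norm_sum_le _ _).trans ?_
        simp only [m2]
        rw [Finset.mul_sum]
        refine Finset.sum_le_sum fun j _ => ?_
        rw [norm_smul, Real.norm_eq_abs]
        have : ‖c j (U z)‖ ≤ ‖c j‖ * (C * (r * L) ^ (k+1)) := ((c j).le_opNorm _).trans (by gcongr)
        calc _ ≤ |fderiv ℝ η z (bv j)| * (‖c j‖ * (C * (r * L) ^ (k+1))) := by gcongr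
          _ = _ := by ring
      · have hf : fderiv ℝ η z = 0 := by
          by_contra h0
          exact hz (support_fderiv_subset ℝ h0)
        simp [m2, hf]
    have n3 : (∫ z, q z) * (r ^ k * ‖cmap c v w‖) ≤ r ^ (k+1) * ((∫ z, m1 z) + ∫ z, m2 z) := by
      have := norm_add_le (∫ z, η z • (r • Dlin c (fderiv ℝ u (r • z))))
        (∫ z, ∑ j, (fderiv ℝ η z (bv j)) • c j (U z))
      rw [← hb', norm_smul, norm_smul, Real.norm_of_nonneg hI.le, Real.norm_of_nonneg (by positivity)] at this
      rw [integral_const_mul] at n1 n2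
      linarith
    have hrk : 0 < r ^ k := by positivity
    refine le_of_mul_le_mul_left ?_ hrk
    calc _ = (∫ z, q z) * (r ^ k * ‖cmap c v w‖) := by ring
      _ ≤ _ := n3
      _ = _ := by ring
  have lim : (∫ z, q z) * ‖cmap c v w‖ ≤ 0 := by
    have t1 : Tendsto (fun r : ℝ => r * ((∫ z, m1 z) + ∫ z, m2 z)) (𝓝[>] 0) (𝓝 0) := by
      have : Tendsto (fun r : ℝ => r * ((∫ z, m1 z) + ∫ z, m2 z)) (𝓝 0) (𝓝 (0 * ((∫ z, m1 z) + ∫ z, m2 z))) :=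
        (continuous_id.mul continuous_const).tendsto 0
      rw [zero_mul] at this
      exact this.mono_left nhdsWithin_le_nhds
    refine ge_of_tendsto t1 ?_
    filter_upwards [Ioo_mem_nhdsGT (show (0:ℝ) < δ / (L + 1) by positivity)] with r hr
    exact key r hr.1 hr.2
  have := norm_nonneg (cmap c v w)
  have : ‖cmap c v w‖ = 0 := by nlinarith
  exact norm_eq_zero.1 this

end

section

lemma dimH_le_of_local {E G : Type*} [NormedAddCommGroup E] [NormedSpace ℝ E] [FiniteDimensional ℝ E]
    [NormedAddCommGroup G] [NormedSpace ℝ G] [FiniteDimensional ℝ G] (Z : Set E)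
    (h : ∀ x ∈ Z, ∃ T : E →L[ℝ] G, ∃ κ > 0, ∃ ρ > 0, ∀ y ∈ Z, ‖y - x‖ < ρ →
      κ * ‖y - x‖ ≤ ‖T (y - x)‖) : dimH Z ≤ Module.finrank ℝ G := by
  haveI : FiniteDimensional ℝ (E →L[ℝ] G) := inferInstance
  haveI : ProperSpace (E →L[ℝ] G) := FiniteDimensional.proper ℝ _
  haveI : ProperSpace E := FiniteDimensional.proper ℝ _
  haveI : Nonempty (E →L[ℝ] G) := ⟨0⟩
  haveI : Nonempty E := ⟨0⟩
  let Q : ℕ → (E →L[ℝ] G) := TopologicalSpace.denseSeq _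
  let e : ℕ → E := TopologicalSpace.denseSeq _
  let A : ℕ → ℕ → ℕ → Set E := fun i m l => {x | x ∈ Z ∧ x ∈ ball (e l) (1 / (2 * (m + 1 : ℝ))) ∧
    ∀ y ∈ Z, ‖y - x‖ < 1 / (m + 1 : ℝ) → 1 / (m + 1 : ℝ) * ‖y - x‖ ≤ ‖Q i (y - x)‖}
  have hA : ∀ i m l, dimH (A i m l) ≤ Module.finrank ℝ G := by
    intro i m l
    have hm : (0:ℝ) < m + 1 := by positivity
    let f : A i m l → G := fun x => Q i x.1
    have hf : AntilipschitzWith (m + 1 : ℝ≥0) f := by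
      refine AntilipschitzWith.of_le_mul_dist fun x y => ?_
      have hx := x.2; have hy := y.2
      have hd : ‖x.1 - y.1‖ < 1 / (m + 1 : ℝ) := by
        rw [← dist_eq_norm]
        have a1 := mem_ball.1 hx.2.1
        have a2 := mem_ball'.1 hy.2.1
        have := dist_triangle x.1 (e l) y.1
        have e2 : 1 / (2 * (m + 1 : ℝ)) + 1 / (2 * (m + 1 : ℝ)) = 1 / (m + 1 : ℝ) := by field_simp; norm_num
        linarith
      have h1 := hy.2.2 x.1 hx.1 hd
      rw [Subtype.dist_eq, dist_eq_norm, dist_eq_norm]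
      simp only [f]
      rw [← map_sub]
      rw [one_div, inv_mul_le_iff₀ hm] at h1
      simpa using h1
    have h1 := hf.le_dimH_image Set.univ
    have h2 := (isometry_subtype_coe (s := A i m l)).dimH_image Set.univ
    rw [Set.image_univ, Subtype.range_coe] at h2
    rw [h2]
    refine h1.trans ((dimH_mono (Set.subset_univ _)).trans (le_of_eq ?_))
    exact Real.dimH_univ_eq_finrank G
  have hsub : Z ⊆ ⋃ i, ⋃ m, ⋃ l, A i m l := by
    intro x hx
    obtain ⟨T, κ, hκ, ρ, hρ, hT⟩ := h x hx
    obtain ⟨m, hm⟩ := exists_nat_one_div_lt (show 0 < min (κ / 2) ρ by positivity)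
    have hm0 : (0:ℝ) < 1 / (m + 1 : ℝ) := by positivity
    obtain ⟨i, hi⟩ := (TopologicalSpace.denseRange_denseSeq (E →L[ℝ] G)).exists_dist_lt T hm0
    obtain ⟨l, hl⟩ := (TopologicalSpace.denseRange_denseSeq E).exists_dist_lt x
      (show (0:ℝ) < 1 / (2 * (m + 1 : ℝ)) by positivity)
    simp only [Set.mem_iUnion]
    refine ⟨i, m, l, hx, mem_ball.2 hl, fun y hy hyx => ?_⟩
    have h1 := hT y hy (hyx.trans (hm.trans_le (min_le_right _ _)))
    have h2 : ‖(T - Q i) (y - x)‖ ≤ 1 / (m + 1 : ℝ) * ‖y - x‖ := by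
      refine ((T - Q i).le_opNorm _).trans ?_
      rw [dist_eq_norm] at hi
      gcongr
    have h3 : ‖T (y - x)‖ ≤ ‖(T - Q i) (y - x)‖ + ‖Q i (y - x)‖ := by
      have := norm_add_le ((T - Q i) (y - x)) (Q i (y - x))
      simpa using this
    have h4 := hm.trans_le (min_le_left _ _)
    nlinarith [norm_nonneg (y - x)]
  refine (dimH_mono hsub).trans ?_
  simp only [dimH_iUnion, iSup_le_iff]
  exact fun i m l => hA i m l

end

section
variable {n : ℕ} {F : Type*} [NormedAddCommGroup F] [NormedSpace ℝ F]

lemma invSub_le [CompleteSpace F] (hn : 2 ≤ n) {c : Fin n → F →L[ℝ] F} (hc : Cliff c)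
    {ψ : Eu n → F} {p : ℝ} (hp : 0 < p)
    (hψ : ContDiffOn ℝ 1 ψ (ball 0 1))
    (hD : ∀ y ∈ ball (0 : Eu n) 1, ‖Dlin c (fderiv ℝ ψ y)‖ ≤ ‖ψ y‖ ^ p * ‖ψ y‖)
    {x : Eu n} (hx : x ∈ ball (0 : Eu n) 1) (hx0 : ψ x = 0)
    {k : ℕ} (P : ContinuousMultilinearMap ℝ (fun _ : Fin k => Eu n) F) (C : ℝ) (hk : 1 ≤ k)
    (hP : ∃ z, P (fun _ => z) ≠ 0)
    (hl : ∀ᶠ z in 𝓝 (0 : Eu n), ‖ψ (x + z) - P (fun _ => z)‖ ≤ C * ‖z‖ ^ (k + 1)) :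
    Module.finrank ℝ (invSub P) ≤ n - 2 := by
  by_contra hcon
  push Not at hcon
  obtain ⟨v, w, hv, hw, hPz⟩ := invSub_large P hk hP hn hcon
  have hxn : ‖x‖ < 1 := by simpa using hx
  set R : ℝ := 1 - ‖x‖ with hR
  have hR0 : 0 < R := by linarith
  have hsub : ball x R ⊆ ball 0 1 := by
    intro y hy
    rw [mem_ball, dist_eq_norm] at hy
    have := norm_add_le (y - x) x
    rw [sub_add_cancel] at this
    simp only [mem_ball, dist_zero_right]; linarith
  obtain ⟨u, hu, -, hu1, hu2⟩ := cutoff_ext ψ x R hR0 (hψ.mono hsub)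
  have hcont : ContinuousAt (fun z => ψ (x + z)) 0 := by
    have h1 : ContinuousAt ψ (x + 0) := by
      rw [add_zero]
      exact hψ.continuousOn.continuousAt (isOpen_ball.mem_nhds hx)
    exact ContinuousAt.comp (g := ψ) h1 (by fun_prop)
  have hsm : ∀ᶠ z in 𝓝 (0 : Eu n), ‖ψ (x + z)‖ < 1 := by
    have : Tendsto (fun z => ‖ψ (x + z)‖) (𝓝 0) (𝓝 ‖ψ (x + 0)‖) := hcont.norm
    rw [add_zero, hx0, norm_zero] at this
    exact this.eventually_lt_const one_pos
  obtain ⟨δ, hδ, hδ2⟩ := Metric.eventually_nhds_iff.1 (hl.and hsm)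
  simp only [dist_zero_right] at hδ2
  have key := blowup c u hu k hk v w hv |C| (|C| + ‖v‖ ^ k * ‖w‖) (min (min δ 1) (R / 2))
    (by positivity) (abs_nonneg _) (by positivity) ?_ ?_
  · have h1 := cmap_sq hc v w
    rw [key, map_zero] at h1
    have h2 : -(‖v‖ ^ 2) ≠ 0 := by
      have := norm_pos_iff.2 hv
      have : 0 < ‖v‖ ^ 2 := by positivity
      linarith
    exact (smul_ne_zero h2 hw) h1.symm
  · intro z hz
    have a1 : ‖z‖ < δ := hz.trans_le ((min_le_left _ _).trans (min_le_left _ _))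
    rw [hu1 z (hz.trans_le (min_le_right _ _)), ← hPz]
    refine (hδ2 a1).1.trans ?_
    gcongr
    exact le_abs_self C
  · intro z hz
    have a1 : ‖z‖ < δ := hz.trans_le ((min_le_left _ _).trans (min_le_left _ _))
    have a2 : ‖z‖ < 1 := hz.trans_le ((min_le_left _ _).trans (min_le_right _ _))
    have a3 := hz.trans_le (min_le_right _ _)
    rw [hu2 z a3]
    have hmem : x + z ∈ ball (0 : Eu n) 1 := hsub (by
      rw [mem_ball, dist_eq_norm, add_sub_cancel_left]; linarith)
    refine (hD _ hmem).trans ?_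
    have b1 := (hδ2 a1).2
    have b2 := (hδ2 a1).1
    have b3 : ‖ψ (x + z)‖ ^ p ≤ 1 := Real.rpow_le_one (norm_nonneg _) b1.le hp.le
    have b4 : ‖P (fun _ => z)‖ ≤ ‖v‖ ^ k * ‖w‖ * ‖z‖ ^ k := by
      rw [hPz, norm_smul, norm_pow]
      have := norm_inner_le_norm (𝕜 := ℝ) v z
      calc _ ≤ (‖v‖ * ‖z‖) ^ k * ‖w‖ := by gcongr
        _ = _ := by ring
    have b5 : C * ‖z‖ ^ (k+1) ≤ |C| * ‖z‖ ^ k := by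
      rw [pow_succ]
      have : C ≤ |C| := le_abs_self C
      have h0 : 0 ≤ ‖z‖ ^ k := by positivity
      calc C * (‖z‖ ^ k * ‖z‖) ≤ |C| * (‖z‖ ^ k * ‖z‖) := by gcongr
        _ ≤ |C| * (‖z‖ ^ k * 1) := by gcongr
        _ = _ := by ring
    have b6 : ‖ψ (x + z)‖ ≤ ‖ψ (x + z) - P (fun _ => z)‖ + ‖P (fun _ => z)‖ := by
      have := norm_add_le (ψ (x + z) - P (fun _ => z)) (P (fun _ => z))
      rwa [sub_add_cancel] at this
    have b7 := norm_nonneg (ψ (x + z))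
    nlinarith

lemma diagP_cont {k : ℕ} (P : ContinuousMultilinearMap ℝ (fun _ : Fin k => Eu n) F) :
    Continuous fun z => P (fun _ => z) := P.cont.comp (continuous_pi fun _ => continuous_id)

lemma geom_local {ψ : Eu n → F} {Z : Set (Eu n)} {k : ℕ} {M : ℝ} (hM : 0 < M)
    (hZ : ∀ y ∈ Z, ∀ ζ, ‖ζ‖ < 1 / M → ‖ψ (y + ζ)‖ ≤ M * ‖ζ‖ ^ k)
    {x : Eu n} (P : ContinuousMultilinearMap ℝ (fun _ : Fin k => Eu n) F) (C : ℝ)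
    (hl : ∀ᶠ z in 𝓝 (0 : Eu n), ‖ψ (x + z) - P (fun _ => z)‖ ≤ C * ‖z‖ ^ (k + 1))
    {d : ℕ} (hd : Module.finrank ℝ (invSub P) ≤ d) :
    ∃ T : Eu n →L[ℝ] Eu d, ∃ κ > 0, ∃ ρ > 0, ∀ y ∈ Z, ‖y - x‖ < ρ →
      κ * ‖y - x‖ ≤ ‖T (y - x)‖ := by
  obtain ⟨f, hf⟩ := (finrank_le_iff_exists_linearMap (R := ℝ) (M := invSub P) (M' := Eu d)).1 (by
    rw [finrank_euclideanSpace, Fintype.card_fin]; exact hd)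
  obtain ⟨g, hg⟩ := LinearMap.exists_extend f
  refine ⟨LinearMap.toContinuousLinearMap g, ?_⟩
  by_contra hcon
  push Not at hcon
  have hs : ∀ m : ℕ, ∃ y ∈ Z, ‖y - x‖ < 1 / (m + 1 : ℝ) ∧
      ‖LinearMap.toContinuousLinearMap g (y - x)‖ < 1 / (m + 1 : ℝ) * ‖y - x‖ := fun m =>
    hcon (1 / (m + 1 : ℝ)) (by positivity) (1 / (m + 1 : ℝ)) (by positivity)
  choose y hyZ hy1 hy2 using hs
  have hpos : ∀ m, 0 < ‖y m - x‖ := by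
    intro m
    by_contra h0
    have h1 : ‖y m - x‖ = 0 := le_antisymm (not_lt.1 h0) (norm_nonneg _)
    have := hy2 m
    rw [h1, mul_zero] at this
    exact absurd this (not_lt.2 (norm_nonneg _))
  let r : ℕ → ℝ := fun m => ‖y m - x‖
  let V : ℕ → Eu n := fun m => (r m)⁻¹ • (y m - x)
  have hV : ∀ m, r m • V m = y m - x := fun m => by
    simp only [V]; rw [smul_smul, mul_inv_cancel₀ (hpos m).ne', one_smul]
  have hVs : ∀ m, V m ∈ sphere (0 : Eu n) 1 := by
    intro m
    rw [mem_sphere_zero_iff_norm, norm_smul, norm_inv, Real.norm_of_nonneg (hpos m).le]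
    exact inv_mul_cancel₀ (hpos m).ne'
  obtain ⟨v, hvs, φ, hφ, hlim⟩ := (isCompact_sphere (0 : Eu n) 1).tendsto_subseq hVs
  have hr0 : Tendsto r atTop (𝓝 0) := by
    refine squeeze_zero (fun m => (hpos m).le) (fun m => (hy1 m).le) tendsto_one_div_add_atTop_nhds_zero_nat
  have hrφ : Tendsto (fun m => r (φ m)) atTop (𝓝 0) := hr0.comp hφ.tendsto_atTop
  have hgv : g v = 0 := by
    have t1 : Tendsto (fun m => LinearMap.toContinuousLinearMap g (V (φ m))) atTop
        (𝓝 (LinearMap.toContinuousLinearMap g v)) :=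
      ((LinearMap.toContinuousLinearMap g).continuous.tendsto v).comp hlim
    have t2 : Tendsto (fun m => LinearMap.toContinuousLinearMap g (V m)) atTop (𝓝 0) := by
      refine squeeze_zero_norm (fun m => ?_) tendsto_one_div_add_atTop_nhds_zero_nat
      simp only [V]
      rw [map_smul, norm_smul, norm_inv, Real.norm_of_nonneg (hpos m).le, inv_mul_le_iff₀ (hpos m), mul_comm]
      exact (hy2 m).le
    exact tendsto_nhds_unique t1 (t2.comp hφ.tendsto_atTop)
  have hPv : ∀ z, ‖P (fun _ => v + z)‖ ≤ M * ‖z‖ ^ k := by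
    intro z
    have t1 : Tendsto (fun m => ‖P (fun _ => V (φ m) + z)‖) atTop (𝓝 ‖P (fun _ => v + z)‖) :=
      (((diagP_cont P).tendsto (v + z)).comp (hlim.add_const z)).norm
    have t2 : Tendsto (fun m => M * ‖z‖ ^ k + C * r (φ m) * ‖V (φ m) + z‖ ^ (k + 1)) atTop
        (𝓝 (M * ‖z‖ ^ k + C * 0 * ‖v + z‖ ^ (k + 1))) :=
      (((hrφ.const_mul C).mul ((hlim.add_const z).norm.pow (k + 1)))).const_add _
    rw [mul_zero, zero_mul, add_zero] at t2
    refine le_of_tendsto_of_tendsto t1 t2 ?_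
    have t3 : Tendsto (fun m => r (φ m) • (V (φ m) + z)) atTop (𝓝 0) := by
      have := hrφ.smul (hlim.add_const z)
      rwa [zero_smul] at this
    have t4 : Tendsto (fun m => ‖r (φ m) • z‖) atTop (𝓝 0) := by
      have := (hrφ.smul_const z).norm
      rwa [zero_smul, norm_zero] at this
    filter_upwards [t3.eventually hl, t4.eventually_lt_const (show 0 < 1 / M by positivity)] with m h1 h2
    have hrm : 0 < r (φ m) := hpos _
    have e1 : x + r (φ m) • (V (φ m) + z) = y (φ m) + r (φ m) • z := by
      rw [smul_add, hV]; abel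
    have h3 := hZ _ (hyZ (φ m)) _ h2
    rw [e1] at h1
    rw [diagP_smul] at h1
    have h4 : ‖r (φ m) ^ k • P (fun _ => V (φ m) + z)‖ ≤
        M * ‖r (φ m) • z‖ ^ k + C * ‖r (φ m) • (V (φ m) + z)‖ ^ (k+1) := by
      have := norm_sub_le (ψ (y (φ m) + r (φ m) • z))
        (ψ (y (φ m) + r (φ m) • z) - r (φ m) ^ k • P (fun _ => V (φ m) + z))
      rw [sub_sub_cancel] at this
      linarith
    rw [norm_smul, norm_smul, norm_smul, norm_pow, Real.norm_of_nonneg hrm.le] at h4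
    have hrk : 0 < r (φ m) ^ k := by positivity
    refine le_of_mul_le_mul_left (h4.trans (le_of_eq ?_)) hrk
    ring
  have hvin : v ∈ invSub P := fun z => diag_invariant P v M hPv z
  have h5 : f ⟨v, hvin⟩ = 0 := by
    rw [← hg]; simpa using hgv
  have h6 : (⟨v, hvin⟩ : invSub P) = 0 := hf (by rw [h5, map_zero])
  have h7 : v = 0 := congrArg Subtype.val h6
  rw [h7] at hvs
  simp at hvs

/-- The zero set of a nontrivial solution has codimension at least two. -/
theorem dimH_zero_le [CompleteSpace F] (hn : 2 ≤ n) {c : Fin n → F →L[ℝ] F} (hc : Cliff c)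
    {b : F →L[ℝ] F →L[ℝ] ℝ} (hb : GoodForm c b) {ψ : Eu n → F} {p : ℝ} (hp : 0 < p)
    (hψ : ContDiffOn ℝ 1 ψ (ball 0 1))
    (hD : ∀ y ∈ ball (0 : Eu n) 1, ‖Dlin c (fderiv ℝ ψ y)‖ ≤ ‖ψ y‖ ^ p * ‖ψ y‖)
    (hne : ∃ x ∈ ball (0 : Eu n) 1, ψ x ≠ 0) :
    dimH {x | x ∈ ball (0 : Eu n) 1 ∧ ψ x = 0} ≤ ((n - 2 : ℕ) : ℝ≥0∞) := by
  let Z : ℕ → ℕ → Set (Eu n) := fun k m => {x | (x ∈ ball (0 : Eu n) 1 ∧ ψ x = 0) ∧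
    (∃ (P : ContinuousMultilinearMap ℝ (fun _ : Fin k => Eu n) F) (C : ℝ), 1 ≤ k ∧
      (∃ z, P (fun _ => z) ≠ 0) ∧
      ∀ᶠ z in 𝓝 (0 : Eu n), ‖ψ (x + z) - P (fun _ => z)‖ ≤ C * ‖z‖ ^ (k + 1)) ∧
    ∀ ζ, ‖ζ‖ < 1 / (m + 1 : ℝ) → ‖ψ (x + ζ)‖ ≤ (m + 1 : ℝ) * ‖ζ‖ ^ k}
  have hZ : ∀ k m, dimH (Z k m) ≤ ((n - 2 : ℕ) : ℝ≥0∞) := by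
    intro k m
    have := dimH_le_of_local (G := Eu (n - 2)) (Z k m) ?_
    · rwa [finrank_euclideanSpace, Fintype.card_fin] at this
    · rintro x ⟨⟨hx, hx0⟩, ⟨P, C, hk, hP, hl⟩, -⟩
      exact geom_local (M := (m + 1 : ℝ)) (by positivity) (fun y hy => hy.2.2) P C hl
        (invSub_le hn hc hp hψ hD hx hx0 P C hk hP hl)
  have hsub : {x | x ∈ ball (0 : Eu n) 1 ∧ ψ x = 0} ⊆ ⋃ k, ⋃ m, Z k m := by
    rintro x ⟨hx, hx0⟩
    obtain ⟨k, P, C, hk, hP, hl⟩ := exists_leading (by omega) hc hb hp hψ hD hne hx hx0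
    obtain ⟨δ, hδ, hδ2⟩ := Metric.eventually_nhds_iff.1 hl
    simp only [dist_zero_right] at hδ2
    obtain ⟨m1, hm1⟩ := exists_nat_one_div_lt (show 0 < min δ 1 by positivity)
    obtain ⟨m2, hm2⟩ := exists_nat_ge (|C| + ‖P‖)
    simp only [Set.mem_iUnion]
    refine ⟨k, max m1 m2, ⟨hx, hx0⟩, ⟨P, C, hk, hP, hl⟩, fun ζ hζ => ?_⟩
    have c1 : (m1 : ℝ) ≤ (max m1 m2 : ℕ) := by exact_mod_cast le_max_left _ _
    have c2 : (m2 : ℝ) ≤ (max m1 m2 : ℕ) := by exact_mod_cast le_max_right _ _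
    have h1 : ‖ζ‖ < min δ 1 := by
      refine hζ.trans_le (le_trans ?_ hm1.le)
      gcongr
    have h2 := hδ2 (h1.trans_le (min_le_left _ _))
    have h3 : ‖ζ‖ < 1 := h1.trans_le (min_le_right _ _)
    have b4 : ‖P (fun _ => ζ)‖ ≤ ‖P‖ * ‖ζ‖ ^ k := by
      have := P.le_opNorm (fun _ => ζ)
      simpa using this
    have b5 : C * ‖ζ‖ ^ (k+1) ≤ |C| * ‖ζ‖ ^ k := by
      rw [pow_succ]
      have : C ≤ |C| := le_abs_self C
      have h0 : 0 ≤ ‖ζ‖ ^ k := by positivity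
      calc C * (‖ζ‖ ^ k * ‖ζ‖) ≤ |C| * (‖ζ‖ ^ k * ‖ζ‖) := by gcongr
        _ ≤ |C| * (‖ζ‖ ^ k * 1) := by gcongr
        _ = _ := by ring
    have b6 : ‖ψ (x + ζ)‖ ≤ ‖ψ (x + ζ) - P (fun _ => ζ)‖ + ‖P (fun _ => ζ)‖ := by
      have := norm_add_le (ψ (x + ζ) - P (fun _ => ζ)) (P (fun _ => ζ))
      rwa [sub_add_cancel] at this
    have h0 : 0 ≤ ‖ζ‖ ^ k := by positivity
    nlinarith
  refine (dimH_mono hsub).trans ?_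
  simp only [dimH_iUnion, iSup_le_iff]
  exact fun k m => hZ k m

end

section
variable {n : ℕ} {F : Type*} [NormedAddCommGroup F] [NormedSpace ℝ F]

lemma Cliff.sq {c : Fin n → F →L[ℝ] F} (hc : Cliff c) (j : Fin n) (u : F) : c j (c j u) = -u := by
  have h := hc j j u
  rw [if_pos rfl, ← two_smul ℝ (c j (c j u)), neg_smul, ← smul_neg] at h
  exact smul_right_injective F (two_ne_zero (α := ℝ)) h

lemma Cliff.anti {c : Fin n → F →L[ℝ] F} (hc : Cliff c) {j k : Fin n} (hjk : j ≠ k) (u : F) :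
    c j (c k u) = - c k (c j u) := by
  have h := hc j k u
  rw [if_neg hjk] at h
  exact eq_neg_of_add_eq_zero_left h

lemma exists_goodForm {c : Fin n → F →L[ℝ] F} (hc : Cliff c) (b0 : F →L[ℝ] F →L[ℝ] ℝ)
    (h0s : ∀ u v, b0 u v = b0 v u) (h0p : ∀ u, ‖u‖ ^ 2 ≤ b0 u u) :
    ∃ b : F →L[ℝ] F →L[ℝ] ℝ, GoodForm c b := by
  classical
  have key : ∀ s : Finset (Fin n), ∃ b : F →L[ℝ] F →L[ℝ] ℝ, (∀ u v, b u v = b v u) ∧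
      (∀ u, ‖u‖ ^ 2 ≤ b u u) ∧ ∀ i ∈ s, ∀ u v, b (c i u) (c i v) = b u v := by
    intro s
    induction s using Finset.induction_on with
    | empty => exact ⟨b0, h0s, h0p, by simp⟩
    | insert j s hj ih =>
      obtain ⟨b, h1, h2, h3⟩ := ih
      have e : ∀ u v, (b + b.bilinearComp (c j) (c j)) u v = b u v + b (c j u) (c j v) := by
        intro u v; simp
      refine ⟨b + b.bilinearComp (c j) (c j), fun u v => ?_, fun u => ?_, fun i hi u v => ?_⟩
      · rw [e, e, h1, h1 (c j u)]
      · rw [e]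
        have := h2 (c j u)
        have h4 : 0 ≤ ‖c j u‖ ^ 2 := by positivity
        linarith [h2 u]
      · rw [e, e]
        by_cases hij : i = j
        · subst hij
          rw [hc.sq, hc.sq]
          simp [add_comm]
        · have his : i ∈ s := (Finset.mem_insert.1 hi).resolve_left hij
          rw [h3 i his, hc.anti (Ne.symm hij), hc.anti (Ne.symm hij) v]
          simp [h3 i his]
  obtain ⟨b, h1, h2, h3⟩ := key Finset.univ
  refine ⟨b, h1, fun i u v => ?_, h2⟩
  have := h3 i (Finset.mem_univ i) u (c i v)
  rw [hc.sq] at this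
  rw [← this, map_neg, neg_neg]

end

/-- The real part of the Hermitian product, as a real bilinear form. -/
lemma exists_reForm (N : ℕ) : ∃ b0 : EuclideanSpace ℂ (Fin N) →L[ℝ] EuclideanSpace ℂ (Fin N) →L[ℝ] ℝ,
    (∀ u v, b0 u v = b0 v u) ∧ (∀ u, ‖u‖ ^ 2 ≤ b0 u u) := by
  have hs : ∀ (r : ℝ) (u : EuclideanSpace ℂ (Fin N)), r • u = (r : ℂ) • u := by
    intro r u; ext i; simp
  let L : EuclideanSpace ℂ (Fin N) →ₗ[ℝ] EuclideanSpace ℂ (Fin N) →ₗ[ℝ] ℝ :=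
    LinearMap.mk₂ ℝ (fun u v => (inner ℂ u v).re)
      (fun u v w => by simp [inner_add_left])
      (fun r u v => by rw [hs, inner_smul_left]; simp)
      (fun u v w => by simp [inner_add_right])
      (fun r u v => by rw [hs, inner_smul_right]; simp)
  have hL : ∀ u v, L u v = (inner ℂ u v).re := fun u v => rfl
  refine ⟨L.mkContinuous₂ 1 fun u v => ?_, fun u v => ?_, fun u => ?_⟩
  · rw [hL, one_mul, Real.norm_eq_abs]
    exact (Complex.abs_re_le_norm _).trans (norm_inner_le_norm u v)
  · simp only [LinearMap.mkContinuous₂_apply, hL]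
    rw [← inner_conj_symm u v, Complex.conj_re]
  · simp only [LinearMap.mkContinuous₂_apply, hL]
    rw [inner_self_eq_norm_sq_to_K]
    norm_cast

/-- The singular nodal set `Z_{≥2}` (zeros of `ψ` at which the total derivative also vanishes)
of a nontrivial `C^{1,α}` solution of the critical Dirac equation `Dψ = |ψ|^{2/(n-1)}ψ` on the
unit ball of `ℝⁿ`, `n ≥ 3`, has Hausdorff dimension at most `n - 2`. -/
theorem singular_nodal_set_dimension
    (n : ℕ) (hn : 3 ≤ n) (N : ℕ) (hN : N = 2 ^ (n / 2))
    (α : Fin n → Matrix (Fin N) (Fin N) ℂ)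
    (hcl : CliffordRel α)
    (ψ : EuclideanSpace ℝ (Fin n) → EuclideanSpace ℂ (Fin N))
    -- `ψ` is `C^{1,a}` on the open unit ball for some `a ∈ (0,1)`
    (a : ℝ≥0) (ha0 : 0 < a) (ha1 : a < 1)
    (hreg : ContDiffOn ℝ 1 ψ (Metric.ball 0 1))
    (hHol : ∃ C : ℝ≥0, HolderOnWith C a (fderiv ℝ ψ) (Metric.ball 0 1))
    -- `ψ` is not identically zero on the unit ball
    (hne : ∃ x ∈ Metric.ball (0 : EuclideanSpace ℝ (Fin n)) 1, ψ x ≠ 0)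
    -- `ψ` solves the critical Dirac equation pointwise on the unit ball
    (heq : ∀ x ∈ Metric.ball (0 : EuclideanSpace ℝ (Fin n)) 1,
      diracOp α ψ x = (‖ψ x‖ ^ ((2:ℝ) / ((n:ℝ) - 1))) • ψ x) :
    dimH {x : EuclideanSpace ℝ (Fin n) |
        x ∈ Metric.ball (0 : EuclideanSpace ℝ (Fin n)) 1 ∧ ψ x = 0 ∧ fderiv ℝ ψ x = 0}
      ≤ (n : ℝ≥0∞) - 2 := by
  let c : Fin n → EuclideanSpace ℂ (Fin N) →L[ℝ] EuclideanSpace ℂ (Fin N) := fun j =>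
    LinearMap.toContinuousLinearMap ((Matrix.toEuclideanLin (α j)).restrictScalars ℝ)
  have hcj : ∀ j u, c j u = Matrix.toEuclideanLin (α j) u := fun j u => rfl
  have hc : Cliff c := by
    intro j k u
    simp only [hcj]
    have h := congrArg (fun A => Matrix.toEuclideanLin A u) (hcl j k)
    simp only [map_add, map_smul, LinearMap.add_apply, LinearMap.smul_apply] at h
    have hm : ∀ A B : Matrix (Fin N) (Fin N) ℂ, Matrix.toEuclideanLin (A * B) u =
        Matrix.toEuclideanLin A (Matrix.toEuclideanLin B u) := by
      intro A B
      simp [Matrix.toEuclideanLin, Matrix.toLpLin_apply, Matrix.mulVec_mulVec]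
    rw [hm, hm] at h
    rw [h]
    split_ifs
    · ext i; simp [Matrix.toEuclideanLin, Matrix.toLpLin_apply]
    · simp
  obtain ⟨b0, h1, h2⟩ := exists_reForm N
  obtain ⟨b, hb⟩ := exists_goodForm hc b0 h1 h2
  have hp : 0 < (2:ℝ) / ((n:ℝ) - 1) := by
    have : (3:ℝ) ≤ n := by exact_mod_cast hn
    have : 0 < (n:ℝ) - 1 := by linarith
    positivity
  have hD : ∀ y ∈ ball (0 : Eu n) 1,
      ‖Dlin c (fderiv ℝ ψ y)‖ ≤ ‖ψ y‖ ^ ((2:ℝ) / ((n:ℝ) - 1)) * ‖ψ y‖ := by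
    intro y hy
    have e : Dlin c (fderiv ℝ ψ y) = diracOp α ψ y := by
      unfold Dlin diracOp
      exact Finset.sum_congr rfl fun j _ => rfl
    rw [e, heq y hy, norm_smul, Real.norm_of_nonneg (Real.rpow_nonneg (norm_nonneg _) _)]
  have main := dimH_zero_le (by omega) hc hb hp hreg hD hne
  refine (dimH_mono fun x hx => (⟨hx.1, hx.2.1⟩ : x ∈ ball (0 : Eu n) 1 ∧ ψ x = 0)).trans (main.trans (le_of_eq ?_))
  push_cast
  rfl
end
end

section
/- Let n ≥ 2, N = 2^⌊n/2⌋, and let α₁,…,αₙ be skew-Hermitian complex N×N matrices satisfying the Clifford relations. Fix λ > 0, x₀ ∈ ℝⁿ, and Φ₀ ∈ ℂᴺ with |Φ₀|² = (λ/2)(n/2)^{n−1}. Then the spinor ψ : ℝⁿ → ℂᴺ defined by ψ(x) = (2λ/(λ² + |x−x₀|²))^{n/2} (Id − γ((x−x₀)/λ)) Φ₀ is smooth and satisfies the critical Dirac equation Dψ(x) = |ψ(x)|^{2/(n−1)} ψ(x) for every x ∈ ℝⁿ. -/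
open MeasureTheory Metric Filter Matrix
open scoped ENNReal NNReal

noncomputable section

/-- Clifford multiplication `γ(v) = Σⱼ vⱼ αⱼ`. -/
def gammaMat {n N : ℕ} (α : Fin n → Matrix (Fin N) (Fin N) ℂ)
    (v : EuclideanSpace ℝ (Fin n)) : Matrix (Fin N) (Fin N) ℂ :=
  ∑ j : Fin n, (v j : ℂ) • α j

/-- The Dirac bubble `ψ(x) = (2λ/(λ²+|x-x₀|²))^{n/2} (Id - γ((x-x₀)/λ)) Φ₀`. -/
def diracBubble {n N : ℕ} (α : Fin n → Matrix (Fin N) (Fin N) ℂ)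
    (l : ℝ) (x₀ : EuclideanSpace ℝ (Fin n)) (Φ₀ : EuclideanSpace ℂ (Fin N))
    (x : EuclideanSpace ℝ (Fin n)) : EuclideanSpace ℂ (Fin N) :=
  ((2 * l / (l ^ 2 + ‖x - x₀‖ ^ 2)) ^ ((n:ℝ)/2)) •
    (Φ₀ - Matrix.toEuclideanLin (gammaMat α (l⁻¹ • (x - x₀))) Φ₀)

lemma gamma_apply {n N : ℕ} (α : Fin n → Matrix (Fin N) (Fin N) ℂ)
    (v : EuclideanSpace ℝ (Fin n)) (Φ : EuclideanSpace ℂ (Fin N)) :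
    Matrix.toEuclideanLin (gammaMat α v) Φ = ∑ j, v j • Matrix.toEuclideanLin (α j) Φ := by
  simp only [gammaMat, map_sum, map_smul, LinearMap.sum_apply, LinearMap.smul_apply]
  rfl

lemma toEuclideanLin_mul_apply {N : ℕ} (A B : Matrix (Fin N) (Fin N) ℂ)
    (Φ : EuclideanSpace ℂ (Fin N)) :
    Matrix.toEuclideanLin A (Matrix.toEuclideanLin B Φ) = Matrix.toEuclideanLin (A * B) Φ := by
  simp [Matrix.toLpLin_apply, Matrix.mulVec_mulVec]

lemma gammaMat_sq {n N : ℕ} {α : Fin n → Matrix (Fin N) (Fin N) ℂ} (hcl : CliffordRel α)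
    (v : EuclideanSpace ℝ (Fin n)) :
    gammaMat α v * gammaMat α v = (-((‖v‖ ^ 2 : ℝ) : ℂ)) • (1 : Matrix (Fin N) (Fin N) ℂ) := by
  have h1 : gammaMat α v * gammaMat α v
      = ∑ j, ∑ k, ((v j : ℂ) * (v k : ℂ)) • (α j * α k) := by
    simp only [gammaMat, Finset.sum_mul_sum, smul_mul_smul_comm]
  have h2 : gammaMat α v * gammaMat α v
      = ∑ j, ∑ k, ((v j : ℂ) * (v k : ℂ)) • (α k * α j) := by
    rw [h1, Finset.sum_comm]
    refine Finset.sum_congr rfl fun j _ => Finset.sum_congr rfl fun k _ => ?_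
    rw [mul_comm]
  have h3 : (2 : ℂ) • (gammaMat α v * gammaMat α v)
      = (2 : ℂ) • ((-((‖v‖ ^ 2 : ℝ) : ℂ)) • (1 : Matrix (Fin N) (Fin N) ℂ)) := by
    rw [two_smul]
    nth_rewrite 1 [h1]
    rw [h2]
    simp only [← Finset.sum_add_distrib, ← smul_add]
    simp only [hcl _ _, smul_ite, smul_zero, Finset.sum_ite_eq, Finset.mem_univ, if_true,
      smul_smul, ← Finset.sum_smul]
    congr 1
    rw [EuclideanSpace.real_norm_sq_eq]
    push_cast
    rw [← Finset.sum_mul]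
    simp only [pow_two]
    ring
  exact smul_right_injective _ (two_ne_zero) h3

lemma gamma_gamma {n N : ℕ} {α : Fin n → Matrix (Fin N) (Fin N) ℂ} (hcl : CliffordRel α)
    (v : EuclideanSpace ℝ (Fin n)) (Φ : EuclideanSpace ℂ (Fin N)) :
    Matrix.toEuclideanLin (gammaMat α v) (Matrix.toEuclideanLin (gammaMat α v) Φ)
      = -(‖v‖ ^ 2) • Φ := by
  rw [toEuclideanLin_mul_apply, gammaMat_sq hcl, map_smul]
  ext i
  simp [Matrix.toLpLin_apply]

lemma gamma_skew {n N : ℕ} {α : Fin n → Matrix (Fin N) (Fin N) ℂ}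
    (hskew : ∀ j, (α j)ᴴ = -(α j)) (v : EuclideanSpace ℝ (Fin n))
    (Φ Ψ : EuclideanSpace ℂ (Fin N)) :
    inner ℂ (Matrix.toEuclideanLin (gammaMat α v) Φ) Ψ
      = - inner ℂ Φ (Matrix.toEuclideanLin (gammaMat α v) Ψ) := by
  have h : (gammaMat α v)ᴴ = - gammaMat α v := by
    simp [gammaMat, Matrix.conjTranspose_sum, Matrix.conjTranspose_smul, hskew]
  have h2 := Matrix.toEuclideanLin_conjTranspose_eq_adjoint (gammaMat α v)
  rw [← LinearMap.adjoint_inner_right, ← h2, h]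
  simp

lemma norm_sq_sub_gamma {n N : ℕ} {α : Fin n → Matrix (Fin N) (Fin N) ℂ} (hcl : CliffordRel α)
    (hskew : ∀ j, (α j)ᴴ = -(α j)) (v : EuclideanSpace ℝ (Fin n))
    (Φ : EuclideanSpace ℂ (Fin N)) :
    ‖Φ - Matrix.toEuclideanLin (gammaMat α v) Φ‖ ^ 2 = (1 + ‖v‖ ^ 2) * ‖Φ‖ ^ 2 := by
  have e1 : RCLike.re (inner ℂ Φ (Matrix.toEuclideanLin (gammaMat α v) Φ)) = 0 := by
    have h := congrArg RCLike.re (gamma_skew hskew v Φ Φ)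
    rw [inner_re_symm, map_neg] at h
    linarith
  have e2 : ‖Matrix.toEuclideanLin (gammaMat α v) Φ‖ ^ 2 = ‖v‖ ^ 2 * ‖Φ‖ ^ 2 := by
    rw [@norm_sq_eq_re_inner ℂ, gamma_skew hskew, gamma_gamma hcl, inner_smul_right_eq_smul,
      @norm_sq_eq_re_inner ℂ _ _ _ _ Φ]
    simp [← Complex.ofReal_pow]
  rw [@norm_sub_sq ℂ, e1, e2]
  ring

lemma bubble_contDiff {n N : ℕ} (α : Fin n → Matrix (Fin N) (Fin N) ℂ)
    (l : ℝ) (hl : 0 < l) (x₀ : EuclideanSpace ℝ (Fin n)) (Φ₀ : EuclideanSpace ℂ (Fin N)) :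
    ContDiff ℝ (⊤ : ℕ∞) (diracBubble α l x₀ Φ₀) := by
  unfold diracBubble
  simp only [gamma_apply]
  have hp : ∀ x : EuclideanSpace ℝ (Fin n), 0 < l ^ 2 + ‖x - x₀‖ ^ 2 := fun x => by positivity
  refine ContDiff.smul (ContDiff.rpow_const_of_ne (ContDiff.div contDiff_const ?_ fun x => (hp x).ne')
    fun x => (div_pos (by positivity) (hp x)).ne') ?_
  · exact contDiff_const.add ((contDiff_id.sub contDiff_const).norm_sq ℝ)
  · refine contDiff_const.sub (ContDiff.sum fun j _ => ?_)
    simp only [PiLp.smul_apply, PiLp.sub_apply, smul_eq_mul]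
    fun_prop

lemma bubble_partial {n N : ℕ} (α : Fin n → Matrix (Fin N) (Fin N) ℂ)
    (l : ℝ) (hl : 0 < l) (x₀ : EuclideanSpace ℝ (Fin n)) (Φ₀ : EuclideanSpace ℂ (Fin N))
    (x : EuclideanSpace ℝ (Fin n)) (j : Fin n) :
    fderiv ℝ (diracBubble α l x₀ Φ₀) x (EuclideanSpace.single j (1:ℝ))
      = (2 * l / (l ^ 2 + ‖x - x₀‖ ^ 2)) ^ ((n:ℝ)/2) •
        ((-(n * (x - x₀) j / (l ^ 2 + ‖x - x₀‖ ^ 2))) •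
          (Φ₀ - Matrix.toEuclideanLin (gammaMat α (l⁻¹ • (x - x₀))) Φ₀)
          - l⁻¹ • Matrix.toEuclideanLin (α j) Φ₀) := by
  have hd : DifferentiableAt ℝ (diracBubble α l x₀ Φ₀) x :=
    (bubble_contDiff α l hl x₀ Φ₀).differentiable (by simp) x
  have hline := hd.hasFDerivAt.hasLineDerivAt (EuclideanSpace.single j (1:ℝ))
  unfold HasLineDerivAt at hline
  refine hline.unique ?_
  set u := x - x₀ with hu
  set e : EuclideanSpace ℝ (Fin n) := EuclideanSpace.single j (1:ℝ) with he
  have hp : 0 < l ^ 2 + ‖u‖ ^ 2 := by positivity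
  have hn : ∀ t : ℝ, ‖x + t • e - x₀‖ ^ 2 = ‖u‖ ^ 2 + 2 * t * u j + t ^ 2 := by
    intro t
    have : x + t • e - x₀ = u + t • e := by rw [hu]; abel
    rw [this, norm_add_sq_real, inner_smul_right, norm_smul, he]
    simp [EuclideanSpace.inner_single_right, mul_pow]
    ring
  have hg : ∀ t : ℝ, Matrix.toEuclideanLin (gammaMat α (l⁻¹ • (x + t • e - x₀))) Φ₀
      = Matrix.toEuclideanLin (gammaMat α (l⁻¹ • u)) Φ₀
        + t • (l⁻¹ • Matrix.toEuclideanLin (α j) Φ₀) := by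
    intro t
    have : x + t • e - x₀ = u + t • e := by rw [hu]; abel
    rw [this]
    simp only [gamma_apply, PiLp.smul_apply, PiLp.add_apply, smul_eq_mul, mul_add, add_smul,
      Finset.sum_add_distrib]
    congr 1
    rw [Finset.sum_eq_single j]
    · simp [he, smul_smul, mul_comm]
    · intro k _ hk
      simp [he, hk]
    · simp
  unfold diracBubble
  simp only [hn, hg]
  have d1 : HasDerivAt (fun t : ℝ => l ^ 2 + (‖u‖ ^ 2 + 2 * t * u j + t ^ 2)) (2 * u j) 0 := by
    have := ((((hasDerivAt_id (0:ℝ)).const_mul 2).mul_const (u j)).const_add (‖u‖ ^ 2)).add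
      ((hasDerivAt_id (0:ℝ)).pow 2)
    have := this.const_add (l ^ 2)
    simpa using this
  have d2 : HasDerivAt (fun t : ℝ => (2 * l / (l ^ 2 + (‖u‖ ^ 2 + 2 * t * u j + t ^ 2))) ^ ((n:ℝ)/2))
      (-(n * u j / (l ^ 2 + ‖u‖ ^ 2)) * (2 * l / (l ^ 2 + ‖u‖ ^ 2)) ^ ((n:ℝ)/2)) 0 := by
    have h := ((hasDerivAt_const (0:ℝ) (2 * l)).div d1 (by simpa using hp.ne')).rpow_const
      (p := (n:ℝ)/2) (Or.inl (by simpa using ⟨hl.ne', hp.ne'⟩))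
    refine h.congr_deriv ?_
    have hq : 2 * l / (l ^ 2 + ‖u‖ ^ 2) ≠ 0 := by positivity
    simp
    rw [Real.rpow_sub_one hq]
    field_simp
  have d3 : HasDerivAt (fun t : ℝ => Φ₀ - (Matrix.toEuclideanLin (gammaMat α (l⁻¹ • u)) Φ₀
        + t • (l⁻¹ • Matrix.toEuclideanLin (α j) Φ₀))) (-(l⁻¹ • Matrix.toEuclideanLin (α j) Φ₀)) 0 := by
    have := (((hasDerivAt_id (0:ℝ)).smul_const (l⁻¹ • Matrix.toEuclideanLin (α j) Φ₀)).const_add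
      (Matrix.toEuclideanLin (gammaMat α (l⁻¹ • u)) Φ₀)).const_sub Φ₀
    simpa using this
  refine (d2.smul d3).congr_deriv ?_
  simp only [mul_zero, zero_mul, add_zero, zero_smul, ne_eq, OfNat.ofNat_ne_zero, not_false_eq_true, zero_pow]
  module

lemma bubble_dirac {n N : ℕ} {α : Fin n → Matrix (Fin N) (Fin N) ℂ} (hcl : CliffordRel α)
    (l : ℝ) (hl : 0 < l) (x₀ : EuclideanSpace ℝ (Fin n)) (Φ₀ : EuclideanSpace ℂ (Fin N))
    (x : EuclideanSpace ℝ (Fin n)) :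
    diracOp α (diracBubble α l x₀ Φ₀) x
      = (n * l / (l ^ 2 + ‖x - x₀‖ ^ 2)) • diracBubble α l x₀ Φ₀ x := by
  have hp : 0 < l ^ 2 + ‖x - x₀‖ ^ 2 := by positivity
  have hR : ∀ (A : Matrix (Fin N) (Fin N) ℂ) (c : ℝ) (Ψ : EuclideanSpace ℂ (Fin N)),
      Matrix.toEuclideanLin A (c • Ψ) = c • Matrix.toEuclideanLin A Ψ := fun A c Ψ =>
    (Matrix.toEuclideanLin A).map_smul_of_tower c Ψ
  have hsq : ∀ j, Matrix.toEuclideanLin (α j) (Matrix.toEuclideanLin (α j) Φ₀) = -Φ₀ := by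
    intro j
    have h := gamma_gamma hcl (EuclideanSpace.single j (1:ℝ)) Φ₀
    have h2 : gammaMat α (EuclideanSpace.single j (1:ℝ)) = α j := by
      unfold gammaMat
      rw [Finset.sum_eq_single j] <;> simp +contextual
    rw [h2] at h
    simpa using h
  have hgl : Matrix.toEuclideanLin (gammaMat α (l⁻¹ • (x - x₀))) Φ₀
      = l⁻¹ • Matrix.toEuclideanLin (gammaMat α (x - x₀)) Φ₀ := by
    simp only [gamma_apply, Finset.smul_sum, smul_smul, PiLp.smul_apply, smul_eq_mul]
  unfold diracOp
  simp only [bubble_partial α l hl, hgl]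
  unfold diracBubble
  rw [hgl]
  set u := x - x₀ with hu
  set f := (2 * l / (l ^ 2 + ‖u‖ ^ 2)) ^ ((n:ℝ)/2)
  set χ := Φ₀ - l⁻¹ • Matrix.toEuclideanLin (gammaMat α u) Φ₀ with hχ
  have key : ∀ j, Matrix.toEuclideanLin (α j) (f • ((-(n * u j / (l ^ 2 + ‖u‖ ^ 2))) • χ
      - l⁻¹ • Matrix.toEuclideanLin (α j) Φ₀))
      = (-(f * n / (l ^ 2 + ‖u‖ ^ 2))) • (u j • Matrix.toEuclideanLin (α j) χ) + (f * l⁻¹) • Φ₀ := by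
    intro j
    rw [hR, map_sub, hR, hR, hsq]
    have : -(n * u j / (l ^ 2 + ‖u‖ ^ 2)) = -(n / (l ^ 2 + ‖u‖ ^ 2)) * u j := by ring
    rw [this]
    have : -(f * n / (l ^ 2 + ‖u‖ ^ 2)) = -(f * (n / (l ^ 2 + ‖u‖ ^ 2))) := by ring
    rw [this]
    module
  simp only [key, Finset.sum_add_distrib, ← Finset.smul_sum, ← gamma_apply]
  rw [hχ, map_sub, hR, gamma_gamma hcl]
  simp only [Finset.sum_const, Finset.card_univ, Fintype.card_fin, ← Nat.cast_smul_eq_nsmul ℝ]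
  match_scalars <;> field_simp <;> ring

/-- The Dirac bubbles are smooth solutions of the critical Dirac equation
`Dψ = |ψ|^{2/(n-1)}ψ` on `ℝⁿ`, provided `|Φ₀|² = (λ/2)(n/2)^{n-1}`. -/
theorem bubbles_solve_critical_dirac
    (n : ℕ) (hn : 2 ≤ n) (N : ℕ) (hN : N = 2 ^ (n / 2))
    (α : Fin n → Matrix (Fin N) (Fin N) ℂ)
    (hskew : ∀ j, (α j)ᴴ = -(α j))
    (hcl : CliffordRel α)
    (l : ℝ) (hl : 0 < l) (x₀ : EuclideanSpace ℝ (Fin n))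
    (Φ₀ : EuclideanSpace ℂ (Fin N))
    (hΦ₀ : ‖Φ₀‖ ^ 2 = (l / 2) * ((n:ℝ)/2) ^ (n - 1)) :
    ContDiff ℝ (⊤ : ℕ∞) (diracBubble α l x₀ Φ₀) ∧
    ∀ x : EuclideanSpace ℝ (Fin n),
      diracOp α (diracBubble α l x₀ Φ₀) x =
        (‖diracBubble α l x₀ Φ₀ x‖ ^ ((2:ℝ) / ((n:ℝ) - 1))) • diracBubble α l x₀ Φ₀ x := by
  refine ⟨bubble_contDiff α l hl x₀ Φ₀, fun x => ?_⟩
  rw [bubble_dirac hcl l hl]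
  congr 1
  have hp : 0 < l ^ 2 + ‖x - x₀‖ ^ 2 := by positivity
  have hn0 : (0:ℝ) < n := by exact_mod_cast (by omega : 0 < n)
  have hn1 : (0:ℝ) < (n:ℝ) - 1 := by
    have : (2:ℝ) ≤ n := by exact_mod_cast hn
    linarith
  have hq : 0 < 2 * l / (l ^ 2 + ‖x - x₀‖ ^ 2) := by positivity
  have hr : 0 ≤ n * l / (l ^ 2 + ‖x - x₀‖ ^ 2) := by positivity
  have hsq : ‖diracBubble α l x₀ Φ₀ x‖ ^ 2 = (n * l / (l ^ 2 + ‖x - x₀‖ ^ 2)) ^ (n - 1) := by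
    unfold diracBubble
    rw [norm_smul, mul_pow, norm_sq_sub_gamma hcl hskew, hΦ₀, norm_smul, Real.norm_eq_abs, sq_abs,
      ← Real.rpow_natCast (_ ^ ((n:ℝ)/2)) 2, ← Real.rpow_mul hq.le]
    have : (n:ℝ) / 2 * ((2:ℕ):ℝ) = (n:ℝ) := by push_cast; ring
    rw [this, Real.rpow_natCast]
    obtain ⟨m, rfl⟩ : ∃ m, n = m + 1 := ⟨n - 1, by omega⟩
    rw [Nat.add_sub_cancel, pow_succ]
    have e : ((m + 1 : ℕ) : ℝ) * l / (l ^ 2 + ‖x - x₀‖ ^ 2)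
      = (2 * l / (l ^ 2 + ‖x - x₀‖ ^ 2)) * (((m + 1 : ℕ) : ℝ) / 2) := by
      field_simp
    rw [e]
    have e2 : 2 * l / (l ^ 2 + ‖x - x₀‖ ^ 2) * ((1 + (‖l⁻¹‖ * ‖x - x₀‖) ^ 2) * (l / 2)) = 1 := by
      rw [Real.norm_eq_abs, mul_pow, sq_abs]
      field_simp
    generalize 2 * l / (l ^ 2 + ‖x - x₀‖ ^ 2) = Q at e2 ⊢
    generalize ((m + 1 : ℕ) : ℝ) / 2 = M at e2 ⊢
    linear_combination Q ^ m * M ^ m * e2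
  have e3 : (2:ℝ) / ((n:ℝ) - 1) = ((2:ℕ):ℝ) * (((n - 1 : ℕ) : ℝ))⁻¹ := by
    rw [Nat.cast_sub (by omega : 1 ≤ n)]
    push_cast
    rw [div_eq_mul_inv]
  rw [e3, Real.rpow_mul (norm_nonneg _), Real.rpow_natCast, hsq,
    Real.pow_rpow_inv_natCast hr (by omega)]
end
end
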